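/- Existence and uniqueness of Capelli polynomials: assume additionally axiom (C0): there exists a regular dominant ρ' ∈ V₀ such that for every λ ∈ Λ₊ there is a unique p ∈ P^W of degree ℓ(λ) with p(ρ'+μ) = δ_{λμ} for all μ ∈ Λ₊ with ℓ(μ) ≤ ℓ(λ). Then for EVERY dominant ρ ∈ V₀ and every λ ∈ Λ₊ there is a unique polynomial p_λ ∈ P^W with deg p_λ ≤ ℓ(λ) and p_λ(ρ+μ) = δ_{λμ} (Kronecker delta) for all μ ∈ Λ₊ with ℓ(μ) ≤ ℓ(λ). -/

import Mathlib

/-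
Common framework for F. Knop, "Construction of Commuting Difference Operators
for Multiplicity Free Spaces".

We identify `Γ` with `ι → ℤ` via its basis `Σ` (so `Σ` is the standard basis),
`Γ^∨` with `ι → ℤ` via the dual basis `Σ^∨`, and `V = Hom(Γ, ℂ)` with `ι → ℂ`.
-/

open scoped BigOperators Classical
open MvPolynomial

noncomputable section

namespace Knop

variable {ι : Type*} [Fintype ι] [DecidableEq ι]

/-- The `i`-th element of the basis `Σ` of `Γ` (resp. of `Σ^∨ ⊆ Γ^∨`), in coordinates. -/
def e (i : ι) : ι → ℤ := Pi.single i 1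

/-- The pairing between `Γ` and `Γ^∨` (in coordinates, the dot product);
`pairZ γ η = γ(η) = η(γ)`. -/
def pairZ (γ η : ι → ℤ) : ℤ := ∑ i, γ i * η i

/-- Evaluation of `γ ∈ Γ` as a linear function on `V = Hom(Γ,ℂ) ≅ ι → ℂ`. -/
def evalC (γ : ι → ℤ) (z : ι → ℂ) : ℂ := ∑ i, (γ i : ℂ) * z i

/-- The embedding `Γ^∨ ⊆ V`. -/
def toV (η : ι → ℤ) : ι → ℂ := fun i => (η i : ℂ)

/-- The action of `w ∈ Aut(Γ)` on `V = Hom(Γ, ℂ)`: `(w • z)(γ) = z(w⁻¹ γ)`, in coordinates. -/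
def actV (w : (ι → ℤ) ≃ₗ[ℤ] (ι → ℤ)) (z : ι → ℂ) : ι → ℂ :=
  fun i => evalC (w.symm (e i)) z

/-- The action of `w ∈ Aut(Γ)` on `Γ^∨ = Hom(Γ, ℤ)`: `(w • η)(γ) = η(w⁻¹ γ)`. -/
def actDual (w : (ι → ℤ) ≃ₗ[ℤ] (ι → ℤ)) (η : ι → ℤ) : ι → ℤ :=
  fun i => pairZ (w.symm (e i)) η

/-- `Λ₊`, the `ℕ`-span of `Σ^∨` inside `Γ^∨`. -/
def LamPlus : Set (ι → ℤ) := {η | ∀ i, 0 ≤ η i}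

/-- The reflection `s_α(x) = x - α^∨(x)·α` attached to a root `α` with coroot `αv`. -/
def reflMap (α αv : ι → ℤ) : (ι → ℤ) → (ι → ℤ) := fun x => x - pairZ x αv • α

/-- The data `(Γ, Σ, W, ℓ)` together with the axioms C1–C8 of Knop's paper
(in the coordinates given by `Σ`).  The root system `Δ` of `W`, the set
`Φ = W·Σ`, and `Λ₁ = W·Σ^∨₁` are carried along as `Finset`s with their
defining specifications. -/
structure Data (ι : Type*) [Fintype ι] [DecidableEq ι] where
  /-- the reflection group `W ⊆ Aut(Γ)` -/
  W : Subgroup ((ι → ℤ) ≃ₗ[ℤ] (ι → ℤ))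
  /-- `W` is finite -/
  W_finite : (W : Set ((ι → ℤ) ≃ₗ[ℤ] (ι → ℤ))).Finite
  /-- the element `ℓ ∈ Γ` -/
  ell : ι → ℤ
  /-- the set of roots `Δ ⊆ Γ` of `W` -/
  Δ : Finset (ι → ℤ)
  /-- the coroot `α^∨ ∈ Γ^∨` of a root `α` -/
  coroot : (ι → ℤ) → (ι → ℤ)
  /-- `Φ = W·Σ` -/
  Φ : Finset (ι → ℤ)
  /-- `Λ₁ = W·Σ^∨₁` -/
  Λ₁ : Finset (ι → ℤ)
  Φ_spec : ∀ ω, ω ∈ Φ ↔ ∃ w ∈ W, ∃ i, ω = w (e i)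
  Λ₁_spec : ∀ η, η ∈ Λ₁ ↔ ∃ w ∈ W, ∃ i, ell i = 1 ∧ η = actDual w (e i)
  /-- `Δ = -Δ` -/
  Δ_neg : ∀ α ∈ Δ, -α ∈ Δ
  /-- every root is a primitive vector of `Γ` -/
  Δ_prim : ∀ α ∈ Δ, ∀ (n : ℤ) (β : ι → ℤ), α = n • β → IsUnit n
  /-- the reflection `s_α` belongs to `W` -/
  refl_mem : ∀ α ∈ Δ, ∃ w ∈ W, ∀ x, w x = reflMap α (coroot α) x
  /-- `α^∨(α) = 2` -/
  coroot_pair : ∀ α ∈ Δ, pairZ α (coroot α) = 2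
  /-- C1: `W` is generated by the reflections `s_α`, `α ∈ Δ` -/
  C1 : W ≤ Subgroup.closure {w : (ι → ℤ) ≃ₗ[ℤ] (ι → ℤ) |
        ∃ α ∈ Δ, ∀ x, w x = reflMap α (coroot α) x}
  /-- C2: `Δ = Δ⁺ ∪ (-Δ⁺)` -/
  C2 : ∀ α ∈ Δ, (∀ i, 0 ≤ α i) ∨ (∀ i, α i ≤ 0)
  /-- C3: `Φ ⊆ Φ⁺ ∪ (-Φ⁺)` -/
  C3 : ∀ ω ∈ Φ, (∀ i, 0 ≤ ω i) ∨ (∀ i, ω i ≤ 0)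
  /-- C4: `ℓ ∈ Γ^W` -/
  C4 : ∀ w ∈ W, w ell = ell
  /-- C5: `Σ_{ω ∈ Φ⁺} ω - Σ_{α ∈ Δ⁺} α = ℓ` -/
  C5 : (∑ ω ∈ Φ.filter (fun ω => ∀ i, 0 ≤ ω i), ω)
        - (∑ α ∈ Δ.filter (fun α => ∀ i, 0 ≤ α i), α) = ell
  /-- C6: `ℓ(η) > 0` for all `η ∈ Σ^∨` -/
  C6 : ∀ i, 0 < ell i
  /-- C7: `ω(η) ∈ {-1,0,1}` for `η ∈ Σ^∨₁` and `ω ∈ Δ ∪ Φ` -/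
  C7 : ∀ i, ell i = 1 → ∀ ω, (ω ∈ Δ ∨ ω ∈ Φ) → ω i = -1 ∨ ω i = 0 ∨ ω i = 1
  /-- C8: a `W`-invariant linear function on `V` is determined by its restriction to `Σ^∨₁` -/
  C8 : ∀ c c' : ι → ℂ,
    (∀ w ∈ W, ∀ z : ι → ℂ, ∑ i, c i * actV w z i = ∑ i, c i * z i) →
    (∀ w ∈ W, ∀ z : ι → ℂ, ∑ i, c' i * actV w z i = ∑ i, c' i * z i) →
    (∀ i, ell i = 1 → c i = c' i) → c = c'

namespace Data

variable (D : Data ι)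

/-- `Δ⁺`, the positive roots. -/
def Δpos : Finset (ι → ℤ) := D.Δ.filter fun α => ∀ i, 0 ≤ α i

/-- `Φ⁺`. -/
def Φpos : Finset (ι → ℤ) := D.Φ.filter fun ω => ∀ i, 0 ≤ ω i

/-- The submonoid `Λ` of `Γ^∨` generated by `Λ₁`. -/
def Lam : AddSubmonoid (ι → ℤ) := AddSubmonoid.closure (D.Λ₁ : Set (ι → ℤ))

/-- `ρ ∈ V₀`: `ω₁(ρ) = ω₂(ρ)` whenever `ω₁, ω₂ ∈ Σ` lie in the same `±W`-orbit. -/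
def InV0 (ρ : ι → ℂ) : Prop :=
  ∀ i j : ι, (∃ w ∈ D.W, e i = w (e j) ∨ e i = -(w (e j))) → ρ i = ρ j

/-- `k` is the multiplicity-parameter function of `ρ ∈ V₀`:
`k_ω = ω₁(ρ)` for any `ω₁ ∈ (±W)·ω ∩ Σ`. -/
def IsK (ρ : ι → ℂ) (k : (ι → ℤ) → ℂ) : Prop :=
  ∀ (ω : ι → ℤ) (i : ι), (∃ w ∈ D.W, e i = w ω ∨ e i = -(w ω)) → k ω = ρ i

/-- `ρ` is dominant: `α(ρ) ∉ {-1,-2,…}` for all `α ∈ Δ⁺`. -/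
def Dominant (ρ : ι → ℂ) : Prop :=
  ∀ α ∈ D.Δpos, ∀ n : ℕ, evalC α ρ ≠ -((n : ℂ) + 1)

/-- `ρ` is regular: `α(ρ) ≠ 0` for all `α ∈ Δ⁺`. -/
def Regular (ρ : ι → ℂ) : Prop :=
  ∀ α ∈ D.Δpos, evalC α ρ ≠ 0

/-- `ρ` is non-integral: `α(ρ) ∉ ℤ` for all `α ∈ Δ`. -/
def NonIntegral (ρ : ι → ℂ) : Prop :=
  ∀ α ∈ D.Δ, ∀ n : ℤ, evalC α ρ ≠ (n : ℂ)

/-- `ρ` is strongly dominant (`k` being the parameter function of `ρ`). -/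
def StronglyDominant (ρ : ι → ℂ) (k : (ι → ℤ) → ℂ) : Prop :=
  D.Regular ρ ∧ D.Dominant ρ ∧
    ∀ ω ∈ D.Φpos, (∀ n : ℕ, evalC ω ρ - k ω ≠ -((n : ℂ) + 1)) ∧
      (∀ n : ℕ, evalC ω ρ + k ω ≠ -(n : ℂ))

/-- The rational function `f_η`, `η ∈ Λ₁`. -/
def f (k : (ι → ℤ) → ℂ) (η : ι → ℤ) (z : ι → ℂ) : ℂ :=
  (∏ ω ∈ D.Φ.filter (fun ω => 0 < pairZ ω η), (evalC ω z - k ω)) /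
  (∏ α ∈ D.Δ.filter (fun α => 0 < pairZ α η), evalC α z)

/-- The value at `z` of `L(p) = Σ_{η ∈ Λ₁} f_η T_η (p)`. -/
def Lval (k : (ι → ℤ) → ℂ) (p : MvPolynomial ι ℂ) (z : ι → ℂ) : ℂ :=
  ∑ η ∈ D.Λ₁, D.f k η z * eval (z - toV η) p

/-- `W`-invariance of a polynomial function on `V`. -/
def WInv (p : MvPolynomial ι ℂ) : Prop :=
  ∀ w ∈ D.W, ∀ z : ι → ℂ, eval (actV w z) p = eval z p

/-- The defining property of the Capelli polynomial `p_λ` (with shift `ρ`):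
`p` is `W`-invariant of degree `≤ ℓ(λ)` and `p(ρ+μ) = δ_{λμ}` for all
`μ ∈ Λ₊` with `ℓ(μ) ≤ ℓ(λ)`. -/
def CapelliAt (ρ : ι → ℂ) (lam : ι → ℤ) (p : MvPolynomial ι ℂ) : Prop :=
  D.WInv p ∧ (p.totalDegree : ℤ) ≤ pairZ D.ell lam ∧
    ∀ μ : ι → ℤ, μ ∈ LamPlus → pairZ D.ell μ ≤ pairZ D.ell lam →
      eval (ρ + toV μ) p = if μ = lam then 1 else 0

/-- Axiom C0: for some regular dominant `ρ' ∈ V₀` and every `λ ∈ Λ₊` there is a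
unique `W`-invariant polynomial of degree `ℓ(λ)` with `p(ρ'+μ) = δ_{λμ}` for all
`μ ∈ Λ₊` with `ℓ(μ) ≤ ℓ(λ)`. -/
def C0 : Prop :=
  ∃ ρ' : ι → ℂ, D.InV0 ρ' ∧ D.Regular ρ' ∧ D.Dominant ρ' ∧
    ∀ lam : ι → ℤ, lam ∈ LamPlus →
      ∃! p : MvPolynomial ι ℂ, D.WInv p ∧
        p.totalDegree = (pairZ D.ell lam).toNat ∧
        ∀ μ : ι → ℤ, μ ∈ LamPlus → pairZ D.ell μ ≤ pairZ D.ell lam →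
          eval (ρ' + toV μ) p = if μ = lam then 1 else 0

end Data

/-- The `m`-th point `τ_m` of the path starting at `lam` with step sequence `s`
(steps are meant to lie in `Λ₁`). -/
def pathPt (lam : ι → ℤ) {d : ℕ} (s : Fin d → ι → ℤ) (m : ℕ) : ι → ℤ :=
  lam + ∑ i ∈ Finset.univ.filter (fun i : Fin d => (i : ℕ) < m), s i

/-- All paths of length `d` from `lam` to `mu` (with steps in `Λ₁`), encoded by
their step sequences. -/
def paths (D : Data ι) (lam mu : ι → ℤ) (d : ℕ) : Finset (Fin d → ι → ℤ) :=
  (Fintype.piFinset fun _ : Fin d => D.Λ₁).filter fun s => pathPt lam s d = mu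

/-- All positive paths of length `d` from `lam` to `mu`. -/
def posPaths (D : Data ι) (lam mu : ι → ℤ) (d : ℕ) : Finset (Fin d → ι → ℤ) :=
  (Fintype.piFinset fun _ : Fin d => D.Λ₁).filter fun s =>
    (∀ m ≤ d, pathPt lam s m ∈ LamPlus) ∧ pathPt lam s d = mu

/-- The falling factorial `[x ↓ d] = x(x-1)⋯(x-d+1)`. -/
def ffall (x : ℂ) (d : ℤ) : ℂ := ∏ j ∈ Finset.range d.toNat, (x - (j : ℂ))

namespace Data

variable (D : Data ι)

/-- The generalized rational function `f_τ`, `τ ∈ Λ` (formula (Def-f-l)). -/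
def fgen (k : (ι → ℤ) → ℂ) (τ : ι → ℤ) (z : ι → ℂ) : ℂ :=
  (∏ ω ∈ D.Φ.filter (fun ω => 0 < pairZ ω τ), ffall (evalC ω z - k ω) (pairZ ω τ)) /
  (∏ α ∈ D.Δ.filter (fun α => 0 < pairZ α τ), ffall (evalC α z) (pairZ α τ))

/-- The virtual dimension `d_λ = (-1)^{ℓ(λ)} f_λ(-ρ) / f_λ(ρ+λ)`. -/
def vdim (k : (ι → ℤ) → ℂ) (ρ : ι → ℂ) (lam : ι → ℤ) : ℂ :=
  (-1 : ℂ) ^ (pairZ D.ell lam) * D.fgen k lam (-ρ) / D.fgen k lam (ρ + toV lam)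

/-- The rational function `b_τ^h` (formula (Def-b-t)); here the sum runs over
all paths from `0` to `τ` of length `d = ℓ(τ)`. -/
def bfun (k : (ι → ℤ) → ℂ) (h : MvPolynomial ι ℂ) (τ : ι → ℤ) (z : ι → ℂ) : ℂ :=
  ∑ s ∈ paths D 0 τ (pairZ D.ell τ).toNat,
    (∑ i ∈ Finset.range ((pairZ D.ell τ).toNat + 1),
      ((-1 : ℂ) ^ ((pairZ D.ell τ).toNat - i) /
        ((Nat.factorial i : ℂ) * (Nat.factorial ((pairZ D.ell τ).toNat - i) : ℂ))) *
        eval (z - toV (pathPt 0 s i)) h) *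
    ∏ i : Fin (pairZ D.ell τ).toNat, D.fgen k (s i) (z - toV (pathPt 0 s (i : ℕ)))

/-- The difference operator `D_h = Σ_{τ ∈ Λ} b_τ^h T_τ`, acting on functions on `V`. -/
def Dop (k : (ι → ℤ) → ℂ) (h : MvPolynomial ι ℂ) (F : (ι → ℂ) → ℂ) (z : ι → ℂ) : ℂ :=
  ∑ᶠ τ ∈ (D.Lam : Set (ι → ℤ)), D.bfun k h τ z * F (z - toV τ)

/-- The order relation on `Λ`: `τ₁ ≤ τ₂` iff `ℓ(τ₁) < ℓ(τ₂)`, or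
`ℓ(τ₁) = ℓ(τ₂)` and `τ₂ - τ₁` is a sum of positive coroots. -/
def ordLe (τ₁ τ₂ : ι → ℤ) : Prop :=
  pairZ D.ell τ₁ < pairZ D.ell τ₂ ∨
    (pairZ D.ell τ₁ = pairZ D.ell τ₂ ∧
      τ₂ - τ₁ ∈ AddSubmonoid.closure (D.coroot '' (D.Δpos : Set (ι → ℤ))))

end Data

/-!
For `ρ ∈ V₀` let `L p (z) = ∑ η, f_η(z) p(z - η)`, where `η` runs over the dual lattice
vectors in `W·Σ^∨₁` and `f_η` is, up to sign, the product of `ω - k_ω` over the `ω ∈ Φ` with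
`ω(η) = 1` divided by the product of the positive elements of `W·Δ` which are non-zero at `η`.
Then `L` preserves invariant polynomials, `L 1 = ℓ(z - ρ)`, and `ℓ(z - ρ) - d - L` maps invariants
of degree `d` to invariants of smaller degree. The latter is a statement about leading terms, which
do not depend on `ρ`; it is read off at a generic point `ρ' + t`, where interpolation works.

The numerators vanish at points `ρ + ν` with `ν ∈ Λ₊` and `ν - η ∉ Λ₊`, so that `L` acts on
functions on `ρ + Λ₊`. Suppose that `p` has degree at most `d` and vanishes at all `ρ + μ` with
`ℓ(μ) ≤ d`. Applying the lowering operators for `d, d - 1, …, 0` to `p` gives `0`. At `ρ + ν` this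
is a recursion in which the value of the previous iterate is multiplied by `ℓ(ν) - (d - i)`, which
is non-zero if `ℓ(ν) > d`, and all other terms involve points of level `ℓ(ν) - 1`. By induction on
`ℓ(ν)` all values of `p` on `ρ + Λ₊` vanish, and `p = 0`. Hence evaluation at the points `ρ + μ` is
injective, and it is bijective since the dimensions agree by the existence of `ρ'`.

For special `ρ` the `f_η` may have poles on `ρ + Λ₊`, and the recursion is applied to `ρ + t` with
`t → 0`. An alternating polynomial is divisible by a product of roots; evaluating alternating sums
at suitable points therefore bounds numbers of roots by numbers of weights. For the common
stabilizer of `ρ` and `ν` this shows that the `f_η` have finite limits, provided dominance of `ρ`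
controls all of `W·Δ`. The axioms assume dominance on `Δ` only, but the bounds coming from the
subgroups preserving heights modulo `N`, together with a comparison of second order terms of `L 1`
and axiom C5, force `W·Δ = Δ`.
-/

/-! ### Lattice vectors, pairings and the action on `V` -/

section Lattice

variable {σ : Type*}

/-- The automorphism group of the lattice `Γ = σ → ℤ`. -/
abbrev LatticeAut (σ : Type*) := (σ → ℤ) ≃ₗ[ℤ] (σ → ℤ)

theorem inv_apply_self (w : LatticeAut σ) (x : σ → ℤ) : w⁻¹ (w x) = x := w.symm_apply_apply x

theorem apply_inv_self (w : LatticeAut σ) (x : σ → ℤ) : w (w⁻¹ x) = x := w.apply_symm_apply x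

theorem mul_apply (w v : LatticeAut σ) (x : σ → ℤ) : (w * v) x = w (v x) := rfl

theorem one_apply (x : σ → ℤ) : (1 : LatticeAut σ) x = x := rfl

theorem toV_sub (η μ : σ → ℤ) : toV (η - μ) = toV η - toV μ := by
  ext i; simp [toV]

section Basis

variable [DecidableEq σ]

theorem e_apply (i j : σ) : (e i : σ → ℤ) j = if j = i then 1 else 0 := Pi.single_apply ..

theorem e_self (i : σ) : (e i : σ → ℤ) i = 1 := Pi.single_eq_same ..

theorem e_ne {i j : σ} (h : j ≠ i) : (e i : σ → ℤ) j = 0 := Pi.single_eq_of_ne h _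

theorem e_nonneg (i j : σ) : 0 ≤ (e i : σ → ℤ) j := by
  rw [e_apply]; split_ifs <;> simp

theorem e_injective : Function.Injective (e : σ → σ → ℤ) :=
  fun i j h => by_contra fun hij => by simpa [e_self, e_ne hij] using congrFun h i

theorem latticeAut_ext [Finite σ] {w v : LatticeAut σ} (h : ∀ i, w (e i) = v (e i)) : w = v :=
  LinearEquiv.toLinearMap_injective <| LinearMap.pi_ext' fun i => LinearMap.ext_ring (h i)

end Basis

variable [Fintype σ]

section Pairing

@[simp] theorem evalC_neg_left (γ : σ → ℤ) (z : σ → ℂ) : evalC (-γ) z = -evalC γ z := by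
  simp [evalC]

@[simp] theorem evalC_sub_left (γ δ : σ → ℤ) (z : σ → ℂ) :
    evalC (γ - δ) z = evalC γ z - evalC δ z := by
  simp [evalC, sub_mul, Finset.sum_sub_distrib]

@[simp] theorem evalC_smul_left (n : ℤ) (γ : σ → ℤ) (z : σ → ℂ) :
    evalC (n • γ) z = n * evalC γ z := by
  simp [evalC, Finset.mul_sum, mul_assoc]

@[simp] theorem evalC_add_right (γ : σ → ℤ) (z y : σ → ℂ) :
    evalC γ (z + y) = evalC γ z + evalC γ y := by
  simp [evalC, mul_add, Finset.sum_add_distrib]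

@[simp] theorem evalC_sub_right (γ : σ → ℤ) (z y : σ → ℂ) :
    evalC γ (z - y) = evalC γ z - evalC γ y := by
  simp [evalC, mul_sub, Finset.sum_sub_distrib]

@[simp] theorem evalC_smul_right (γ : σ → ℤ) (c : ℂ) (z : σ → ℂ) :
    evalC γ (c • z) = c * evalC γ z := by
  simp only [evalC, Pi.smul_apply, smul_eq_mul, Finset.mul_sum, mul_left_comm]

@[simp] theorem evalC_zero_right (γ : σ → ℤ) : evalC γ (0 : σ → ℂ) = 0 := by simp [evalC]

@[simp] theorem evalC_toV (γ η : σ → ℤ) : evalC γ (toV η) = (pairZ γ η : ℂ) := by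
  simp [evalC, toV, pairZ]

theorem evalC_sum_left {κ : Type*} (s : Finset κ) (f : κ → σ → ℤ) (z : σ → ℂ) :
    evalC (∑ a ∈ s, f a) z = ∑ a ∈ s, evalC (f a) z := by
  simp only [evalC, Finset.sum_apply, Int.cast_sum, Finset.sum_mul]
  exact Finset.sum_comm

@[simp] theorem pairZ_neg_left (γ η : σ → ℤ) : pairZ (-γ) η = -pairZ γ η := neg_dotProduct γ η

@[simp] theorem pairZ_sub_left (γ δ η : σ → ℤ) : pairZ (γ - δ) η = pairZ γ η - pairZ δ η :=
  sub_dotProduct γ δ η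

@[simp] theorem pairZ_smul_left (n : ℤ) (γ η : σ → ℤ) : pairZ (n • γ) η = n * pairZ γ η :=
  smul_dotProduct n γ η

@[simp] theorem pairZ_sub_right (γ η δ : σ → ℤ) : pairZ γ (η - δ) = pairZ γ η - pairZ γ δ :=
  dotProduct_sub γ η δ

@[simp] theorem pairZ_smul_right (n : ℤ) (γ η : σ → ℤ) : pairZ γ (n • η) = n * pairZ γ η :=
  dotProduct_smul n γ η

theorem pairZ_nonneg {γ η : σ → ℤ} (hγ : ∀ i, 0 ≤ γ i) (hη : ∀ i, 0 ≤ η i) : 0 ≤ pairZ γ η :=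
  Finset.sum_nonneg fun i _ => mul_nonneg (hγ i) (hη i)

/-- The height of a lattice vector, i.e. its value at the all-ones point of `V`. -/
def height (γ : σ → ℤ) : ℤ := ∑ i, γ i

@[simp] theorem evalC_one_right (γ : σ → ℤ) : evalC γ (1 : σ → ℂ) = (height γ : ℂ) := by
  simp [evalC, height]

@[simp] theorem height_neg (γ : σ → ℤ) : height (-γ) = -height γ := by simp [height]

theorem height_sub (γ δ : σ → ℤ) : height (γ - δ) = height γ - height δ := by
  simp [height, Finset.sum_sub_distrib]

theorem height_pos {γ : σ → ℤ} (hγ : ∀ i, 0 ≤ γ i) (h0 : γ ≠ 0) : 0 < height γ :=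
  Fintype.sum_pos (lt_of_le_of_ne hγ h0.symm)

end Pairing

/-- `s` is the reflection `x ↦ x - x(c) β` along `β` with coroot `c`. -/
structure IsReflection (s : LatticeAut σ) (β c : σ → ℤ) : Prop where
  apply_eq : ∀ x, s x = x - pairZ x c • β
  pairZ_eq_two : pairZ β c = 2

namespace IsReflection

variable {s : LatticeAut σ} {β c : σ → ℤ}

theorem neg (h : IsReflection s β c) : IsReflection s (-β) (-c) where
  apply_eq x := by rw [h.apply_eq, show pairZ x (-c) = -pairZ x c from dotProduct_neg x c]; simp
  pairZ_eq_two := (neg_dotProduct_neg β c).trans h.pairZ_eq_two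

theorem apply_root (h : IsReflection s β c) : s β = -β := by
  rw [h.apply_eq, h.pairZ_eq_two, two_smul]; abel

theorem inv_eq (h : IsReflection s β c) : s⁻¹ = s := by
  refine inv_eq_of_mul_eq_one_left (LinearEquiv.ext fun x => ?_)
  rw [mul_apply, one_apply, h.apply_eq x, map_sub, map_smul, h.apply_root, h.apply_eq x]
  simp

theorem apply_apply (h : IsReflection s β c) (x : σ → ℤ) : s (s x) = x := by
  have := apply_inv_self s x
  rwa [h.inv_eq] at this

theorem ne_one (h : IsReflection s β c) (hβ : β ≠ 0) : s ≠ 1 := by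
  rintro rfl
  exact hβ (self_eq_neg.1 h.apply_root)

end IsReflection

variable [DecidableEq σ]

@[simp] theorem evalC_e (i : σ) (z : σ → ℂ) : evalC (e i) z = z i := by
  simp [evalC, e_apply]

@[simp] theorem pairZ_e_left (i : σ) (η : σ → ℤ) : pairZ (e i) η = η i :=
  single_one_dotProduct i η

@[simp] theorem pairZ_e_right (i : σ) (γ : σ → ℤ) : pairZ γ (e i) = γ i :=
  dotProduct_single_one γ i

@[simp] theorem height_e (i : σ) : height (e i : σ → ℤ) = 1 := by simp [height, e_apply]

theorem eq_sum_smul_e (γ : σ → ℤ) : γ = ∑ i, γ i • (e i : σ → ℤ) := by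
  ext j
  simp [Finset.sum_apply, e_apply]

theorem exists_eq_e_of_height_eq_one {γ : σ → ℤ} (hγ : ∀ i, 0 ≤ γ i) (h1 : height γ = 1) :
    ∃ i, γ = e i := by
  obtain ⟨i, hi⟩ : ∃ i, γ i ≠ 0 := by
    by_contra! h0
    simp [height, h0] at h1
  have hi_pos : 1 ≤ γ i := lt_of_le_of_ne (hγ i) hi.symm
  have hrest : ∀ j, 0 ≤ (γ - e i) j := by
    intro j
    rcases eq_or_ne j i with rfl | hj
    · simpa [e_self] using hi_pos
    · simpa [e_ne hj] using hγ j
  refine ⟨i, sub_eq_zero.1 (by_contra fun hne => ?_)⟩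
  have := height_pos hrest hne
  rw [height_sub, h1, height_e] at this
  omega

@[simp] theorem evalC_actV (w : LatticeAut σ) (γ : σ → ℤ) (z : σ → ℂ) :
    evalC γ (actV w z) = evalC (w⁻¹ γ) z := by
  conv_rhs => rw [eq_sum_smul_e γ]
  simp only [map_sum, evalC_sum_left, map_smul, evalC_smul_left]
  rfl

theorem actV_apply (w : LatticeAut σ) (z : σ → ℂ) (i : σ) : actV w z i = evalC (w⁻¹ (e i)) z := rfl

theorem actDual_apply (w : LatticeAut σ) (η : σ → ℤ) (i : σ) :
    actDual w η i = pairZ (w⁻¹ (e i)) η := rfl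

theorem toV_actDual (w : LatticeAut σ) (η : σ → ℤ) : toV (actDual w η) = actV w (toV η) := by
  ext i
  simp only [actV, evalC_toV]
  rfl

@[simp] theorem pairZ_actDual (w : LatticeAut σ) (γ η : σ → ℤ) :
    pairZ γ (actDual w η) = pairZ (w⁻¹ γ) η := by
  have h := evalC_actV w γ (toV η)
  rw [← toV_actDual, evalC_toV, evalC_toV] at h
  exact_mod_cast h

theorem actV_actV (w v : LatticeAut σ) (z : σ → ℂ) : actV w (actV v z) = actV (w * v) z := by
  ext i
  rw [actV_apply, evalC_actV, actV_apply, mul_inv_rev, mul_apply]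

@[simp] theorem actV_one (z : σ → ℂ) : actV (1 : LatticeAut σ) z = z := by
  ext i
  rw [actV_apply, inv_one, one_apply, evalC_e]

theorem actDual_actDual (w v : LatticeAut σ) (η : σ → ℤ) :
    actDual w (actDual v η) = actDual (w * v) η := by
  ext i
  rw [actDual_apply, pairZ_actDual, actDual_apply, mul_inv_rev, mul_apply]

@[simp] theorem actDual_one (η : σ → ℤ) : actDual (1 : LatticeAut σ) η = η := by
  ext i
  rw [actDual_apply, inv_one, one_apply, pairZ_e_left]

theorem actV_add (w : LatticeAut σ) (y z : σ → ℂ) : actV w (y + z) = actV w y + actV w z := by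
  ext i; simp [actV_apply]

theorem actV_sub (w : LatticeAut σ) (y z : σ → ℂ) : actV w (y - z) = actV w y - actV w z := by
  ext i; simp [actV_apply]

theorem IsReflection.apply_e {s : LatticeAut σ} {β c : σ → ℤ} (h : IsReflection s β c) (i j : σ) :
    s (e i) j = (e i : σ → ℤ) j - c i * β j := by
  rw [h.apply_eq, pairZ_e_left]; simp

theorem IsReflection.actV_eq {s : LatticeAut σ} {β c : σ → ℤ} (h : IsReflection s β c)
    (z : σ → ℂ) : actV s z = z - evalC β z • toV c := by
  ext i
  rw [actV_apply, h.inv_eq, h.apply_eq, pairZ_e_left, evalC_sub_left, evalC_smul_left, evalC_e]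
  simp [toV, mul_comm]

end Lattice

/-! ### The reflection group and its roots -/

namespace Data

variable (D : Data ι)

/-- The finite group `W` as a `Finset`, to sum over. -/
def weylFinset : Finset (LatticeAut ι) := D.W_finite.toFinset

variable {D} {w : LatticeAut ι} {ω β γ η : ι → ℤ}

theorem mem_weylFinset : w ∈ D.weylFinset ↔ w ∈ D.W := by simp [weylFinset]

theorem apply_mem_Φ (hw : w ∈ D.W) (hω : ω ∈ D.Φ) : w ω ∈ D.Φ := by
  obtain ⟨v, hv, i, rfl⟩ := (D.Φ_spec _).1 hω
  exact (D.Φ_spec _).2 ⟨w * v, D.W.mul_mem hw hv, i, rfl⟩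

theorem e_mem_Φ (i : ι) : e i ∈ D.Φ := (D.Φ_spec _).2 ⟨1, D.W.one_mem, i, rfl⟩

theorem e_mem_Λ₁ {i : ι} (hi : D.ell i = 1) : e i ∈ D.Λ₁ :=
  (D.Λ₁_spec _).2 ⟨1, D.W.one_mem, i, hi, (actDual_one _).symm⟩

theorem actDual_mem_Λ₁ (hw : w ∈ D.W) (hη : η ∈ D.Λ₁) : actDual w η ∈ D.Λ₁ := by
  obtain ⟨v, hv, i, hi, rfl⟩ := (D.Λ₁_spec _).1 hη
  exact (D.Λ₁_spec _).2 ⟨w * v, D.W.mul_mem hw hv, i, hi, actDual_actDual ..⟩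

theorem pairZ_ell_of_mem_Λ₁ (hη : η ∈ D.Λ₁) : pairZ D.ell η = 1 := by
  obtain ⟨v, hv, i, hi, rfl⟩ := (D.Λ₁_spec _).1 hη
  rw [pairZ_actDual, D.C4 _ (D.W.inv_mem hv), pairZ_e_right, hi]

theorem pairZ_of_mem_Φ_of_mem_Λ₁ (hω : ω ∈ D.Φ) (hη : η ∈ D.Λ₁) :
    pairZ ω η = -1 ∨ pairZ ω η = 0 ∨ pairZ ω η = 1 := by
  obtain ⟨v, hv, i, hi, rfl⟩ := (D.Λ₁_spec _).1 hη
  rw [pairZ_actDual, pairZ_e_right]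
  exact D.C7 i hi _ (Or.inr (apply_mem_Φ (D.W.inv_mem hv) hω))

variable (D) in
/-- An element of `W` permuting the basis `Σ` is trivial. -/
class IsRigid : Prop where
  eq_one_of_permutes : ∀ w ∈ D.W, (∀ l, ∃ m, w (e l) = e m) → w = 1

theorem exists_apply_e_eq_e (hw : w ∈ D.W)
    (h : ∀ l, (∀ i, 0 ≤ w (e l) i) → ∃ m, w (e l) = e m) (m : ι) : ∃ l, w (e l) = e m := by
  have hell : D.ell m = ∑ l, D.ell l * w (e l) m := by
    conv_lhs => rw [← D.C4 w hw, eq_sum_smul_e D.ell]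
    simp only [map_sum, map_smul, Finset.sum_apply, Pi.smul_apply, smul_eq_mul]
  obtain ⟨l, -, hl⟩ : ∃ l ∈ Finset.univ, 0 < D.ell l * w (e l) m :=
    Finset.exists_lt_of_sum_lt (by simpa [← hell] using D.C6 m)
  have hlm : 0 < w (e l) m := pos_of_mul_pos_right hl (D.C6 l).le
  have hnonneg : ∀ i, 0 ≤ w (e l) i :=
    (D.C3 _ (apply_mem_Φ hw (e_mem_Φ l))).resolve_right fun hneg => (hneg m).not_gt hlm
  obtain ⟨m', hm'⟩ := h l hnonneg
  have : m = m' := by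
    by_contra hne
    rw [hm', e_ne hne] at hlm
    exact hlm.false
  exact ⟨l, this ▸ hm'⟩

theorem exists_apply_e_nonneg_not_simple [D.IsRigid] (hw : w ∈ D.W) (h1 : w ≠ 1) :
    ∃ l, (∀ i, 0 ≤ w (e l) i) ∧ ∀ m, w (e l) ≠ e m := by
  by_contra! hsimple
  refine h1 (inv_eq_one.1 (IsRigid.eq_one_of_permutes _ (D.W.inv_mem hw) fun m => ?_))
  obtain ⟨l, hl⟩ := exists_apply_e_eq_e hw hsimple m
  exact ⟨l, by rw [← hl, inv_apply_self]⟩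

variable (D) in
/-- The union `W·Δ` of the `W`-orbits of the roots. It equals `Δ`, but this is not among the axioms
and is only a consequence of C0. -/
def orbitRoots : Finset (ι → ℤ) := (D.weylFinset ×ˢ D.Δ).image fun p => p.1 p.2

variable (D) in
/-- The positive elements of `W·Δ`. -/
def posRoots : Finset (ι → ℤ) := D.orbitRoots.filter fun β => ∀ i, 0 ≤ β i

theorem mem_orbitRoots : β ∈ D.orbitRoots ↔ ∃ w ∈ D.W, ∃ α ∈ D.Δ, w α = β := by
  simp only [orbitRoots, Finset.mem_image, Finset.mem_product, Prod.exists, mem_weylFinset]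
  grind

theorem mem_posRoots : β ∈ D.posRoots ↔ β ∈ D.orbitRoots ∧ ∀ i, 0 ≤ β i := Finset.mem_filter

theorem apply_mem_orbitRoots (hw : w ∈ D.W) (hβ : β ∈ D.orbitRoots) : w β ∈ D.orbitRoots := by
  obtain ⟨v, hv, α, hα, rfl⟩ := mem_orbitRoots.1 hβ
  exact mem_orbitRoots.2 ⟨w * v, D.W.mul_mem hw hv, α, hα, rfl⟩

theorem neg_mem_orbitRoots (hβ : β ∈ D.orbitRoots) : -β ∈ D.orbitRoots := by
  obtain ⟨v, hv, α, hα, rfl⟩ := mem_orbitRoots.1 hβ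
  exact mem_orbitRoots.2 ⟨v, hv, -α, D.Δ_neg _ hα, map_neg v α⟩

theorem mem_orbitRoots_of_mem_Δ (hβ : β ∈ D.Δ) : β ∈ D.orbitRoots :=
  mem_orbitRoots.2 ⟨1, D.W.one_mem, β, hβ, rfl⟩

theorem Δpos_subset_posRoots : D.Δpos ⊆ D.posRoots := fun _ hβ =>
  have hβ := Finset.mem_filter.1 hβ
  mem_posRoots.2 ⟨mem_orbitRoots_of_mem_Δ hβ.1, hβ.2⟩

theorem isUnit_of_mem_orbitRoots (hβ : β ∈ D.orbitRoots) {n : ℤ} (h : β = n • γ) : IsUnit n := by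
  obtain ⟨v, -, α, hα, rfl⟩ := mem_orbitRoots.1 hβ
  refine D.Δ_prim α hα n (v⁻¹ γ) ?_
  rw [← map_smul, ← h, inv_apply_self]

theorem ne_zero_of_mem_orbitRoots (hβ : β ∈ D.orbitRoots) : β ≠ 0 := fun h0 =>
  not_isUnit_zero (isUnit_of_mem_orbitRoots (γ := 0) hβ (h0.trans (zero_smul ℤ 0).symm))

theorem height_pos_of_mem_posRoots (hβ : β ∈ D.posRoots) : 0 < height β :=
  height_pos (mem_posRoots.1 hβ).2 (ne_zero_of_mem_orbitRoots (mem_posRoots.1 hβ).1)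

theorem exists_isReflection (hβ : β ∈ D.orbitRoots) : ∃ s ∈ D.W, ∃ c, IsReflection s β c := by
  obtain ⟨w, hw, α, hα, rfl⟩ := mem_orbitRoots.1 hβ
  obtain ⟨s, hs, hsx⟩ := D.refl_mem α hα
  refine ⟨w * s * w⁻¹, D.W.mul_mem (D.W.mul_mem hw hs) (D.W.inv_mem hw),
    actDual w (D.coroot α), fun x => ?_, ?_⟩
  · rw [mul_apply, mul_apply, hsx, pairZ_actDual, reflMap, map_sub, map_smul, apply_inv_self]
  · rw [pairZ_actDual, inv_apply_self, D.coroot_pair α hα]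

theorem eq_or_eq_neg_of_smul_eq_smul (hβ : β ∈ D.orbitRoots) (hγ : γ ∈ D.orbitRoots) {m n : ℤ}
    (hm : m ≠ 0) (h : m • γ = n • β) : γ = β ∨ γ = -β := by
  obtain ⟨g, m', n', hg, hcoprime, rfl, rfl⟩ :=
    Int.exists_gcd_one' (Int.gcd_pos_of_ne_zero_left n hm)
  have hg0 : (g : ℤ) ≠ 0 := by exact_mod_cast hg.ne'
  have h' : m' • γ = n' • β := by
    rw [mul_comm m', mul_comm n', mul_smul, mul_smul] at h
    exact smul_right_injective _ hg0 h
  have hcop : IsCoprime m' n' := Int.isCoprime_iff_gcd_eq_one.2 hcoprime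
  choose b hb using fun i => hcop.dvd_of_dvd_mul_left ⟨γ i, (congrFun h' i).symm⟩
  choose c hc using fun i => hcop.symm.dvd_of_dvd_mul_left ⟨β i, congrFun h' i⟩
  have hm' : IsUnit m' := isUnit_of_mem_orbitRoots hβ (γ := b) (funext hb)
  have hn' : IsUnit n' := isUnit_of_mem_orbitRoots hγ (γ := c) (funext hc)
  rcases Int.isUnit_iff.1 hm' with rfl | rfl <;> rcases Int.isUnit_iff.1 hn' with rfl | rfl <;>
    simp only [one_smul, neg_smul] at h'
  · exact Or.inl h'
  · exact Or.inr h'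
  · exact Or.inr (neg_eq_iff_eq_neg.1 h')
  · exact Or.inl (neg_injective h')

end Data

namespace Data

variable {D : Data ι} {w s : LatticeAut ι} {β c η : ι → ℤ}

theorem nonneg_or_nonpos_of_reflection {l : ι} (h : IsReflection s β c)
    (hnonneg : ∀ i, 0 ≤ s (e l) i) (hcl : c l ≠ 0) (hle : c l * β l ≤ 0) :
    (∀ i, 0 ≤ β i) ∨ ∀ i, β i ≤ 0 := by
  have hall : ∀ i, c l * β i ≤ 0 := by
    intro i
    rcases eq_or_ne i l with rfl | hi
    · exact hle
    · have := hnonneg i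
      rw [h.apply_e, e_ne hi] at this
      omega
  rcases hcl.lt_or_gt with hneg | hpos
  · exact Or.inl fun i => nonneg_of_mul_nonpos_right (hall i) hneg
  · exact Or.inr fun i => nonpos_of_mul_nonpos_right (hall i) hpos

theorem reflection_apply_e_eq_e {l : ι} (hs : s ∈ D.W) (h : IsReflection s β c)
    (hnonneg : ∀ i, 0 ≤ s (e l) i) (hcl : c l = 1) (hβl : β l = 1) :
    ∃ m, s (e l) = e m := by
  have hβ_nonpos : ∀ i ≠ l, β i ≤ 0 := by
    intro i hi
    have := hnonneg i
    rw [h.apply_e, e_ne hi, hcl] at this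
    omega
  obtain ⟨m, hml, hm⟩ : ∃ m ≠ l, 0 < β m * c m := by
    by_contra! hcon
    have hle : pairZ β c ≤ β l * c l :=
      (Finset.add_sum_erase _ _ (Finset.mem_univ l)).symm.trans_le
        (add_le_of_nonpos_right (Finset.sum_nonpos fun i hi => hcon i (Finset.ne_of_mem_erase hi)))
    rw [h.pairZ_eq_two, hβl, hcl] at hle
    norm_num at hle
  have hcm : c m < 0 := neg_of_mul_pos_right hm (hβ_nonpos m hml)
  have hβm : β m < 0 := neg_of_mul_pos_left hm hcm.le
  have hm_nonneg : ∀ i, 0 ≤ s (e m) i := by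
    refine (D.C3 _ (apply_mem_Φ hs (e_mem_Φ m))).resolve_right fun hneg => ?_
    have := hneg l
    rw [h.apply_e, e_ne hml.symm, hβl] at this
    omega
  have hβm_eq : β m = -1 := by
    have := hm_nonneg m
    rw [h.apply_e, e_self] at this
    nlinarith
  refine ⟨m, funext fun i => ?_⟩
  rw [h.apply_e, hcl]
  rcases eq_or_ne i l with rfl | hil
  · rw [e_self, e_ne hml.symm, hβl]; norm_num
  rcases eq_or_ne i m with rfl | him
  · rw [e_ne hil, e_self, hβm_eq]; norm_num
  · have h1 := hβ_nonpos i hil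
    have h2 := hm_nonneg i
    rw [h.apply_e, e_ne him] at h2
    rw [e_ne hil, e_ne him]
    nlinarith

theorem orbitRoots_nonneg_or_nonpos [D.IsRigid] (hβ : β ∈ D.orbitRoots) :
    (∀ i, 0 ≤ β i) ∨ ∀ i, β i ≤ 0 := by
  obtain ⟨s, hs, c, h⟩ := exists_isReflection hβ
  obtain ⟨l, hnonneg, hsimple⟩ :=
    exists_apply_e_nonneg_not_simple hs (h.ne_one (ne_zero_of_mem_orbitRoots hβ))
  have hcl : c l ≠ 0 := fun h0 => hsimple l (funext fun i => by rw [h.apply_e, h0]; simp)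
  by_cases hle : c l * β l ≤ 0
  · exact nonneg_or_nonpos_of_reflection h hnonneg hcl hle
  have hone : c l * β l = 1 := by
    have := hnonneg l
    rw [h.apply_e, e_self] at this
    omega
  rcases Int.mul_eq_one_iff_eq_one_or_neg_one.1 hone with ⟨hc, hb⟩ | ⟨hc, hb⟩
  · obtain ⟨m, hm⟩ := reflection_apply_e_eq_e hs h hnonneg hc hb
    exact absurd hm (hsimple m)
  · obtain ⟨m, hm⟩ := reflection_apply_e_eq_e hs h.neg hnonneg
      (by rw [Pi.neg_apply, hc, neg_neg]) (by rw [Pi.neg_apply, hb, neg_neg])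
    exact absurd hm (hsimple m)

theorem mem_posRoots_or_neg_mem_posRoots [D.IsRigid] (hβ : β ∈ D.orbitRoots) :
    β ∈ D.posRoots ∨ -β ∈ D.posRoots := by
  rcases orbitRoots_nonneg_or_nonpos hβ with h | h
  · exact Or.inl (mem_posRoots.2 ⟨hβ, h⟩)
  · exact Or.inr (mem_posRoots.2 ⟨neg_mem_orbitRoots hβ, fun i => neg_nonneg.2 (h i)⟩)

theorem exists_coroot_neg (hβ : β ∈ D.orbitRoots) (hs : s ∈ D.W) (h : IsReflection s β c) :
    ∃ m, c m < 0 := by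
  have h0 : pairZ D.ell c = 0 := by
    have := D.C4 s hs
    rw [h.apply_eq, sub_eq_self] at this
    exact (smul_eq_zero.1 this).resolve_right (ne_zero_of_mem_orbitRoots hβ)
  by_contra! hc
  have hzero : ∀ i, D.ell i * c i = 0 := fun i =>
    (Finset.sum_eq_zero_iff_of_nonneg fun i _ => mul_nonneg (D.C6 i).le (hc i)).1 h0 i
      (Finset.mem_univ i)
  have hc0 : ∀ i, c i = 0 := fun i => (mul_eq_zero.1 (hzero i)).resolve_left (D.C6 i).ne'
  simpa [pairZ, hc0] using h.pairZ_eq_two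

theorem posRoots_apply_le_one (hβ : β ∈ D.posRoots) {k : ι} (hk : D.ell k = 1) : β k ≤ 1 := by
  obtain ⟨hR, hnonneg⟩ := mem_posRoots.1 hβ
  obtain ⟨s, hs, c, h⟩ := exists_isReflection hR
  obtain ⟨m, hm⟩ := exists_coroot_neg hR hs h
  have hC7 := D.C7 k hk _ (Or.inr (apply_mem_Φ hs (e_mem_Φ m)))
  rw [h.apply_e] at hC7
  have hmul : c m * β k ≤ -1 * β k :=
    mul_le_mul_of_nonneg_right (Int.le_sub_one_of_lt hm) (hnonneg k)
  have := e_nonneg m k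
  omega

theorem pairZ_of_mem_orbitRoots_of_mem_Λ₁ [D.IsRigid] (hβ : β ∈ D.orbitRoots) (hη : η ∈ D.Λ₁) :
    pairZ β η = -1 ∨ pairZ β η = 0 ∨ pairZ β η = 1 := by
  obtain ⟨v, hv, i, hi, rfl⟩ := (D.Λ₁_spec _).1 hη
  rw [pairZ_actDual, pairZ_e_right]
  rcases mem_posRoots_or_neg_mem_posRoots (apply_mem_orbitRoots (D.W.inv_mem hv) hβ) with h | h
  · have := posRoots_apply_le_one h hi
    have := (mem_posRoots.1 h).2 i
    omega
  · have h_le := posRoots_apply_le_one h hi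
    have h_nonneg := (mem_posRoots.1 h).2 i
    rw [Pi.neg_apply] at h_le h_nonneg
    omega

end Data

/-! ### Degree filtration, translations and derivatives of polynomials -/

section Polynomials

variable {σ R : Type*} [CommRing R]

/-- The polynomials of degree `< d`; unlike a bound on `totalDegree`, this includes a zero
submodule `d = 0` and hence survives truncated subtraction. -/
def degLT (σ R : Type*) [CommRing R] (d : ℕ) : Submodule R (MvPolynomial σ R) :=
  restrictSupport R {n | n.degree < d}

variable {p q : MvPolynomial σ R} {a b d : ℕ}

theorem mem_degLT_succ : p ∈ degLT σ R (d + 1) ↔ p.totalDegree ≤ d := by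
  simp only [degLT, mem_restrictSupport_iff, totalDegree, Finset.sup_le_iff, Set.subset_def,
    Finset.mem_coe, Set.mem_ofPred_eq, Nat.lt_succ_iff]
  rfl

theorem mem_degLT_zero : p ∈ degLT σ R 0 ↔ p = 0 := by
  simp [degLT, mem_restrictSupport_iff]

theorem degLT_mono (h : a ≤ b) : degLT σ R a ≤ degLT σ R b :=
  restrictSupport_mono R fun _ hn => lt_of_lt_of_le hn h

theorem mul_mem_degLT (hp : p ∈ degLT σ R (a + 1)) (hq : q ∈ degLT σ R b) :
    p * q ∈ degLT σ R (a + b) := by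
  cases b with
  | zero => rw [mem_degLT_zero.1 hq, mul_zero]; exact zero_mem _
  | succ b =>
    rw [mem_degLT_succ] at hp hq
    exact mem_degLT_succ.2 ((totalDegree_mul p q).trans (Nat.add_le_add hp hq))

theorem C_mem_degLT (c : R) : (C c : MvPolynomial σ R) ∈ degLT σ R 1 :=
  mem_degLT_succ.2 (totalDegree_C c).le

theorem X_mem_degLT (i : σ) : (X i : MvPolynomial σ R) ∈ degLT σ R 2 :=
  mem_degLT_succ.2 ((totalDegree_monomial_le _ _).trans (by simp))

theorem prod_mem_degLT {κ : Type*} {s : Finset κ} {f : κ → MvPolynomial σ R}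
    (h : ∀ k ∈ s, f k ∈ degLT σ R 2) : ∏ k ∈ s, f k ∈ degLT σ R (s.card + 1) := by
  refine mem_degLT_succ.2 ((totalDegree_finsetProd s f).trans ?_)
  simpa using Finset.sum_le_card_nsmul s _ 1 fun k hk => mem_degLT_succ.1 (h k hk)

theorem mem_degLT_of_isHomogeneous (hp : p.IsHomogeneous d) : p ∈ degLT σ R (d + 1) :=
  mem_degLT_succ.2 hp.totalDegree_le

theorem eq_zero_of_isHomogeneous_of_mem_degLT (hp : p.IsHomogeneous d)
    (h : p ∈ degLT σ R d) : p = 0 := by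
  cases d with
  | zero => exact mem_degLT_zero.1 h
  | succ d =>
    by_contra h0
    have := mem_degLT_succ.1 h
    rw [hp.totalDegree h0] at this
    exact (Nat.lt_succ_self d).not_ge this

theorem map_mem_degLT_sub {k : ℕ} (f : MvPolynomial σ R →ₗ[R] MvPolynomial σ R)
    (h : ∀ n, f (monomial n 1) ∈ degLT σ R (n.degree + 1 - k)) (hp : p ∈ degLT σ R d) :
    f p ∈ degLT σ R (d - k) := by
  have hle : degLT σ R d ≤ (degLT σ R (d - k)).comap f := by
    rw [degLT, restrictSupport_eq_span, Submodule.span_le]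
    rintro _ ⟨n, hn, rfl⟩
    exact degLT_mono (Nat.sub_le_sub_right hn k) (h n)
  exact hle hp

theorem eval_bind₁ {τ : Type*} (z : τ → R) (g : σ → MvPolynomial τ R) (p : MvPolynomial σ R) :
    eval z (bind₁ g p) = eval (fun i => eval z (g i)) p :=
  eval₂Hom_bind₁ (RingHom.id R) z g p

/-- The polynomial `z ↦ p (z - y)`. -/
def translate (y : σ → R) : MvPolynomial σ R →ₐ[R] MvPolynomial σ R :=
  bind₁ fun i => X i - C (y i)

@[simp] theorem translate_X (y : σ → R) (i : σ) : translate y (X i) = X i - C (y i) :=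
  bind₁_X_right _ i

@[simp] theorem eval_translate (y z : σ → R) (p : MvPolynomial σ R) :
    eval z (translate y p) = eval (z - y) p := by
  rw [translate, eval_bind₁]
  congr 2
  ext i
  simp

theorem exponent_induction {motive : (σ →₀ ℕ) → Prop} (zero : motive 0)
    (add_single : ∀ n i, motive n → motive (n + Finsupp.single i 1)) (n : σ →₀ ℕ) : motive n := by
  suffices h : ∀ m n, motive n → motive (n + m) by simpa using h n 0 zero
  intro m
  induction m using Finsupp.induction_linear with
  | zero => exact fun n hn => by rwa [add_zero]
  | add m m' hm hm' => exact fun n hn => add_assoc n m m' ▸ hm' _ (hm n hn)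
  | single i k =>
    induction k with
    | zero => exact fun n hn => by rwa [Finsupp.single_zero, add_zero]
    | succ k ih =>
      intro n hn
      rw [Finsupp.single_add, ← add_assoc]
      exact add_single _ i (ih n hn)

/-- The derivative in the direction `y`. -/
def dirDeriv (y : σ → R) : Derivation R (MvPolynomial σ R) (MvPolynomial σ R) :=
  mkDerivation R fun i => C (y i)

@[simp] theorem dirDeriv_X (y : σ → R) (i : σ) : dirDeriv y (X i) = C (y i) :=
  mkDerivation_X R _ i

theorem derivation_apply_eq_sum [Fintype σ]
    (D : Derivation R (MvPolynomial σ R) (MvPolynomial σ R)) (p : MvPolynomial σ R) :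
    D p = ∑ i, D (X i) * pderiv i p := by
  have h : D = ∑ i, D (X i) • pderiv (R := R) i := derivation_ext fun j => by
    rw [← Derivation.coeFnAddMonoidHom_apply (∑ i, _), map_sum, Finset.sum_apply]
    simp [Pi.single_apply, pderiv_X]
  conv_lhs => rw [h]
  rw [← Derivation.coeFnAddMonoidHom_apply (∑ i, _), map_sum, Finset.sum_apply]
  simp

theorem monomial_mem_degLT (n : σ →₀ ℕ) : monomial n (1 : R) ∈ degLT σ R (n.degree + 1) :=
  mem_degLT_succ.2 (totalDegree_monomial_le n 1)

theorem dirDeriv_monomial_mem_degLT (y : σ → R) (n : σ →₀ ℕ) :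
    dirDeriv y (monomial n 1) ∈ degLT σ R n.degree := by
  induction n using exponent_induction with
  | zero => simp
  | add_single n i ih =>
    rw [monomial_add_single, pow_one, Derivation.leibniz, dirDeriv_X, smul_eq_mul, smul_eq_mul,
      map_add, Finsupp.degree_single]
    refine add_mem ?_ (add_comm n.degree 1 ▸ mul_mem_degLT (X_mem_degLT i) ih)
    exact mul_mem_degLT (monomial_mem_degLT n) (C_mem_degLT _)

theorem dirDeriv_mem_degLT (y : σ → R) (hp : p ∈ degLT σ R d) :
    dirDeriv y p ∈ degLT σ R (d - 1) :=
  map_mem_degLT_sub (dirDeriv y : MvPolynomial σ R →ₗ[R] MvPolynomial σ R)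
    (dirDeriv_monomial_mem_degLT y) hp

theorem translate_sub_add_dirDeriv_monomial (y : σ → R) (n : σ →₀ ℕ) :
    translate y (monomial n 1) - monomial n 1 + dirDeriv y (monomial n 1) ∈
      degLT σ R (n.degree - 1) := by
  induction n using exponent_induction with
  | zero => simp
  | add_single n i ih =>
    have hrem : translate y (monomial (n + Finsupp.single i 1) 1) -
          monomial (n + Finsupp.single i 1) 1 +
          dirDeriv y (monomial (n + Finsupp.single i 1) (1 : R)) =
        (X i - C (y i)) *
          (translate y (monomial n 1) - monomial n 1 + dirDeriv y (monomial n 1)) +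
        C (y i) * dirDeriv y (monomial n 1) := by
      rw [monomial_add_single, pow_one, map_mul, Derivation.leibniz, dirDeriv_X, translate_X,
        smul_eq_mul, smul_eq_mul]
      ring
    rw [hrem, map_add, Finsupp.degree_single, Nat.add_sub_cancel]
    have hX : X i - C (y i) ∈ degLT σ R 2 :=
      sub_mem (X_mem_degLT i) (degLT_mono one_le_two (C_mem_degLT _))
    have hC : C (y i) * dirDeriv y (monomial n 1) ∈ degLT σ R n.degree := by
      simpa using mul_mem_degLT (a := 0) (C_mem_degLT (y i)) (dirDeriv_monomial_mem_degLT y n)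
    refine add_mem ?_ hC
    rcases Nat.eq_zero_or_pos n.degree with h0 | hpos
    · rw [h0, mem_degLT_zero] at ih
      rw [ih, mul_zero]
      exact zero_mem _
    · have := mul_mem_degLT hX ih
      rwa [Nat.add_sub_cancel' hpos] at this

theorem translate_sub_add_dirDeriv_mem_degLT (y : σ → R) (hp : p ∈ degLT σ R d) :
    translate y p - p + dirDeriv y p ∈ degLT σ R (d - 2) := by
  let f : MvPolynomial σ R →ₗ[R] MvPolynomial σ R :=
    (translate y).toLinearMap - LinearMap.id + (dirDeriv y).toLinearMap
  exact map_mem_degLT_sub f (translate_sub_add_dirDeriv_monomial y) hp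

theorem translate_sub_mem_degLT (y : σ → R) (hp : p ∈ degLT σ R d) :
    translate y p - p ∈ degLT σ R (d - 1) := by
  have htaylor := degLT_mono (Nat.sub_le_sub_left one_le_two d)
    (translate_sub_add_dirDeriv_mem_degLT y hp)
  simpa using sub_mem htaylor (dirDeriv_mem_degLT y hp)

theorem mem_degLT_of_mul_mem_degLT [IsDomain R] (hq : q ≠ 0)
    (h : q * p ∈ degLT σ R (q.totalDegree + d)) : p ∈ degLT σ R d := by
  rcases eq_or_ne p 0 with rfl | hp
  · exact zero_mem _
  have hdeg := totalDegree_mul_of_isDomain hq hp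
  cases d with
  | zero =>
    cases hn : q.totalDegree with
    | zero =>
      rw [hn] at h
      exact absurd (mem_degLT_zero.1 h) (mul_ne_zero hq hp)
    | succ n =>
      rw [hn, add_zero, mem_degLT_succ] at h
      omega
  | succ d =>
    rw [← add_assoc, mem_degLT_succ] at h
    exact mem_degLT_succ.2 (by omega)

theorem prod_sub_prod_mem_degLT {κ : Type*} {s : Finset κ} {f g : κ → MvPolynomial σ R}
    (hf : ∀ k ∈ s, f k ∈ degLT σ R 2) (hg : ∀ k ∈ s, g k ∈ degLT σ R 2)
    (hfg : ∀ k ∈ s, f k - g k ∈ degLT σ R 1) :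
    ∏ k ∈ s, f k - ∏ k ∈ s, g k ∈ degLT σ R s.card := by
  induction s using Finset.cons_induction with
  | empty => simp
  | cons k s hk ih =>
    simp only [Finset.forall_mem_cons] at hf hg hfg
    have htelescope : f k * ∏ j ∈ s, f j - g k * ∏ j ∈ s, g j =
        (f k - g k) * ∏ j ∈ s, f j + g k * (∏ j ∈ s, f j - ∏ j ∈ s, g j) := by ring
    rw [Finset.prod_cons, Finset.prod_cons, Finset.card_cons, htelescope]
    refine add_mem ?_ (add_comm 1 s.card ▸ mul_mem_degLT hg.1 (ih hf.2 hg.2 hfg.2))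
    simpa using mul_mem_degLT (a := 0) hfg.1 (prod_mem_degLT hf.2)

theorem eval_eq_of_mem_degLT_two [Fintype σ] (hp : p ∈ degLT σ R 2) (z : σ → R) :
    eval z p = eval 0 p + ∑ i, eval 0 (pderiv i p) * z i := by
  have htaylor : translate (-z) p - p + dirDeriv (-z) p = 0 :=
    mem_degLT_zero.1 (translate_sub_add_dirDeriv_mem_degLT (d := 2) (-z) hp)
  rw [derivation_apply_eq_sum] at htaylor
  have hzero := congrArg (eval (0 : σ → R)) htaylor
  simp only [dirDeriv_X, map_add, map_sub, map_sum, map_mul, eval_translate, eval_C,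
    sub_neg_eq_add, zero_add, Pi.neg_apply, neg_mul, Finset.sum_neg_distrib, map_zero] at hzero
  simp only [mul_comm _ (z _)]
  linear_combination hzero

end Polynomials

/-! ### Linear forms and their divisibility -/

section LinearForms

variable {σ : Type*}

theorem eq_zero_of_eval_eq_zero_of_eval_ne_zero {p q : MvPolynomial σ ℂ} (hq : q ≠ 0)
    (h : ∀ z, eval z q ≠ 0 → eval z p = 0) : p = 0 := by
  refine (mul_eq_zero.1 (MvPolynomial.funext fun z => ?_)).resolve_right hq
  rw [map_mul, map_zero, mul_eq_zero]
  exact or_iff_not_imp_right.2 (h z)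

variable [Fintype σ] {γ β : σ → ℤ} {f : MvPolynomial σ ℂ}

/-- The lattice vector `γ` as a polynomial function on `V`. -/
def linForm (γ : σ → ℤ) : MvPolynomial σ ℂ := ∑ i, C (γ i : ℂ) * X i

@[simp] theorem eval_linForm (γ : σ → ℤ) (z : σ → ℂ) : eval z (linForm γ) = evalC γ z := by
  simp [linForm, evalC]

theorem linForm_isHomogeneous (γ : σ → ℤ) : (linForm γ).IsHomogeneous 1 :=
  IsHomogeneous.sum _ _ _ fun _ _ => isHomogeneous_C_mul_X _ _

theorem linForm_mem_degLT (γ : σ → ℤ) : linForm γ ∈ degLT σ ℂ 2 :=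
  mem_degLT_of_isHomogeneous (linForm_isHomogeneous γ)

theorem linForm_sub_C_mem_degLT (ω : σ → ℤ) (c : ℂ) : linForm ω - C c ∈ degLT σ ℂ 2 :=
  sub_mem (linForm_mem_degLT ω) (degLT_mono one_le_two (C_mem_degLT c))

theorem exists_evalC_eq_one (hγ : γ ≠ 0) : ∃ v, evalC γ v = 1 := by
  classical
  obtain ⟨i, hi⟩ := Function.ne_iff.1 hγ
  have hi : (γ i : ℂ) ≠ 0 := by exact_mod_cast hi
  exact ⟨(γ i : ℂ)⁻¹ • toV (e i), by
    rw [evalC_smul_right, evalC_toV, pairZ_e_right, inv_mul_cancel₀ hi]⟩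

theorem linForm_ne_zero (hγ : γ ≠ 0) : linForm γ ≠ 0 := by
  obtain ⟨v, hv⟩ := exists_evalC_eq_one hγ
  intro h
  have := congrArg (eval v) h
  simp [hv] at this

theorem irreducible_linForm (hγ : γ ≠ 0) : Irreducible (linForm γ) := by
  refine irreducible_of_totalDegree_eq_one
    ((linForm_isHomogeneous γ).totalDegree (linForm_ne_zero hγ)) fun c hc => ?_
  obtain ⟨n, hn⟩ := ne_zero_iff.1 (linForm_ne_zero hγ)
  rw [isUnit_iff_ne_zero]
  rintro rfl
  exact hn (zero_dvd_iff.1 (hc n))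

-- Modulo `linForm β`, substituting `z - β(z) v` for `z` changes nothing, and it lands in `β = 0`.
theorem linForm_dvd_of_eval_eq_zero (hβ : β ≠ 0) (h : ∀ z, evalC β z = 0 → eval z f = 0) :
    linForm β ∣ f := by
  obtain ⟨v, hv⟩ := exists_evalC_eq_one hβ
  let proj : MvPolynomial σ ℂ →ₐ[ℂ] MvPolynomial σ ℂ :=
    bind₁ fun i => X i - C (v i) * linForm β
  have heval (z : σ → ℂ) : eval z (proj f) = eval (z - evalC β z • v) f := by
    rw [eval_bind₁]
    congr 2
    ext i
    simp [mul_comm]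
  have hproj : proj f = 0 := MvPolynomial.funext fun z => by
    rw [heval, map_zero]
    exact h _ (by rw [evalC_sub_right, evalC_smul_right, hv, mul_one, sub_self])
  have hmod : (Ideal.Quotient.mkₐ ℂ (Ideal.span {linForm β})).comp proj =
      Ideal.Quotient.mkₐ ℂ (Ideal.span {linForm β}) := by
    ext i
    simp only [proj, AlgHom.comp_apply, bind₁_X_right, Ideal.Quotient.mkₐ_eq_mk]
    refine (Ideal.Quotient.mk_eq_mk_iff_sub_mem _ _).2 (Ideal.mem_span_singleton.2 ?_)
    exact ⟨-C (v i), by ring⟩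
  have hf := DFunLike.congr_fun hmod f
  rw [AlgHom.comp_apply, hproj, map_zero] at hf
  exact Ideal.mem_span_singleton.1 (Ideal.Quotient.eq_zero_iff_mem.1 hf.symm)

theorem mul_eq_mul_of_linForm_dvd (h : linForm β ∣ linForm γ) (i j : σ) :
    γ i * β j = γ j * β i := by
  classical
  obtain ⟨q, hq⟩ := h
  let z : σ → ℂ := toV (β j • e i - β i • e j)
  have hβ : evalC β z = 0 := by
    rw [evalC_toV, pairZ_sub_right, pairZ_smul_right, pairZ_smul_right, pairZ_e_right,
      pairZ_e_right, mul_comm, sub_self, Int.cast_zero]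
  have hγ : evalC γ z = 0 := by
    rw [← eval_linForm, hq, map_mul, eval_linForm, hβ, zero_mul]
  rw [evalC_toV, pairZ_sub_right, pairZ_smul_right, pairZ_smul_right, pairZ_e_right,
    pairZ_e_right, Int.cast_eq_zero] at hγ
  linarith

theorem prod_linForm_isHomogeneous (s : Finset (σ → ℤ)) :
    (∏ γ ∈ s, linForm γ).IsHomogeneous s.card := by
  simpa using IsHomogeneous.prod s linForm (fun _ => 1) fun γ _ => linForm_isHomogeneous γ

variable [DecidableEq σ]

/-- The polynomial `z ↦ p (w⁻¹ z)`. -/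
def compAct (w : LatticeAut σ) : MvPolynomial σ ℂ →ₐ[ℂ] MvPolynomial σ ℂ :=
  bind₁ fun i => linForm (w (e i))

@[simp] theorem eval_compAct (w : LatticeAut σ) (p : MvPolynomial σ ℂ) (z : σ → ℂ) :
    eval z (compAct w p) = eval (actV w⁻¹ z) p := by
  rw [compAct, eval_bind₁]
  congr 2
  ext i
  simp [actV_apply]

theorem compAct_isHomogeneous (w : LatticeAut σ) {p : MvPolynomial σ ℂ} {d : ℕ}
    (hp : p.IsHomogeneous d) : (compAct w p).IsHomogeneous d := by
  rw [← one_mul d]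
  exact hp.aeval _ fun i => linForm_isHomogeneous (w (e i))

theorem compAct_mem_degLT (w : LatticeAut σ) {p : MvPolynomial σ ℂ} {d : ℕ}
    (hp : p ∈ degLT σ ℂ d) : compAct w p ∈ degLT σ ℂ d :=
  map_mem_degLT_sub (k := 0) (compAct w).toLinearMap (fun _ => mem_degLT_of_isHomogeneous
    (compAct_isHomogeneous w (isHomogeneous_monomial 1 rfl))) hp

end LinearForms

namespace Data

variable {D : Data ι} {S : Finset (ι → ℤ)} {β γ : ι → ℤ}

theorem prod_linForm_ne_zero (hS : S ⊆ D.posRoots) : ∏ β ∈ S, linForm β ≠ 0 :=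
  Finset.prod_ne_zero_iff.2 fun _ hβ =>
    linForm_ne_zero (ne_zero_of_mem_orbitRoots (mem_posRoots.1 (hS hβ)).1)

theorem eq_of_eq_or_eq_neg (hβ : β ∈ D.posRoots) (hγ : γ ∈ D.posRoots) (h : γ = β ∨ γ = -β) :
    γ = β := by
  refine h.resolve_right fun hneg => ?_
  have := height_pos_of_mem_posRoots hγ
  rw [hneg, height_neg] at this
  exact (neg_pos.1 this).not_gt (height_pos_of_mem_posRoots hβ)

theorem eq_of_linForm_dvd (hβ : β ∈ D.posRoots) (hγ : γ ∈ D.posRoots)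
    (h : linForm β ∣ linForm γ) : γ = β := by
  have hβR := (mem_posRoots.1 hβ).1
  obtain ⟨j, hj⟩ := Function.ne_iff.1 (ne_zero_of_mem_orbitRoots hβR)
  refine eq_of_eq_or_eq_neg hβ hγ (eq_or_eq_neg_of_smul_eq_smul hβR (mem_posRoots.1 hγ).1 hj
    (n := γ j) (funext fun i => ?_))
  rw [Pi.smul_apply, Pi.smul_apply, smul_eq_mul, smul_eq_mul, mul_comm,
    mul_eq_mul_of_linForm_dvd h i j]

theorem prod_linForm_dvd (hS : S ⊆ D.posRoots) {f : MvPolynomial ι ℂ}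
    (h : ∀ β ∈ S, ∀ z, evalC β z = 0 → eval z f = 0) : ∏ β ∈ S, linForm β ∣ f := by
  have hne : ∀ β ∈ S, β ≠ 0 := fun β hβ => ne_zero_of_mem_orbitRoots (mem_posRoots.1 (hS hβ)).1
  refine Finset.prod_dvd_of_isRelPrime (fun β hβ γ hγ hβγ => ?_) fun β hβ =>
    linForm_dvd_of_eval_eq_zero (hne β hβ) (h β hβ)
  exact (irreducible_linForm (hne β hβ)).isRelPrime_iff_not_dvd.2 fun hdvd =>
    hβγ (eq_of_linForm_dvd (hS hβ) (hS hγ) hdvd).symm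

end Data

/-! ### Signs and alternating sums -/

section Sign

variable {σ : Type*}

/-- The representative of `±γ` with non-negative coordinates, when there is one. -/
def absRoot (γ : σ → ℤ) : σ → ℤ := if ∀ i, 0 ≤ γ i then γ else -γ

/-- The sign with `γ = rootSign γ • absRoot γ`, as a complex number. -/
def rootSign (γ : σ → ℤ) : ℂ := if ∀ i, 0 ≤ γ i then 1 else -1

/-- The sign of `w` relative to a set `S` of positive roots: `±1` according to the parity of the
number of elements of `S` that `w` makes negative. -/
def relSign (S : Finset (σ → ℤ)) (w : LatticeAut σ) : ℂ := ∏ β ∈ S, rootSign (w β)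

theorem absRoot_rootSign_cases (γ : σ → ℤ) :
    (absRoot γ = γ ∧ rootSign γ = 1) ∨ (absRoot γ = -γ ∧ rootSign γ = -1) := by
  unfold absRoot rootSign
  split_ifs <;> simp

end Sign

namespace Data

variable {D : Data ι} {w s : LatticeAut ι} {β γ c : ι → ℤ} {S : Finset (ι → ℤ)}

theorem absRoot_of_mem_posRoots (h : β ∈ D.posRoots) : absRoot β = β :=
  if_pos (mem_posRoots.1 h).2

theorem rootSign_of_mem_posRoots (h : β ∈ D.posRoots) : rootSign β = 1 :=
  if_pos (mem_posRoots.1 h).2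

theorem not_nonneg_neg_of_mem_posRoots (h : β ∈ D.posRoots) : ¬∀ i, 0 ≤ (-β) i := by
  intro hneg
  have : 0 ≤ height (-β) := Finset.sum_nonneg fun i _ => hneg i
  rw [height_neg] at this
  exact (neg_nonneg.1 this).not_gt (height_pos_of_mem_posRoots h)

theorem absRoot_neg_of_mem_posRoots (h : β ∈ D.posRoots) : absRoot (-β) = β :=
  (if_neg (not_nonneg_neg_of_mem_posRoots h)).trans (neg_neg β)

theorem rootSign_neg_of_mem_posRoots (h : β ∈ D.posRoots) : rootSign (-β) = -1 :=
  if_neg (not_nonneg_neg_of_mem_posRoots h)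

theorem rootSign_neg [D.IsRigid] (h : β ∈ D.orbitRoots) : rootSign (-β) = -rootSign β := by
  rcases mem_posRoots_or_neg_mem_posRoots h with h | h
  · rw [rootSign_of_mem_posRoots h, rootSign_neg_of_mem_posRoots h]
  · have hβ := rootSign_neg_of_mem_posRoots h
    rw [neg_neg] at hβ
    rw [rootSign_of_mem_posRoots h, hβ, neg_neg]

theorem absRoot_apply_mem_posRoots [D.IsRigid] (hw : w ∈ D.W) (h : β ∈ D.posRoots) :
    absRoot (w β) ∈ D.posRoots := by
  rcases mem_posRoots_or_neg_mem_posRoots (apply_mem_orbitRoots hw (mem_posRoots.1 h).1) with h | h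
  · rwa [absRoot_of_mem_posRoots h]
  · have := absRoot_neg_of_mem_posRoots h
    rw [neg_neg] at this
    rwa [this]

theorem eq_of_absRoot_apply_eq (hβ : β ∈ D.posRoots) (hγ : γ ∈ D.posRoots)
    (h : absRoot (w β) = absRoot (w γ)) : β = γ := by
  refine eq_of_eq_or_eq_neg hγ hβ ?_
  rw [← w.injective.eq_iff, ← w.injective.eq_iff (b := -γ), map_neg]
  rcases absRoot_rootSign_cases (w β) with ⟨hβ', -⟩ | ⟨hβ', -⟩ <;>
    rcases absRoot_rootSign_cases (w γ) with ⟨hγ', -⟩ | ⟨hγ', -⟩ <;>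
    rw [hβ', hγ'] at h
  · exact Or.inl h
  · exact Or.inr h
  · exact Or.inr (neg_eq_iff_eq_neg.1 h)
  · exact Or.inl (neg_injective h)

theorem prod_absRoot_apply {M : Type*} [CommMonoid M] (hS : S ⊆ D.posRoots)
    (hw : ∀ β ∈ S, absRoot (w β) ∈ S) (F : (ι → ℤ) → M) :
    ∏ β ∈ S, F (absRoot (w β)) = ∏ β ∈ S, F β := by
  have hinj : Set.InjOn (fun β => absRoot (w β)) S :=
    fun β hβ γ hγ h => eq_of_absRoot_apply_eq (hS hβ) (hS hγ) h
  have himage : S.image (fun β => absRoot (w β)) = S :=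
    Finset.eq_of_subset_of_card_le (Finset.image_subset_iff.2 hw)
      (Finset.card_image_of_injOn hinj).ge
  conv_rhs => rw [← himage]
  rw [Finset.prod_image hinj]

theorem prod_apply_of_odd (hS : S ⊆ D.posRoots) (hw : ∀ β ∈ S, absRoot (w β) ∈ S)
    (F : (ι → ℤ) → ℂ) (hF : ∀ γ ∈ S, F (-γ) = -F γ) :
    ∏ β ∈ S, F (w β) = relSign S w * ∏ β ∈ S, F β := by
  rw [← prod_absRoot_apply hS hw F, relSign, ← Finset.prod_mul_distrib]
  refine Finset.prod_congr rfl fun β hβ => ?_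
  have hneg := hF _ (hw β hβ)
  rcases absRoot_rootSign_cases (w β) with ⟨habs, hsign⟩ | ⟨habs, hsign⟩
  · rw [habs, hsign, one_mul]
  · rw [habs, neg_neg] at hneg
    rw [habs, hsign, hneg, neg_one_mul]

theorem relSign_mul [D.IsRigid] (hS : S ⊆ D.posRoots) (hs : s ∈ D.W)
    (hw : ∀ β ∈ S, absRoot (w β) ∈ S) : relSign S (s * w) = relSign S s * relSign S w := by
  rw [mul_comm (relSign S s)]
  refine prod_apply_of_odd hS hw (fun γ => rootSign (s γ)) fun γ hγ => ?_
  rw [map_neg, rootSign_neg (apply_mem_orbitRoots hs (mem_posRoots.1 (hS hγ)).1)]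

-- `γ ↦ |s γ|` pairs off the roots other than `β`; at a fixed point `s γ = γ`.
theorem relSign_eq_neg_one (hS : S ⊆ D.posRoots) (hβ : β ∈ S) (h : IsReflection s β c)
    (hs : ∀ γ ∈ S, absRoot (s γ) ∈ S) : relSign S s = -1 := by
  rw [relSign, ← Finset.mul_prod_erase _ _ hβ, h.apply_root, rootSign_neg_of_mem_posRoots (hS hβ),
    neg_one_mul, neg_inj]
  have hmem : ∀ γ ∈ S.erase β, γ ∈ D.posRoots := fun γ hγ => hS (Finset.mem_of_mem_erase hγ)
  refine Finset.prod_involution (fun γ _ => absRoot (s γ)) (fun γ hγ => ?_) (fun γ hγ hne heq => ?_)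
    (fun γ hγ => Finset.mem_erase.2 ⟨fun heq => ?_, hs γ (Finset.mem_of_mem_erase hγ)⟩)
    fun γ hγ => ?_
  · rcases absRoot_rootSign_cases (s γ) with ⟨habs, hsign⟩ | ⟨habs, hsign⟩
    · rw [habs, hsign, h.apply_apply, rootSign_of_mem_posRoots (hmem γ hγ), one_mul]
    · rw [habs, hsign, map_neg, h.apply_apply, rootSign_neg_of_mem_posRoots (hmem γ hγ),
        neg_one_mul, neg_neg]
  · rcases absRoot_rootSign_cases (s γ) with ⟨-, hsign⟩ | ⟨habs, -⟩
    · exact hne hsign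
    · rw [habs, h.apply_eq, neg_sub, sub_eq_iff_eq_add, ← two_smul ℤ] at heq
      exact Finset.ne_of_mem_erase hγ (eq_of_eq_or_eq_neg (hS hβ) (hmem γ hγ)
        (eq_or_eq_neg_of_smul_eq_smul (mem_posRoots.1 (hS hβ)).1 (mem_posRoots.1 (hmem γ hγ)).1
          two_ne_zero heq.symm))
  · refine Finset.ne_of_mem_erase hγ (eq_of_absRoot_apply_eq (w := s) (hmem γ hγ) (hS hβ) ?_)
    rw [heq, h.apply_root, absRoot_neg_of_mem_posRoots (hS hβ)]
  · rcases absRoot_rootSign_cases (s γ) with ⟨habs, -⟩ | ⟨habs, -⟩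
    · simp only [habs, h.apply_apply, absRoot_of_mem_posRoots (hmem γ hγ)]
    · simp only [habs, map_neg, h.apply_apply, absRoot_neg_of_mem_posRoots (hmem γ hγ)]

/-- The alternating sum `Σ_w ε(w) w(h)` over the elements `w` of `W` lying in `G`, with `ε` the
sign relative to `S`. -/
def altSum (D : Data ι) (S : Finset (ι → ℤ)) (G : Subgroup (LatticeAut ι)) (h : MvPolynomial ι ℂ) :
    MvPolynomial ι ℂ :=
  ∑ w ∈ D.weylFinset.filter (· ∈ G), C (relSign S w) * compAct w h

theorem eval_altSum (G : Subgroup (LatticeAut ι)) (h : MvPolynomial ι ℂ) (z : ι → ℂ) :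
    eval z (D.altSum S G h) =
      ∑ w ∈ D.weylFinset.filter (· ∈ G), relSign S w * eval (actV w⁻¹ z) h := by
  simp [altSum]

theorem eval_altSum_eq_zero [D.IsRigid] (hS : S ⊆ D.posRoots) {G : Subgroup (LatticeAut ι)}
    (hG : ∀ w ∈ G, ∀ β ∈ S, absRoot (w β) ∈ S) (hβ : β ∈ S) (hsW : s ∈ D.W) (hsG : s ∈ G)
    (hs : IsReflection s β c) (h : MvPolynomial ι ℂ) {z : ι → ℂ} (hz : evalC β z = 0) :
    eval z (D.altSum S G h) = 0 := by
  have hmaps : ∀ w ∈ D.weylFinset.filter (· ∈ G), s * w ∈ D.weylFinset.filter (· ∈ G) := by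
    simp only [Finset.mem_filter, mem_weylFinset]
    exact fun w hw => ⟨D.W.mul_mem hsW hw.1, G.mul_mem hsG hw.2⟩
  have hss (w : LatticeAut ι) : s * (s * w) = w := LinearEquiv.ext fun x => hs.apply_apply (w x)
  refine self_eq_neg.1 ?_
  rw [eval_altSum, ← Finset.sum_neg_distrib]
  refine Finset.sum_nbij' (s * ·) (s * ·) hmaps hmaps (fun w _ => hss w) (fun w _ => hss w)
    fun w hw => ?_
  have hfix : actV s z = z := by rw [hs.actV_eq, hz, zero_smul, sub_zero]
  rw [relSign_mul hS hsW (hG w (Finset.mem_filter.1 hw).2), relSign_eq_neg_one hS hβ hs (hG s hsG),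
    mul_inv_rev, hs.inv_eq, ← actV_actV, hfix, neg_one_mul, neg_mul, neg_neg]

-- An alternating polynomial is divisible by the product of the linear forms in `S`.
theorem card_le_totalDegree_of_altSum_ne_zero [D.IsRigid] (hS : S ⊆ D.posRoots)
    {G : Subgroup (LatticeAut ι)} (hG : ∀ w ∈ G, ∀ β ∈ S, absRoot (w β) ∈ S)
    (hrefl : ∀ β ∈ S, ∀ s ∈ D.W, ∀ c, IsReflection s β c → s ∈ G)
    {h : MvPolynomial ι ℂ} (hne : D.altSum S G h ≠ 0) : S.card ≤ h.totalDegree := by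
  have hdeg : D.altSum S G h ∈ degLT ι ℂ (h.totalDegree + 1) := sum_mem fun w _ => by
    simpa using mul_mem_degLT (a := 0) (C_mem_degLT (relSign S w))
      (compAct_mem_degLT w (mem_degLT_succ.2 le_rfl))
  have hdvd : ∏ β ∈ S, linForm β ∣ D.altSum S G h := by
    refine prod_linForm_dvd hS fun β hβ z hz => ?_
    obtain ⟨s, hs, c, hsc⟩ := exists_isReflection (mem_posRoots.1 (hS hβ)).1
    exact eval_altSum_eq_zero hS hG hβ hs (hrefl β hβ s hs c hsc) hsc h hz
  rw [← (prod_linForm_isHomogeneous S).totalDegree (prod_linForm_ne_zero hS)]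
  exact (totalDegree_le_of_dvd_of_isDomain hdvd hne).trans (mem_degLT_succ.1 hdeg)

end Data

/-! ### The difference operator -/

namespace Data

variable {D : Data ι} {ρ ρ' : ι → ℂ} {w : LatticeAut ι} {η μ : ι → ℤ} {p : MvPolynomial ι ℂ}

/-- The space `V₀` of admissible shifts, as a subspace of `V`. -/
def V0 (D : Data ι) : Submodule ℂ (ι → ℂ) where
  carrier := {ρ | D.InV0 ρ}
  add_mem' hρ hρ' i j h := congrArg₂ (· + ·) (hρ i j h) (hρ' i j h)
  zero_mem' _ _ _ := rfl
  smul_mem' c _ hρ i j h := congrArg (c * ·) (hρ i j h)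

theorem one_mem_V0 : (1 : ι → ℂ) ∈ D.V0 := fun _ _ _ => rfl

theorem add_smul_one_mem_V0 (hρ : ρ ∈ D.V0) (t : ℂ) : ρ + t • (1 : ι → ℂ) ∈ D.V0 :=
  add_mem hρ (D.V0.smul_mem t one_mem_V0)

/-- The algebra `P^W` of invariant polynomials. -/
def invariants (D : Data ι) : Subalgebra ℂ (MvPolynomial ι ℂ) where
  carrier := {p | D.WInv p}
  mul_mem' hp hq w hw z := by rw [map_mul, map_mul, hp w hw, hq w hw]
  add_mem' hp hq w hw z := by rw [map_add, map_add, hp w hw, hq w hw]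
  algebraMap_mem' c w _ z := by rw [algebraMap_eq, eval_C, eval_C]

theorem eval_actV (hp : p ∈ D.invariants) (hw : w ∈ D.W) (z : ι → ℂ) :
    eval (actV w z) p = eval z p :=
  hp w hw z

theorem linForm_ell_mem_invariants : linForm D.ell ∈ D.invariants := fun w hw z => by
  rw [eval_linForm, eval_linForm, evalC_actV, D.C4 _ (D.W.inv_mem hw)]

/-- The parameter `k_ω` of `ρ ∈ V₀`, for `ω ∈ Φ`; it is `0` for `ω ∉ Φ`. -/
def multParam (D : Data ι) (ρ : ι → ℂ) (ω : ι → ℤ) : ℂ :=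
  if h : ∃ i, ∃ w ∈ D.W, ω = w (e i) then ρ h.choose else 0

theorem multParam_apply_e (hρ : ρ ∈ D.V0) (hw : w ∈ D.W) (i : ι) :
    D.multParam ρ (w (e i)) = ρ i := by
  have h : ∃ j, ∃ v ∈ D.W, w (e i) = v (e j) := ⟨i, w, hw, rfl⟩
  rw [multParam, dif_pos h]
  obtain ⟨v, hv, hvj⟩ := h.choose_spec
  refine hρ _ _ ⟨v⁻¹ * w, D.W.mul_mem (D.W.inv_mem hv) hw, Or.inl ?_⟩
  rw [mul_apply]
  exact ((congrArg (v⁻¹ ·) hvj).trans (inv_apply_self v _)).symm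

theorem multParam_e (hρ : ρ ∈ D.V0) (i : ι) : D.multParam ρ (e i) = ρ i :=
  multParam_apply_e hρ D.W.one_mem i

variable {ω : ι → ℤ}

theorem multParam_apply (hρ : ρ ∈ D.V0) (hw : w ∈ D.W) (hω : ω ∈ D.Φ) :
    D.multParam ρ (w ω) = D.multParam ρ ω := by
  obtain ⟨v, hv, i, rfl⟩ := (D.Φ_spec _).1 hω
  rw [← mul_apply, multParam_apply_e hρ (D.W.mul_mem hw hv), multParam_apply_e hρ hv]

theorem multParam_add_smul_one (hρ : ρ ∈ D.V0) (t : ℂ) (hω : ω ∈ D.Φ) :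
    D.multParam (ρ + t • (1 : ι → ℂ)) ω = D.multParam ρ ω + t := by
  obtain ⟨v, hv, i, rfl⟩ := (D.Φ_spec _).1 hω
  rw [multParam_apply_e (add_smul_one_mem_V0 hρ t) hv, multParam_apply_e hρ hv]
  simp

theorem multParam_smul_one (t : ℂ) (hω : ω ∈ D.Φ) :
    D.multParam (t • (1 : ι → ℂ)) ω = t := by
  obtain ⟨v, hv, i, rfl⟩ := (D.Φ_spec _).1 hω
  rw [multParam_apply_e (D.V0.smul_mem t one_mem_V0) hv]
  simp

/-- The Weyl denominator, the product of the positive orbit roots. -/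
def weylDenom (D : Data ι) : MvPolynomial ι ℂ := ∏ β ∈ D.posRoots, linForm β

/-- The weights `ω ∈ Φ` with `ω(η) = 1`, which index the numerator of the `η`-th coefficient of
the difference operator. -/
def unitWeights (D : Data ι) (η : ι → ℤ) : Finset (ι → ℤ) := D.Φ.filter fun ω => pairZ ω η = 1

/-- The positive roots not orthogonal to `η`, which index the denominator of the `η`-th
coefficient of the difference operator. -/
def activeRoots (D : Data ι) (η : ι → ℤ) : Finset (ι → ℤ) :=
  D.posRoots.filter fun β => pairZ β η ≠ 0

/-- The `η`-th coefficient of the difference operator, multiplied by the Weyl denominator. A root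
that cancels against its factor of the Weyl denominator leaves behind its sign `⟨β, η⟩ = ±1`. -/
def numer (D : Data ι) (ρ : ι → ℂ) (η : ι → ℤ) : MvPolynomial ι ℂ :=
  (∏ ω ∈ D.unitWeights η, (linForm ω - C (D.multParam ρ ω))) *
    ∏ β ∈ D.posRoots, if pairZ β η = 0 then linForm β else C (pairZ β η : ℂ)

@[simp] theorem eval_weylDenom (z : ι → ℂ) :
    eval z D.weylDenom = ∏ β ∈ D.posRoots, evalC β z := by
  simp only [weylDenom, map_prod, eval_linForm]

theorem eval_numer (ρ : ι → ℂ) (η : ι → ℤ) (z : ι → ℂ) :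
    eval z (D.numer ρ η) = (∏ ω ∈ D.unitWeights η, (evalC ω z - D.multParam ρ ω)) *
      ∏ β ∈ D.posRoots, if pairZ β η = 0 then evalC β z else (pairZ β η : ℂ) := by
  simp only [numer, map_mul, map_prod, map_sub, eval_linForm, eval_C, apply_ite (eval z)]

theorem weylDenom_ne_zero (D : Data ι) : D.weylDenom ≠ 0 := prod_linForm_ne_zero subset_rfl

theorem weylDenom_isHomogeneous : D.weylDenom.IsHomogeneous D.posRoots.card :=
  prod_linForm_isHomogeneous D.posRoots

theorem mem_degLT_of_weylDenom_mul_mem {d : ℕ}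
    (h : D.weylDenom * p ∈ degLT ι ℂ (D.posRoots.card + d)) : p ∈ degLT ι ℂ d := by
  rw [← weylDenom_isHomogeneous.totalDegree D.weylDenom_ne_zero] at h
  exact mem_degLT_of_mul_mem_degLT D.weylDenom_ne_zero h

theorem unitWeights_actDual (hw : w ∈ D.W) (η : ι → ℤ) :
    D.unitWeights (actDual w η) = (D.unitWeights η).map w.toEquiv.toEmbedding := by
  ext ω
  simp only [unitWeights, Finset.mem_filter, Finset.mem_map_equiv, pairZ_actDual]
  refine and_congr_left fun _ => ⟨apply_mem_Φ (D.W.inv_mem hw), fun h => ?_⟩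
  simpa using apply_mem_Φ hw h

theorem card_activeRoots_le_actDual [D.IsRigid] (hw : w ∈ D.W) (η : ι → ℤ) :
    (D.activeRoots η).card ≤ (D.activeRoots (actDual w η)).card := by
  refine Finset.card_le_card_of_injOn (fun β => absRoot (w β)) (fun β hβ => ?_)
    fun β hβ γ hγ h => eq_of_absRoot_apply_eq (Finset.filter_subset _ _ hβ)
      (Finset.filter_subset _ _ hγ) h
  obtain ⟨hβT, hβη⟩ := Finset.mem_filter.1 hβ
  refine Finset.mem_coe.2 (Finset.mem_filter.2 ⟨absRoot_apply_mem_posRoots hw hβT, ?_⟩)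
  rcases absRoot_rootSign_cases (w β) with ⟨h, -⟩ | ⟨h, -⟩ <;>
    simpa [h, pairZ_actDual, inv_apply_self] using hβη

theorem card_activeRoots_actDual [D.IsRigid] (hw : w ∈ D.W) (η : ι → ℤ) :
    (D.activeRoots (actDual w η)).card = (D.activeRoots η).card := by
  refine le_antisymm ?_ (card_activeRoots_le_actDual hw η)
  simpa only [actDual_actDual, inv_mul_cancel, actDual_one] using
    card_activeRoots_le_actDual (D.W.inv_mem hw) (actDual w η)

theorem eval_actV_weylDenom [D.IsRigid] (hw : w ∈ D.W) (z : ι → ℂ) :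
    eval (actV w z) D.weylDenom = relSign D.posRoots w⁻¹ * eval z D.weylDenom := by
  simp only [eval_weylDenom, evalC_actV]
  exact prod_apply_of_odd subset_rfl (fun β => absRoot_apply_mem_posRoots (D.W.inv_mem hw))
    (fun γ => evalC γ z) fun γ _ => evalC_neg_left γ z

theorem eval_actV_numer [D.IsRigid] (hρ : ρ ∈ D.V0) (hw : w ∈ D.W) (η : ι → ℤ) (z : ι → ℂ) :
    eval (actV w z) (D.numer ρ (actDual w η)) =
      relSign D.posRoots w⁻¹ * eval z (D.numer ρ η) := by
  have hweights : ∏ ω ∈ D.unitWeights (actDual w η), (evalC ω (actV w z) - D.multParam ρ ω) =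
      ∏ ω ∈ D.unitWeights η, (evalC ω z - D.multParam ρ ω) := by
    rw [unitWeights_actDual hw, Finset.prod_map]
    refine Finset.prod_congr rfl fun ω hω => ?_
    rw [evalC_actV, Equiv.coe_toEmbedding, LinearEquiv.coe_toEquiv, inv_apply_self,
      multParam_apply hρ hw (Finset.mem_of_mem_filter _ hω)]
  have hroots := prod_apply_of_odd (w := w⁻¹) subset_rfl
    (fun β => absRoot_apply_mem_posRoots (D.W.inv_mem hw))
    (fun γ => if pairZ γ η = 0 then evalC γ z else (pairZ γ η : ℂ)) fun γ _ => by
      simp only [pairZ_neg_left, evalC_neg_left, neg_eq_zero, Int.cast_neg, neg_ite]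
  rw [eval_numer, eval_numer, hweights]
  simp only [evalC_actV, pairZ_actDual, hroots]
  ring

/-- The difference operator multiplied by the Weyl denominator; this is defined on all
polynomials, invariant or not. -/
def clearedOp (D : Data ι) (ρ : ι → ℂ) : MvPolynomial ι ℂ →ₗ[ℂ] MvPolynomial ι ℂ :=
  ∑ η ∈ D.Λ₁, LinearMap.mulLeft ℂ (D.numer ρ η) ∘ₗ (translate (toV η)).toLinearMap

theorem clearedOp_apply (ρ : ι → ℂ) (p : MvPolynomial ι ℂ) :
    D.clearedOp ρ p = ∑ η ∈ D.Λ₁, D.numer ρ η * translate (toV η) p := by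
  simp [clearedOp]

theorem clearedOp_one (ρ : ι → ℂ) : D.clearedOp ρ 1 = ∑ η ∈ D.Λ₁, D.numer ρ η := by
  simp only [clearedOp_apply, map_one, mul_one]

theorem eval_clearedOp (ρ : ι → ℂ) (p : MvPolynomial ι ℂ) (z : ι → ℂ) :
    eval z (D.clearedOp ρ p) = ∑ η ∈ D.Λ₁, eval z (D.numer ρ η) * eval (z - toV η) p := by
  simp only [clearedOp_apply, map_sum, map_mul, eval_translate]

theorem eval_actV_clearedOp [D.IsRigid] (hρ : ρ ∈ D.V0) (hp : p ∈ D.invariants) (hw : w ∈ D.W)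
    (z : ι → ℂ) :
    eval (actV w z) (D.clearedOp ρ p) = relSign D.posRoots w⁻¹ * eval z (D.clearedOp ρ p) := by
  rw [eval_clearedOp, eval_clearedOp, Finset.mul_sum]
  symm
  refine Finset.sum_nbij' (actDual w) (actDual w⁻¹) (fun η => actDual_mem_Λ₁ hw)
    (fun η => actDual_mem_Λ₁ (D.W.inv_mem hw)) (fun η _ => ?_) (fun η _ => ?_) fun η _ => ?_
  · rw [actDual_actDual, inv_mul_cancel, actDual_one]
  · rw [actDual_actDual, mul_inv_cancel, actDual_one]
  · rw [eval_actV_numer hρ hw, toV_actDual, ← actV_sub, eval_actV hp hw, mul_assoc]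

-- On the hyperplane of `β` the reflection at `β` is the identity, but it changes the sign.
theorem weylDenom_dvd_clearedOp [D.IsRigid] (hρ : ρ ∈ D.V0) (hp : p ∈ D.invariants) :
    D.weylDenom ∣ D.clearedOp ρ p := by
  refine prod_linForm_dvd subset_rfl fun β hβ z hz => ?_
  obtain ⟨s, hs, c, h⟩ := exists_isReflection (mem_posRoots.1 hβ).1
  have hanti := eval_actV_clearedOp hρ hp hs z
  rw [h.actV_eq, hz, zero_smul, sub_zero, h.inv_eq, relSign_eq_neg_one subset_rfl hβ h
    fun γ => absRoot_apply_mem_posRoots hs, neg_one_mul] at hanti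
  exact self_eq_neg.1 hanti

/-- Knop's difference operator `L = ∑_η f_η T_η` with shift `ρ`, as an operator on invariant
polynomials; elsewhere the quotient by the Weyl denominator may fail to be a polynomial and the
value is then `0`. -/
def diffOp (D : Data ι) (ρ : ι → ℂ) (p : MvPolynomial ι ℂ) : MvPolynomial ι ℂ :=
  if h : D.weylDenom ∣ D.clearedOp ρ p then h.choose else 0

theorem weylDenom_mul_diffOp [D.IsRigid] (hρ : ρ ∈ D.V0) (hp : p ∈ D.invariants) :
    D.weylDenom * D.diffOp ρ p = D.clearedOp ρ p := by
  have h := weylDenom_dvd_clearedOp hρ hp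
  rw [diffOp, dif_pos h]
  exact h.choose_spec.symm

theorem diffOp_sub [D.IsRigid] (hρ : ρ ∈ D.V0) {q : MvPolynomial ι ℂ} (hp : p ∈ D.invariants)
    (hq : q ∈ D.invariants) : D.diffOp ρ (p - q) = D.diffOp ρ p - D.diffOp ρ q := by
  refine mul_left_cancel₀ D.weylDenom_ne_zero ?_
  rw [mul_sub, weylDenom_mul_diffOp hρ hp, weylDenom_mul_diffOp hρ hq,
    weylDenom_mul_diffOp hρ (sub_mem hp hq), map_sub]

theorem relSign_ne_zero {σ : Type*} (S : Finset (σ → ℤ)) (w : LatticeAut σ) : relSign S w ≠ 0 :=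
  Finset.prod_ne_zero_iff.2 fun β _ => by
    rcases absRoot_rootSign_cases (w β) with ⟨-, h⟩ | ⟨-, h⟩ <;> simp [h]

theorem diffOp_mem_invariants [D.IsRigid] (hρ : ρ ∈ D.V0) (hp : p ∈ D.invariants) :
    D.diffOp ρ p ∈ D.invariants := by
  intro w hw z
  have hcomp : compAct w⁻¹ (D.diffOp ρ p) - D.diffOp ρ p = 0 := by
    refine eq_zero_of_eval_eq_zero_of_eval_ne_zero D.weylDenom_ne_zero fun z hz => ?_
    rw [map_sub, eval_compAct, inv_inv, sub_eq_zero]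
    have h := eval_actV_clearedOp hρ hp hw z
    rw [← weylDenom_mul_diffOp hρ hp, map_mul, map_mul, eval_actV_weylDenom hw, mul_assoc] at h
    exact mul_left_cancel₀ hz (mul_left_cancel₀ (relSign_ne_zero _ _) h)
  have heval := congrArg (eval z) hcomp
  rwa [map_sub, eval_compAct, inv_inv, map_zero, sub_eq_zero] at heval

end Data

/-! ### Degrees of the coefficients -/

namespace Data

variable {D : Data ι} {ρ ρ' : ι → ℂ} {η μ : ι → ℤ} {p : MvPolynomial ι ℂ} {d : ℕ}

theorem sum_Φpos_apply {k : ι} (hk : D.ell k = 1) :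
    ∑ ω ∈ D.Φpos, ω k = (D.unitWeights (e k)).card := by
  rw [Finset.cast_card, unitWeights, Φpos, Finset.sum_filter, Finset.sum_filter]
  refine Finset.sum_congr rfl fun ω hω => ?_
  rw [pairZ_e_right]
  have hpos : ω k = 1 → ∀ i, 0 ≤ ω i := fun h =>
    (D.C3 ω hω).resolve_right fun hneg => absurd (hneg k) (by omega)
  rcases D.C7 k hk ω (Or.inr hω) with h | h | h
  · rw [if_neg fun hnonneg => absurd (hnonneg k) (by omega), if_neg (by omega)]
  · simp [h]
  · rw [if_pos (hpos h), if_pos h, h]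

theorem sum_posRoots_apply {k : ι} (hk : D.ell k = 1) :
    ∑ β ∈ D.posRoots, β k = (D.activeRoots (e k)).card := by
  rw [Finset.cast_card, activeRoots, Finset.sum_filter]
  refine Finset.sum_congr rfl fun β hβ => ?_
  have hle := posRoots_apply_le_one hβ hk
  have hnonneg := (mem_posRoots.1 hβ).2 k
  rw [pairZ_e_right]
  split_ifs <;> omega

theorem card_unitWeights_le [D.IsRigid] (hη : η ∈ D.Λ₁) :
    (D.unitWeights η).card ≤ (D.activeRoots η).card + 1 := by
  obtain ⟨w, hw, k, hk, rfl⟩ := (D.Λ₁_spec _).1 hη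
  rw [unitWeights_actDual hw, Finset.card_map, card_activeRoots_actDual hw]
  have hC5 : ∑ ω ∈ D.Φpos, ω k - ∑ α ∈ D.Δpos, α k = 1 := by
    simpa only [Φpos, Δpos, Pi.sub_apply, Finset.sum_apply, hk] using congrFun D.C5 k
  have hroots : ∑ α ∈ D.Δpos, α k ≤ ∑ β ∈ D.posRoots, β k :=
    Finset.sum_le_sum_of_subset_of_nonneg Δpos_subset_posRoots
      fun β hβ _ => (mem_posRoots.1 hβ).2 k
  rw [sum_posRoots_apply hk] at hroots
  rw [sum_Φpos_apply hk] at hC5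
  omega

theorem prod_ite_linForm_mem_degLT (η : ι → ℤ) :
    (∏ β ∈ D.posRoots, if pairZ β η = 0 then linForm β else C (pairZ β η : ℂ)) ∈
      degLT ι ℂ (D.posRoots.card - (D.activeRoots η).card + 1) := by
  rw [Finset.prod_ite, ← map_prod]
  have hmul := mul_mem_degLT (prod_mem_degLT fun β _ => linForm_mem_degLT β)
    (C_mem_degLT (∏ β ∈ D.posRoots with ¬pairZ β η = 0, (pairZ β η : ℂ)))
    (p := ∏ β ∈ D.posRoots with pairZ β η = 0, linForm β)
  refine degLT_mono ?_ hmul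
  have := Finset.card_filter_add_card_filter_not (s := D.posRoots) fun β => pairZ β η = 0
  simp only [activeRoots, ne_eq]
  omega

theorem numer_mem_degLT [D.IsRigid] (ρ : ι → ℂ) (hη : η ∈ D.Λ₁) :
    D.numer ρ η ∈ degLT ι ℂ (D.posRoots.card + 2) := by
  refine degLT_mono ?_ (mul_mem_degLT (prod_mem_degLT fun ω _ => linForm_sub_C_mem_degLT ω _)
    (prod_ite_linForm_mem_degLT η))
  have := card_unitWeights_le hη
  have : (D.activeRoots η).card ≤ D.posRoots.card := Finset.card_filter_le _ _
  omega

theorem numer_sub_numer_mem_degLT [D.IsRigid] (ρ ρ' : ι → ℂ) (hη : η ∈ D.Λ₁) :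
    D.numer ρ η - D.numer ρ' η ∈ degLT ι ℂ (D.posRoots.card + 1) := by
  have hprod := prod_sub_prod_mem_degLT (s := D.unitWeights η)
    (fun ω _ => linForm_sub_C_mem_degLT ω (D.multParam ρ ω))
    (fun ω _ => linForm_sub_C_mem_degLT ω (D.multParam ρ' ω)) fun ω _ => by
      rw [sub_sub_sub_cancel_left, ← C_sub]
      exact C_mem_degLT _
  rw [numer, numer, ← sub_mul, mul_comm]
  refine degLT_mono ?_ (mul_mem_degLT (prod_ite_linForm_mem_degLT η) hprod)
  have := card_unitWeights_le hη
  have : (D.activeRoots η).card ≤ D.posRoots.card := Finset.card_filter_le _ _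
  omega

theorem diffOp_one_mem_degLT [D.IsRigid] (hρ : ρ ∈ D.V0) : D.diffOp ρ 1 ∈ degLT ι ℂ 2 := by
  refine mem_degLT_of_weylDenom_mul_mem (D := D) ?_
  rw [weylDenom_mul_diffOp hρ (one_mem _), clearedOp_one]
  exact sum_mem fun η hη => numer_mem_degLT ρ hη

theorem diffOp_one_sub_mem_degLT [D.IsRigid] (hρ : ρ ∈ D.V0) (hρ' : ρ' ∈ D.V0) :
    D.diffOp ρ 1 - D.diffOp ρ' 1 ∈ degLT ι ℂ 1 := by
  refine mem_degLT_of_weylDenom_mul_mem (D := D) ?_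
  rw [mul_sub, weylDenom_mul_diffOp hρ (one_mem _), weylDenom_mul_diffOp hρ' (one_mem _),
    clearedOp_one, clearedOp_one, ← Finset.sum_sub_distrib]
  exact sum_mem fun η hη => numer_sub_numer_mem_degLT ρ ρ' hη

theorem weylDenom_mul_diffOp_sub [D.IsRigid] (hρ : ρ ∈ D.V0) (hp : p ∈ D.invariants) :
    D.weylDenom * (D.diffOp ρ p - p * D.diffOp ρ 1) =
      ∑ η ∈ D.Λ₁, D.numer ρ η * (translate (toV η) p - p) := by
  rw [mul_sub, mul_left_comm, weylDenom_mul_diffOp hρ hp, weylDenom_mul_diffOp hρ (one_mem _),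
    clearedOp_one, clearedOp_apply, mul_comm p, Finset.sum_mul, ← Finset.sum_sub_distrib]
  simp only [mul_sub]

theorem diffOp_sub_mul_mem_degLT [D.IsRigid] (hρ : ρ ∈ D.V0) (hp : p ∈ D.invariants)
    (hd : p ∈ degLT ι ℂ d) : D.diffOp ρ p - p * D.diffOp ρ 1 ∈ degLT ι ℂ (1 + (d - 1)) := by
  refine mem_degLT_of_weylDenom_mul_mem (D := D) ?_
  rw [weylDenom_mul_diffOp_sub hρ hp, ← add_assoc]
  exact sum_mem fun η hη => mul_mem_degLT (numer_mem_degLT ρ hη) (translate_sub_mem_degLT _ hd)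

theorem diffOp_sub_diffOp_mem_degLT [D.IsRigid] (hρ : ρ ∈ D.V0) (hρ' : ρ' ∈ D.V0)
    (hp : p ∈ D.invariants) (hd : p ∈ degLT ι ℂ d) :
    (D.diffOp ρ p - p * D.diffOp ρ 1) - (D.diffOp ρ' p - p * D.diffOp ρ' 1) ∈
      degLT ι ℂ (d - 1) := by
  refine mem_degLT_of_weylDenom_mul_mem (D := D) ?_
  rw [mul_sub, weylDenom_mul_diffOp_sub hρ hp, weylDenom_mul_diffOp_sub hρ' hp,
    ← Finset.sum_sub_distrib]
  simp only [← sub_mul]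
  exact sum_mem fun η hη =>
    mul_mem_degLT (numer_sub_numer_mem_degLT ρ ρ' hη) (translate_sub_mem_degLT _ hd)

theorem eval_numer_eq_zero (hρ : ρ ∈ D.V0) (hμ : μ ∈ LamPlus) (hη : η ∈ D.Λ₁)
    (h : μ - η ∉ LamPlus) : eval (ρ + toV μ) (D.numer ρ η) = 0 := by
  obtain ⟨i, hi⟩ : ∃ i, μ i - η i < 0 := by simpa [LamPlus] using h
  have hC7 := pairZ_of_mem_Φ_of_mem_Λ₁ (e_mem_Φ (D := D) i) hη
  rw [pairZ_e_left] at hC7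
  have hμi := hμ i
  have hη1 : η i = 1 := by omega
  have hμ0 : μ i = 0 := by omega
  rw [eval_numer]
  refine mul_eq_zero_of_left (Finset.prod_eq_zero (i := e i) ?_ ?_) _
  · simp [unitWeights, e_mem_Φ, pairZ_e_left, hη1]
  · simp [evalC_e, multParam_e hρ, hμ0]

theorem eval_clearedOp_add_toV (hρ : ρ ∈ D.V0) (hμ : μ ∈ LamPlus) (p : MvPolynomial ι ℂ) :
    eval (ρ + toV μ) (D.clearedOp ρ p) = ∑ η ∈ D.Λ₁ with μ - η ∈ LamPlus,
      eval (ρ + toV μ) (D.numer ρ η) * eval (ρ + toV (μ - η)) p := by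
  rw [eval_clearedOp, Finset.sum_filter]
  refine Finset.sum_congr rfl fun η hη => ?_
  split_ifs with h
  · rw [toV_sub, add_sub_assoc]
  · rw [eval_numer_eq_zero hρ hμ hη h, zero_mul]

end Data

/-! ### The difference operator applied to the constant `1` -/

theorem eq_of_eventually_cofinite_eq {f g : ℂ → ℂ} (hf : Continuous f) (hg : Continuous g)
    (h : ∀ᶠ t in Filter.cofinite, f t = g t) : f = g := by
  have hdense := (dense_univ (X := ℂ)).sdiff_finite (Filter.eventually_cofinite.1 h)
  exact hf.ext_on hdense hg fun t ht => not_not.1 ht.2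

namespace Data

variable {D : Data ι} {ρ : ι → ℂ} {η : ι → ℤ} {k : ι}

theorem eventually_eval_weylDenom_ne_zero (z : ι → ℂ) :
    ∀ᶠ t : ℂ in Filter.cofinite, eval (z + t • (1 : ι → ℂ)) D.weylDenom ≠ 0 := by
  simp only [eval_weylDenom, Finset.prod_ne_zero_iff, Filter.eventually_all_finset,
    evalC_add_right, evalC_smul_right, evalC_one_right]
  intro β hβ
  have hheight : (height β : ℂ) ≠ 0 := Int.cast_ne_zero.2 (height_pos_of_mem_posRoots hβ).ne'
  filter_upwards [Filter.eventually_cofinite_ne (-evalC β z / height β)] with t ht h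
  exact ht (by field_simp; linear_combination h)

theorem eq_zero_of_pairZ_ell_eq_zero (hη : η ∈ LamPlus) (h : pairZ D.ell η = 0) : η = 0 := by
  funext i
  have hi := (Finset.sum_eq_zero_iff_of_nonneg
    fun i _ => mul_nonneg (D.C6 i).le (hη i)).1 h i (Finset.mem_univ i)
  exact (mul_eq_zero.1 hi).resolve_left (D.C6 i).ne'

theorem eval_numer_mul_prod_activeRoots (ρ : ι → ℂ) (η : ι → ℤ) (z : ι → ℂ) :
    eval z (D.numer ρ η) * ∏ β ∈ D.activeRoots η, evalC β z =
      (∏ ω ∈ D.unitWeights η, (evalC ω z - D.multParam ρ ω)) *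
        (∏ β ∈ D.activeRoots η, (pairZ β η : ℂ)) * eval z D.weylDenom := by
  rw [eval_numer, eval_weylDenom, mul_assoc, mul_assoc, activeRoots, Finset.prod_filter,
    Finset.prod_filter, ← Finset.prod_mul_distrib, ← Finset.prod_mul_distrib]
  congr 1
  refine Finset.prod_congr rfl fun β _ => ?_
  split_ifs <;> simp_all

theorem eval_clearedOp_self (hρ : ρ ∈ D.V0) (p : MvPolynomial ι ℂ) :
    eval ρ (D.clearedOp ρ p) = 0 := by
  have hsum := eval_clearedOp_add_toV hρ (μ := 0) (fun _ => le_rfl) p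
  rw [show ρ + toV 0 = ρ by ext; simp [toV]] at hsum
  refine hsum.trans (Finset.sum_eq_zero fun η hη => ?_)
  obtain ⟨hη, hpos⟩ := Finset.mem_filter.1 hη
  have hell := pairZ_nonneg (fun i => (D.C6 i).le) hpos
  have hzero : pairZ D.ell 0 = 0 := dotProduct_zero _
  rw [pairZ_sub_right, hzero, pairZ_ell_of_mem_Λ₁ hη] at hell
  omega

theorem eval_clearedOp_one_add_e (hρ : ρ ∈ D.V0) (hk : D.ell k = 1) :
    eval (ρ + toV (e k)) (D.clearedOp ρ 1) = eval (ρ + toV (e k)) (D.numer ρ (e k)) := by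
  rw [eval_clearedOp_add_toV hρ fun i => e_nonneg k i, Finset.sum_eq_single (e k)]
  · rw [map_one, mul_one]
  · intro η hη hne
    obtain ⟨hη, hpos⟩ := Finset.mem_filter.1 hη
    refine absurd (sub_eq_zero.1 (eq_zero_of_pairZ_ell_eq_zero (D := D) hpos ?_)).symm hne
    rw [pairZ_sub_right, pairZ_e_right, hk, pairZ_ell_of_mem_Λ₁ hη, sub_self]
  · exact fun h => absurd (Finset.mem_filter.2 ⟨e_mem_Λ₁ hk, fun i => by simp⟩) h

theorem exists_eval_diffOp_one [D.IsRigid] : ∃ c : ι → ℂ,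
    (∀ w ∈ D.W, ∀ z : ι → ℂ, ∑ i, c i * actV w z i = ∑ i, c i * z i) ∧
    ∀ ρ ∈ D.V0, eval ρ D.weylDenom ≠ 0 →
      ∀ z, eval z (D.diffOp ρ 1) = ∑ i, c i * z i - ∑ i, c i * ρ i := by
  have haffine := eval_eq_of_mem_degLT_two (diffOp_one_mem_degLT D.V0.zero_mem)
  refine ⟨fun i => eval 0 (pderiv i (D.diffOp 0 1)), fun w hw z => ?_, fun ρ hρ hJ z => ?_⟩
  · have hinv := eval_actV (diffOp_mem_invariants D.V0.zero_mem (one_mem _)) hw z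
    rw [haffine, haffine z] at hinv
    exact add_left_cancel hinv
  · have hconst : ∀ z, eval z (D.diffOp ρ 1) - eval z (D.diffOp 0 1) =
        eval ρ (D.diffOp ρ 1) - eval ρ (D.diffOp 0 1) := fun z => by
      have hdeg := mem_degLT_succ.1 (diffOp_one_sub_mem_degLT hρ D.V0.zero_mem)
      rw [← map_sub, ← map_sub, totalDegree_eq_zero_iff_eq_C.1 (Nat.le_zero.1 hdeg), eval_C, eval_C]
    have hzero : eval ρ (D.diffOp ρ 1) = 0 := by
      have h := eval_clearedOp_self hρ 1
      rw [← weylDenom_mul_diffOp hρ (one_mem _), map_mul] at h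
      exact (mul_eq_zero.1 h).resolve_left hJ
    have h := hconst z
    rw [hzero, haffine z, haffine ρ] at h
    linear_combination h

/-- Evaluating `L(1)` at `e_k + ρ` for `ρ = t • 1`, where a single coefficient survives. -/
theorem linearPart_mul_prod_activeRoots [D.IsRigid] {c : ι → ℂ}
    (hc : ∀ ρ ∈ D.V0, eval ρ D.weylDenom ≠ 0 →
      ∀ z, eval z (D.diffOp ρ 1) = ∑ i, c i * z i - ∑ i, c i * ρ i)
    (hk : D.ell k = 1) {t : ℂ} (hJ : eval (t • (1 : ι → ℂ)) D.weylDenom ≠ 0)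
    (hJk : eval (toV (e k) + t • (1 : ι → ℂ)) D.weylDenom ≠ 0) :
    c k * ∏ β ∈ D.activeRoots (e k), (height β * t + 1) =
      ∏ ω ∈ D.unitWeights (e k), ((height ω - 1) * t + 1) := by
  have hV0 : t • (1 : ι → ℂ) ∈ D.V0 := D.V0.smul_mem t one_mem_V0
  have hprod := eval_numer_mul_prod_activeRoots (D := D) (t • (1 : ι → ℂ)) (e k)
    (t • (1 : ι → ℂ) + toV (e k))
  have hvalue : eval (t • (1 : ι → ℂ) + toV (e k)) (D.diffOp (t • (1 : ι → ℂ)) 1) = c k := by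
    rw [hc _ hV0 hJ, ← Finset.sum_sub_distrib, Finset.sum_eq_single k] <;>
      simp +contextual [toV, e_self, e_ne, mul_add]
  have hactive : ∀ β ∈ D.activeRoots (e k), β k = 1 := fun β hβ => by
    obtain ⟨hβ, hne⟩ := Finset.mem_filter.1 hβ
    rw [pairZ_e_right] at hne
    have := posRoots_apply_le_one hβ hk
    have := (mem_posRoots.1 hβ).2 k
    omega
  rw [← eval_clearedOp_one_add_e hV0 hk, ← weylDenom_mul_diffOp hV0 (one_mem _), map_mul, hvalue,
    Finset.prod_congr rfl fun β hβ => show (pairZ β (e k) : ℂ) = 1 by simp [hactive β hβ],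
    Finset.prod_const_one, mul_one, add_comm (t • (1 : ι → ℂ))] at hprod
  refine mul_left_cancel₀ hJk (Eq.trans ?_ (hprod.trans (mul_comm _ _)) |>.trans ?_)
  · rw [mul_assoc]
    congr 2
    refine Finset.prod_congr rfl fun β hβ => ?_
    simp [hactive β hβ, add_comm, mul_comm]
  · congr 1
    refine Finset.prod_congr rfl fun ω hω => ?_
    obtain ⟨hΦ, hω⟩ := Finset.mem_filter.1 hω
    rw [multParam_smul_one t hΦ, evalC_add_right, evalC_smul_right, evalC_one_right, evalC_toV, hω]
    push_cast
    ring

theorem C_linearPart_mul_prod_activeRoots [D.IsRigid] {c : ι → ℂ}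
    (hc : ∀ ρ ∈ D.V0, eval ρ D.weylDenom ≠ 0 →
      ∀ z, eval z (D.diffOp ρ 1) = ∑ i, c i * z i - ∑ i, c i * ρ i) (hk : D.ell k = 1) :
    Polynomial.C (c k) * ∏ β ∈ D.activeRoots (e k), (.C (height β : ℂ) * .X + .C 1) =
      ∏ ω ∈ D.unitWeights (e k), (.C (height ω - 1 : ℂ) * .X + .C 1) := by
  refine Polynomial.eq_of_infinite_eval_eq _ _ (Filter.frequently_cofinite_iff_infinite.1
    (Filter.Eventually.frequently ?_))
  filter_upwards [eventually_eval_weylDenom_ne_zero (D := D) 0,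
    eventually_eval_weylDenom_ne_zero (D := D) (toV (e k))]
    with t hJ hJk
  rw [zero_add] at hJ
  simpa [Polynomial.eval_prod] using linearPart_mul_prod_activeRoots hc hk hJ hJk

theorem linearPart_eq_ell [D.IsRigid] {c : ι → ℂ}
    (hinv : ∀ w ∈ D.W, ∀ z : ι → ℂ, ∑ i, c i * actV w z i = ∑ i, c i * z i)
    (hc : ∀ ρ ∈ D.V0, eval ρ D.weylDenom ≠ 0 →
      ∀ z, eval z (D.diffOp ρ 1) = ∑ i, c i * z i - ∑ i, c i * ρ i) :
    c = fun i => (D.ell i : ℂ) := by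
  refine D.C8 _ _ hinv (fun w hw z => ?_) fun k hk => ?_
  · simpa only [eval_linForm, evalC] using eval_actV linForm_ell_mem_invariants hw z
  · have h := congrArg (Polynomial.eval 0) (C_linearPart_mul_prod_activeRoots hc hk)
    simpa [Polynomial.eval_prod, hk] using h

theorem card_activeRoots_lt_card_unitWeights [D.IsRigid] (hk : D.ell k = 1) :
    (D.activeRoots (e k)).card < (D.unitWeights (e k)).card := by
  obtain ⟨c, hinv, hc⟩ := exists_eval_diffOp_one (D := D)
  have hpoly := C_linearPart_mul_prod_activeRoots hc hk
  have hmem : e k ∈ D.unitWeights (e k) := by simp [unitWeights, e_mem_Φ, e_self]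
  have hroots : (∏ β ∈ D.activeRoots (e k), (.C (height β : ℂ) * .X + .C 1) :
      Polynomial ℂ).natDegree = (D.activeRoots (e k)).card := by
    have hheight : ∀ β ∈ D.activeRoots (e k), (height β : ℂ) ≠ 0 := fun β hβ =>
      Int.cast_ne_zero.2 (height_pos_of_mem_posRoots (Finset.mem_of_mem_filter β hβ)).ne'
    rw [Polynomial.natDegree_prod _ _ fun β _ h => by simpa using congrArg (Polynomial.eval 0) h,
      Finset.card_eq_sum_ones]
    exact Finset.sum_congr rfl fun β hβ => Polynomial.natDegree_linear (hheight β hβ)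
  have hweights : (∏ ω ∈ (D.unitWeights (e k)).erase (e k), (.C (height ω - 1 : ℂ) * .X + .C 1) :
      Polynomial ℂ).natDegree ≤ ((D.unitWeights (e k)).erase (e k)).card := by
    rw [Finset.card_eq_sum_ones]
    exact (Polynomial.natDegree_prod_le _ _).trans
      (Finset.sum_le_sum fun ω _ => Polynomial.natDegree_linear_le)
  -- The factor of `e k` is the constant `1`, as `e k` has height one.
  rw [congrFun (linearPart_eq_ell hinv hc) k, hk, ← Finset.mul_prod_erase _ _ hmem,
    height_e] at hpoly
  simp only [Int.cast_one, sub_self, Polynomial.C_0, Polynomial.C_1, zero_mul, zero_add,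
    one_mul] at hpoly hroots hweights
  rw [← hpoly, hroots] at hweights
  exact hweights.trans_lt (Finset.card_erase_lt_of_mem hmem)

theorem card_unitWeights [D.IsRigid] (hη : η ∈ D.Λ₁) :
    (D.unitWeights η).card = (D.activeRoots η).card + 1 := by
  refine le_antisymm (card_unitWeights_le hη) ?_
  obtain ⟨w, hw, k, hk, rfl⟩ := (D.Λ₁_spec _).1 hη
  rw [unitWeights_actDual hw, Finset.card_map, card_activeRoots_actDual hw]
  exact card_activeRoots_lt_card_unitWeights hk

theorem continuous_eval_numer (hρ : ρ ∈ D.V0) (z : ι → ℂ) (η : ι → ℤ) :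
    Continuous fun t : ℂ => eval z (D.numer (ρ + t • (1 : ι → ℂ)) η) := by
  simp only [eval_numer]
  refine (continuous_finsetProd _ fun ω hω => ?_).mul continuous_const
  simp only [multParam_add_smul_one hρ _ (Finset.mem_of_mem_filter ω hω)]
  fun_prop

theorem diffOp_one [D.IsRigid] (hρ : ρ ∈ D.V0) :
    D.diffOp ρ 1 = linForm D.ell - C (evalC D.ell ρ) := by
  obtain ⟨c, hinv, hc⟩ := exists_eval_diffOp_one (D := D)
  obtain rfl := linearPart_eq_ell hinv hc
  refine mul_left_cancel₀ D.weylDenom_ne_zero (MvPolynomial.funext fun z => ?_)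
  have hperturb : (fun t : ℂ => eval z (D.clearedOp (ρ + t • (1 : ι → ℂ)) 1)) =
      fun t : ℂ => eval z D.weylDenom * (evalC D.ell z - evalC D.ell (ρ + t • (1 : ι → ℂ))) := by
    refine eq_of_eventually_cofinite_eq ?_ ?_ ?_
    · simp only [clearedOp_one, map_sum]
      exact continuous_finsetSum _ fun η _ => continuous_eval_numer hρ z η
    · simp only [evalC_add_right, evalC_smul_right]
      fun_prop
    · filter_upwards [eventually_eval_weylDenom_ne_zero ρ] with t ht
      have hV0 := add_smul_one_mem_V0 hρ t
      rw [← weylDenom_mul_diffOp hV0 (one_mem _), map_mul, hc _ hV0 ht]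
      rfl
  simpa [weylDenom_mul_diffOp hρ (one_mem _)] using congrFun hperturb 0

end Data

/-! ### Interpolation on lattice points -/

theorem eventually_injective_of_continuous {X M F : Type*} [TopologicalSpace X]
    [AddCommGroup M] [Module ℂ M] [NormedAddCommGroup F] [NormedSpace ℂ F] [FiniteDimensional ℂ F]
    {L : X → M →ₗ[ℂ] F} {x : X} (hL : ∀ v, Continuous fun y => L y v)
    (hx : Function.Bijective (L x)) : ∀ᶠ y in nhds x, Function.Injective (L y) := by
  let E := LinearEquiv.ofBijective (L x) hx
  have hcont : Continuous fun y => (L y ∘ₗ E.symm.toLinearMap).toContinuousLinearMap :=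
    continuous_clm_apply.2 fun v => hL (E.symm v)
  have hinj : Function.Injective (L x ∘ₗ E.symm.toLinearMap).toContinuousLinearMap :=
    hx.1.comp E.symm.injective
  filter_upwards [hcont.continuousAt.eventually
    (ContinuousLinearMap.isOpen_injective.mem_nhds hinj)] with y hy
  exact (Function.Injective.of_comp_iff' _ E.symm.bijective).1 hy

namespace Data

variable {D : Data ι} {ρ ρ' : ι → ℂ} {d : ℕ} {p q : MvPolynomial ι ℂ} {μ : ι → ℤ}

/-- The space of invariant polynomials of degree at most `d`. -/
def invariantsLE (D : Data ι) (d : ℕ) : Submodule ℂ (MvPolynomial ι ℂ) :=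
  D.invariants.toSubmodule ⊓ degLT ι ℂ (d + 1)

/-- The points `μ ∈ Λ₊` with `ℓ(μ) ≤ d`. -/
def latticePoints (D : Data ι) (d : ℕ) : Finset (ι → ℤ) :=
  (Fintype.piFinset fun _ => Finset.Icc 0 (d : ℤ)).filter fun μ => pairZ D.ell μ ≤ d

theorem pairZ_ell_nonneg (hμ : μ ∈ LamPlus) : 0 ≤ pairZ D.ell μ :=
  pairZ_nonneg (fun i => (D.C6 i).le) hμ

theorem apply_le_pairZ_ell (hμ : μ ∈ LamPlus) (i : ι) : μ i ≤ pairZ D.ell μ :=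
  (le_mul_of_one_le_left (hμ i) (D.C6 i)).trans (Finset.single_le_sum
    (f := fun i => D.ell i * μ i) (fun j _ => mul_nonneg (D.C6 j).le (hμ j)) (Finset.mem_univ i))

theorem mem_latticePoints : μ ∈ D.latticePoints d ↔ μ ∈ LamPlus ∧ pairZ D.ell μ ≤ d := by
  simp only [latticePoints, Finset.mem_filter, Fintype.mem_piFinset, Finset.mem_Icc]
  exact and_congr_left fun hd => ⟨fun h i => (h i).1,
    fun hμ i => ⟨hμ i, (apply_le_pairZ_ell hμ i).trans hd⟩⟩

/-- Evaluation of invariant polynomials of degree at most `d` at the points `ρ + μ` with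
`μ ∈ Λ₊` and `ℓ(μ) ≤ d`. -/
def latticeEval (D : Data ι) (ρ : ι → ℂ) (d : ℕ) :
    D.invariantsLE d →ₗ[ℂ] (D.latticePoints d → ℂ) where
  toFun p μ := eval (ρ + toV μ) p
  map_add' p q := by ext; simp
  map_smul' c p := by ext; simp [smul_eval]

theorem latticeEval_injective_iff : Function.Injective (D.latticeEval ρ d) ↔
    ∀ p ∈ D.invariantsLE d, (∀ μ ∈ D.latticePoints d, eval (ρ + toV μ) p = 0) → p = 0 := by
  rw [injective_iff_map_eq_zero]
  exact ⟨fun h p hp hv => congrArg Subtype.val (h ⟨p, hp⟩ (funext fun μ => hv μ μ.2)),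
    fun h p hp => Subtype.ext (h p p.2 fun μ hμ => congrFun hp ⟨μ, hμ⟩)⟩

theorem latticeEval_surjective_iff : Function.Surjective (D.latticeEval ρ d) ↔
    ∀ f : (ι → ℤ) → ℂ, ∃ p ∈ D.invariantsLE d,
      ∀ μ ∈ D.latticePoints d, eval (ρ + toV μ) p = f μ := by
  refine ⟨fun h f => ?_, fun h f => ?_⟩
  · obtain ⟨p, hp⟩ := h fun μ => f μ
    exact ⟨p, p.2, fun μ hμ => congrFun hp ⟨μ, hμ⟩⟩
  · obtain ⟨p, hp, hv⟩ := h fun μ => if hμ : μ ∈ D.latticePoints d then f ⟨μ, hμ⟩ else 0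
    exact ⟨⟨p, hp⟩, funext fun μ => (hv μ μ.2).trans (dif_pos μ.2)⟩

/-- The interpolation property required of `ρ'` in axiom C0. -/
def HasCapelliBasis (D : Data ι) (ρ' : ι → ℂ) : Prop :=
  ∀ lam ∈ LamPlus, ∃! p : MvPolynomial ι ℂ, D.WInv p ∧
    p.totalDegree = (pairZ D.ell lam).toNat ∧
    ∀ μ : ι → ℤ, μ ∈ LamPlus → pairZ D.ell μ ≤ pairZ D.ell lam →
      eval (ρ' + toV μ) p = if μ = lam then 1 else 0

theorem exists_ell_eq_one [Nonempty ι] : ∃ k, D.ell k = 1 := by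
  by_contra! h
  obtain ⟨i⟩ := ‹Nonempty ι›
  have hinv : ∀ w ∈ D.W, ∀ z : ι → ℂ,
      ∑ i, (D.ell i : ℂ) * actV w z i = ∑ i, (D.ell i : ℂ) * z i := fun w hw z => by
    simpa only [eval_linForm, evalC] using eval_actV linForm_ell_mem_invariants hw z
  have hzero := congrFun (D.C8 _ 0 hinv (by simp) fun i hi => absurd hi (h i)) i
  exact (D.C6 i).ne' (Int.cast_eq_zero.1 hzero)

theorem HasCapelliBasis.latticeEval_injective (h : D.HasCapelliBasis ρ') (d : ℕ) :
    Function.Injective (D.latticeEval ρ' d) := by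
  refine latticeEval_injective_iff.2 fun q hq hv => ?_
  rcases isEmpty_or_nonempty ι with hι | hι
  · refine MvPolynomial.funext fun z => ?_
    have hv0 := hv 0 (mem_latticePoints.2 ⟨fun _ => le_rfl, by simp [pairZ]⟩)
    rw [Subsingleton.elim z (ρ' + toV 0), hv0, map_zero]
  obtain ⟨k, hk⟩ := exists_ell_eq_one (D := D)
  have hell : pairZ D.ell ((d : ℤ) • e k) = d := by
    rw [pairZ_smul_right, pairZ_e_right, hk, mul_one]
  obtain ⟨p, ⟨hp, hdeg, hval⟩, huniq⟩ := h ((d : ℤ) • e k)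
    fun i => mul_nonneg (Int.natCast_nonneg d) (e_nonneg k i)
  simp only [hell, Int.toNat_natCast] at hdeg hval huniq
  have hzero : ∀ r ∈ D.invariantsLE d, (∀ μ ∈ D.latticePoints d, eval (ρ' + toV μ) r = 0) →
      (p + r).totalDegree = d → r = 0 := fun r hr hv hd =>
    add_eq_left.1 (huniq (p + r) ⟨D.invariants.add_mem hp hr.1, hd, fun μ hμ hle => by
      rw [map_add, hv μ (mem_latticePoints.2 ⟨hμ, hle⟩), add_zero, hval μ hμ hle]⟩)
  have hle : (p + q).totalDegree ≤ d :=
    (totalDegree_add _ _).trans (max_le hdeg.le (mem_degLT_succ.1 hq.2))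
  rcases hle.eq_or_lt with heq | hlt
  · exact hzero q hq hv heq
  -- If `p + q` has too small a degree, then `p + 2q = 2(p + q) - p` has the right one.
  · refine self_eq_neg.1 (eq_neg_of_add_eq_zero_left (hzero (q + q) (add_mem hq hq) (fun μ hμ => by
      rw [map_add, hv μ hμ, add_zero]) ?_))
    have hlt2 : ((p + q) + (p + q)).totalDegree < d :=
      (totalDegree_add _ _).trans_lt (max_lt hlt hlt)
    rw [show p + (q + q) = -p + ((p + q) + (p + q)) by ring,
      totalDegree_add_eq_left_of_totalDegree_lt, totalDegree_neg, hdeg]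
    rwa [totalDegree_neg, hdeg]

theorem HasCapelliBasis.exists_eval_eq (h : D.HasCapelliBasis ρ') (f : (ι → ℤ) → ℂ) (n : ℕ) :
    ∃ p ∈ D.invariants, p ∈ degLT ι ℂ n ∧
      ∀ μ ∈ LamPlus, pairZ D.ell μ < n → eval (ρ' + toV μ) p = f μ := by
  choose! P hP using fun lam hlam => (h lam hlam).exists
  induction n with
  | zero =>
    exact ⟨0, zero_mem _, zero_mem _,
      fun μ hμ hlt => absurd (pairZ_ell_nonneg hμ) (by simpa using hlt)⟩
  | succ n ih =>
    obtain ⟨p, hp, hdeg, hval⟩ := ih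
    let layer := (D.latticePoints n).filter fun lam => pairZ D.ell lam = n
    have hlayer : ∀ lam ∈ layer, lam ∈ LamPlus ∧ pairZ D.ell lam = n := fun lam hlam =>
      ⟨(mem_latticePoints.1 (Finset.mem_of_mem_filter lam hlam)).1, (Finset.mem_filter.1 hlam).2⟩
    refine ⟨p + ∑ lam ∈ layer, (f lam - eval (ρ' + toV lam) p) • P lam,
      add_mem hp (sum_mem fun lam hlam => D.invariants.smul_mem (hP lam (hlayer lam hlam).1).1 _),
      add_mem (degLT_mono n.le_succ hdeg) (sum_mem fun lam hlam => Submodule.smul_mem _ _ ?_),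
      fun μ hμ hlt => ?_⟩
    · rw [mem_degLT_succ, (hP lam (hlayer lam hlam).1).2.1, (hlayer lam hlam).2, Int.toNat_natCast]
    have hμn : pairZ D.ell μ ≤ n := by push_cast at hlt; omega
    have hterm : ∀ lam ∈ layer, eval (ρ' + toV μ) ((f lam - eval (ρ' + toV lam) p) • P lam) =
        if μ = lam then f μ - eval (ρ' + toV μ) p else 0 := fun lam hlam => by
      obtain ⟨hlam, hn⟩ := hlayer lam hlam
      rw [smul_eval, (hP lam hlam).2.2 μ hμ (hn ▸ hμn)]
      split_ifs with heq <;> simp [heq]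
    rw [map_add, map_sum, Finset.sum_congr rfl hterm, Finset.sum_ite_eq]
    split_ifs with hmem
    · ring
    · refine (add_zero _).trans (hval μ hμ (hμn.lt_of_ne fun heq => hmem ?_))
      exact Finset.mem_filter.2 ⟨mem_latticePoints.2 ⟨hμ, hμn⟩, heq⟩

theorem HasCapelliBasis.latticeEval_bijective (h : D.HasCapelliBasis ρ') (d : ℕ) :
    Function.Bijective (D.latticeEval ρ' d) := by
  refine ⟨h.latticeEval_injective d, latticeEval_surjective_iff.2 fun f => ?_⟩
  obtain ⟨p, hp, hdeg, hval⟩ := h.exists_eval_eq f (d + 1)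
  refine ⟨p, ⟨hp, hdeg⟩, fun μ hμ => hval μ (mem_latticePoints.1 hμ).1 ?_⟩
  have := (mem_latticePoints.1 hμ).2
  push_cast
  omega

/-- Interpolation by invariant polynomials is possible at one point of `V₀`, in all degrees. -/
class IsInterpolable (D : Data ι) : Prop where
  exists_latticeEval_bijective : ∃ ρ' ∈ D.V0, ∀ d, Function.Bijective (D.latticeEval ρ' d)

/-- An element of `W` permuting `Σ` fixes the interpolation point `ρ'`, hence an invariant cannot
distinguish `ρ' + e_l` from its image. -/
instance [h : D.IsInterpolable] : D.IsRigid where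
  eq_one_of_permutes := by
    obtain ⟨ρ', hV0, hbij⟩ := h
    intro w hw hperm
    choose σ hσ using hperm
    refine latticeAut_ext fun l => ?_
    rw [one_apply, hσ]
    by_contra hne
    have hfix : actV w⁻¹ ρ' = ρ' := by
      ext j
      rw [actV_apply, inv_inv, hσ, evalC_e]
      exact hV0 _ _ ⟨w, hw, Or.inl (hσ j).symm⟩
    have hmove : actDual w⁻¹ (e (σ l)) = e l := by
      ext j
      rw [actDual_apply, inv_inv, hσ, pairZ_e_left, e_apply, e_apply]
      refine if_congr ⟨fun hj => ?_, fun hj => by rw [hj]⟩ rfl rfl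
      exact e_injective (w.injective (by rw [hσ, hσ, hj]))
    have hell : D.ell (σ l) = D.ell l := by
      rw [← pairZ_e_right (σ l) D.ell, ← pairZ_e_right l D.ell,
        ← hmove, pairZ_actDual, inv_inv, D.C4 w hw]
    obtain ⟨p, ⟨hp, -⟩, hv⟩ := latticeEval_surjective_iff.1 (hbij (D.ell l).toNat).2
      fun μ => if μ = e l then 1 else 0
    have hmem : ∀ m, D.ell m = D.ell l → e m ∈ D.latticePoints (D.ell l).toNat := fun m hm =>
      mem_latticePoints.2 ⟨e_nonneg m, by rw [pairZ_e_right, hm]; exact Int.self_le_toNat _⟩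
    have hinv := eval_actV hp (D.W.inv_mem hw) (ρ' + toV (e (σ l)))
    rw [actV_add, hfix, ← toV_actDual, hmove, hv _ (hmem l rfl), hv _ (hmem _ hell), if_pos rfl,
      if_neg hne] at hinv
    exact one_ne_zero hinv

theorem latticeEval_surjective_of_injective [h : D.IsInterpolable]
    (hinj : Function.Injective (D.latticeEval ρ d)) :
    Function.Surjective (D.latticeEval ρ d) := by
  obtain ⟨ρ', -, hbij⟩ := h
  let E := LinearEquiv.ofBijective _ (hbij d)
  have := E.symm.finiteDimensional
  exact (LinearMap.injective_iff_surjective_of_finrank_eq_finrank E.finrank_eq).1 hinj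

theorem eventually_latticeEval_injective (hbij : Function.Bijective (D.latticeEval ρ' d)) :
    ∀ᶠ t in nhds (0 : ℂ), Function.Injective (D.latticeEval (ρ' + t • (1 : ι → ℂ)) d) := by
  have hcont (p : D.invariantsLE d) (μ : D.latticePoints d) :
      Continuous fun t : ℂ => eval (ρ' + t • (1 : ι → ℂ) + toV μ) p.1 := by
    have hline : Continuous fun t : ℂ => ρ' + t • (1 : ι → ℂ) + toV μ := by fun_prop
    exact (MvPolynomial.continuous_eval p.1).comp hline
  refine eventually_injective_of_continuous (x := (0 : ℂ))
    (L := fun t => D.latticeEval (ρ' + t • (1 : ι → ℂ)) d)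
    (fun p => continuous_pi fun μ => hcont p μ) ?_
  rwa [zero_smul, add_zero]

end Data

/-! ### The degree-lowering operators -/

namespace Data

variable {D : Data ι} {ρ ρ' : ι → ℂ} {d m : ℕ} {p q : MvPolynomial ι ℂ} {μ : ι → ℤ}

/-- The operator `ℓ(z - ρ) - d - L` on invariant polynomials, where `L` is `diffOp ρ`. It lowers
the degree of polynomials of degree `d`, the value `d` being the eigenvalue of `ℓ(z - ρ) - L` on the
top layer of degree-`d` polynomials. -/
def lowerOp (D : Data ι) (ρ : ι → ℂ) (d : ℕ) (p : MvPolynomial ι ℂ) : MvPolynomial ι ℂ :=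
  (linForm D.ell - C (evalC D.ell ρ + d)) * p - D.diffOp ρ p

theorem lowerOp_eq [D.IsRigid] (hρ : ρ ∈ D.V0) (d : ℕ) (p : MvPolynomial ι ℂ) :
    D.lowerOp ρ d p = -(D.diffOp ρ p - p * D.diffOp ρ 1) - C (d : ℂ) * p := by
  rw [diffOp_one hρ, lowerOp, C_add]
  ring

theorem lowerOp_sub [D.IsRigid] (hρ : ρ ∈ D.V0) (d : ℕ) (hp : p ∈ D.invariants)
    (hq : q ∈ D.invariants) : D.lowerOp ρ d (p - q) = D.lowerOp ρ d p - D.lowerOp ρ d q := by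
  rw [lowerOp, lowerOp, lowerOp, diffOp_sub hρ hp hq]
  ring

theorem lowerOp_mem_invariants [D.IsRigid] (hρ : ρ ∈ D.V0) (d : ℕ) (hp : p ∈ D.invariants) :
    D.lowerOp ρ d p ∈ D.invariants :=
  sub_mem (mul_mem (sub_mem linForm_ell_mem_invariants (D.invariants.algebraMap_mem _)) hp)
    (diffOp_mem_invariants hρ hp)

theorem lowerOp_mem_degLT [D.IsRigid] (hρ : ρ ∈ D.V0) (d : ℕ) (hp : p ∈ D.invariants)
    (hm : p ∈ degLT ι ℂ m) : D.lowerOp ρ d p ∈ degLT ι ℂ (1 + (m - 1)) := by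
  rw [lowerOp_eq hρ, ← smul_eq_C_mul]
  exact sub_mem (neg_mem (diffOp_sub_mul_mem_degLT hρ hp hm))
    (Submodule.smul_mem _ _ (degLT_mono (by omega) hm))

theorem lowerOp_mem_invariantsLE [D.IsRigid] (hρ : ρ ∈ D.V0) (d : ℕ) (hp : p ∈ D.invariantsLE m) :
    D.lowerOp ρ d p ∈ D.invariantsLE m :=
  ⟨lowerOp_mem_invariants hρ d hp.1, degLT_mono (by omega) (lowerOp_mem_degLT hρ d hp.1 hp.2)⟩

theorem eval_lowerOp_add_toV [D.IsRigid] (hρ : ρ ∈ D.V0) (d : ℕ) (hp : p ∈ D.invariants)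
    (hμ : μ ∈ LamPlus) :
    eval (ρ + toV μ) D.weylDenom * eval (ρ + toV μ) (D.lowerOp ρ d p) =
      eval (ρ + toV μ) D.weylDenom * (((pairZ D.ell μ : ℂ) - d) * eval (ρ + toV μ) p) -
        ∑ η ∈ D.Λ₁ with μ - η ∈ LamPlus,
          eval (ρ + toV μ) (D.numer ρ η) * eval (ρ + toV (μ - η)) p := by
  rw [← eval_clearedOp_add_toV hρ hμ, ← weylDenom_mul_diffOp hρ hp, lowerOp]
  simp only [map_mul, map_sub, eval_linForm, eval_C, evalC_add_right, evalC_toV]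
  ring

/-- On the points of level `d` the factor `ℓ(μ) - d` vanishes, on the remaining ones `q` does. -/
theorem lowerOp_eq_zero [D.IsRigid] (hρ : ρ ∈ D.V0) (hq : q ∈ D.invariantsLE d)
    (hinj : Function.Injective (D.latticeEval ρ d))
    (hJ : ∀ μ ∈ D.latticePoints d, eval (ρ + toV μ) D.weylDenom ≠ 0)
    (hv : ∀ μ ∈ LamPlus, pairZ D.ell μ < d → eval (ρ + toV μ) q = 0) :
    D.lowerOp ρ d q = 0 := by
  refine latticeEval_injective_iff.1 hinj _ (lowerOp_mem_invariantsLE hρ d hq) fun μ hμ => ?_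
  obtain ⟨hμ0, hμd⟩ := mem_latticePoints.1 hμ
  refine (mul_eq_zero.1 ?_).resolve_left (hJ μ hμ)
  rw [eval_lowerOp_add_toV hρ d hq.1 hμ0, Finset.sum_eq_zero, sub_zero]
  · rcases hμd.lt_or_eq with hlt | heq
    · rw [hv μ hμ0 hlt, mul_zero, mul_zero]
    · rw [heq, Int.cast_natCast, sub_self, zero_mul, mul_zero]
  · intro η hη
    obtain ⟨hη, hsub⟩ := Finset.mem_filter.1 hη
    rw [hv _ hsub (by rw [pairZ_sub_right, pairZ_ell_of_mem_Λ₁ hη]; omega), mul_zero]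

theorem exists_eval_eq_of_injective [D.IsInterpolable]
    (hinj : Function.Injective (D.latticeEval ρ (d - 1))) (f : (ι → ℤ) → ℂ) :
    ∃ q ∈ D.invariants, q ∈ degLT ι ℂ d ∧
      ∀ μ ∈ LamPlus, pairZ D.ell μ < d → eval (ρ + toV μ) q = f μ := by
  rcases d.eq_zero_or_pos with rfl | hd
  · exact ⟨0, zero_mem _, zero_mem _,
      fun μ hμ hlt => absurd (pairZ_ell_nonneg hμ) (by simpa using hlt)⟩
  · obtain ⟨q, hq, hv⟩ :=
      latticeEval_surjective_iff.1 (latticeEval_surjective_of_injective hinj) f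
    rw [invariantsLE, Nat.sub_add_cancel hd] at hq
    exact ⟨q, hq.1, hq.2, fun μ hμ hlt => hv μ (mem_latticePoints.2 ⟨hμ, by omega⟩)⟩

theorem lowerOp_mem_degLT_of_injective [D.IsInterpolable] (hρ : ρ ∈ D.V0)
    (hd : Function.Injective (D.latticeEval ρ d))
    (hd' : Function.Injective (D.latticeEval ρ (d - 1)))
    (hJ : ∀ μ ∈ D.latticePoints d, eval (ρ + toV μ) D.weylDenom ≠ 0)
    (hp : p ∈ D.invariantsLE d) : D.lowerOp ρ d p ∈ degLT ι ℂ d := by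
  obtain ⟨q, hq, hdeg, hv⟩ := exists_eval_eq_of_injective hd' fun μ => eval (ρ + toV μ) p
  have hzero := lowerOp_eq_zero hρ (sub_mem hp ⟨hq, degLT_mono d.le_succ hdeg⟩) hd hJ
    fun μ hμ hlt => by rw [map_sub, hv μ hμ hlt, sub_self]
  rw [lowerOp_sub hρ d hp.1 hq, sub_eq_zero] at hzero
  rw [hzero]
  rcases d.eq_zero_or_pos with rfl | hpos
  · have hlower := lowerOp_sub hρ 0 hq hq
    rw [sub_self, sub_self] at hlower
    rw [mem_degLT_zero.1 hdeg, hlower]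
    exact zero_mem _
  · exact degLT_mono (by omega) (lowerOp_mem_degLT hρ d hq hdeg)

/-- The leading terms of `L p - p * L 1` do not depend on `ρ`, so it suffices to treat one `ρ`; a
generic `ρ' + t • 1` admits interpolation. -/
theorem lowerOp_mem_degLT_self [h : D.IsInterpolable] (hρ : ρ ∈ D.V0)
    (hp : p ∈ D.invariantsLE d) : D.lowerOp ρ d p ∈ degLT ι ℂ d := by
  obtain ⟨ρ', hρ', hbij⟩ := h.exists_latticeEval_bijective
  have hJ : ∀ᶠ t in nhdsWithin (0 : ℂ) {0}ᶜ, ∀ μ ∈ D.latticePoints d,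
      eval (ρ' + toV μ + t • (1 : ι → ℂ)) D.weylDenom ≠ 0 :=
    (Filter.eventually_all_finset _).2 fun μ _ =>
      (eventually_eval_weylDenom_ne_zero _).filter_mono (nhdsNE_le_cofinite 0)
  obtain ⟨t, ht, hd, hd'⟩ := (hJ.and (((eventually_latticeEval_injective (hbij d)).and
    (eventually_latticeEval_injective (hbij (d - 1)))).filter_mono nhdsWithin_le_nhds)).exists
  have hσ : ρ' + t • (1 : ι → ℂ) ∈ D.V0 := add_smul_one_mem_V0 hρ' t
  have hmain := lowerOp_mem_degLT_of_injective hσ hd hd'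
    (fun μ hμ => by rw [add_right_comm]; exact ht μ hμ) hp
  have hdiff := diffOp_sub_diffOp_mem_degLT hρ hσ hp.1 hp.2
  rw [lowerOp_eq hσ] at hmain
  convert sub_mem hmain hdiff using 1
  rw [lowerOp_eq hρ]
  ring

end Data

/-! ### First order identities -/

theorem derivation_eq_zero_of_mem_of_coeff_prod {A : Type*} [CommRing A] [IsDomain A]
    [Algebra ℂ A] (M : Derivation ℂ A A) {S : Finset A} {x : A} (hx : x ∈ S)
    (h : ∀ k, M ((∏ y ∈ S, (Polynomial.X - Polynomial.C y)).coeff k) = 0) : M x = 0 := by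
  set f : Polynomial A := ∏ y ∈ S, (Polynomial.X - Polynomial.C y)
  have hfactor : f = (Polynomial.X - Polynomial.C x) *
      ∏ y ∈ S.erase x, (Polynomial.X - Polynomial.C y) := (Finset.mul_prod_erase S _ hx).symm
  have hroot : f.eval x = 0 := by simp [hfactor]
  have hderiv : f.derivative.eval x = ∏ y ∈ S.erase x, (x - y) := by
    simp [hfactor, Polynomial.derivative_mul, Polynomial.eval_prod]
  have hcoeff : M.mapCoeffs f = 0 := by
    ext k
    exact h k
  have happly := M.apply_eval_eq x f
  rw [hroot, hderiv, hcoeff, map_zero, map_zero, zero_add, smul_eq_mul, eq_comm, mul_eq_zero,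
    Finset.prod_eq_zero_iff] at happly
  refine happly.resolve_left ?_
  rintro ⟨y, hy, hxy⟩
  exact Finset.ne_of_mem_erase hy (sub_eq_zero.1 hxy).symm

theorem compAct_compAct (v w : LatticeAut ι) (p : MvPolynomial ι ℂ) :
    compAct v (compAct w p) = compAct (v * w) p := by
  refine MvPolynomial.funext fun z => ?_
  rw [eval_compAct, eval_compAct, eval_compAct, actV_actV, mul_inv_rev]

namespace Data

variable {D : Data ι} {p : MvPolynomial ι ℂ} {η : ι → ℤ} {d : ℕ}

theorem mem_invariants_iff_compAct : p ∈ D.invariants ↔ ∀ w ∈ D.W, compAct w p = p := by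
  refine ⟨fun hp w hw => MvPolynomial.funext fun z => ?_, fun h w hw z => ?_⟩
  · rw [eval_compAct, eval_actV hp (D.W.inv_mem hw)]
  · rw [← inv_inv w, ← eval_compAct, h _ (D.W.inv_mem hw)]

/-- The sum of the `W`-translates of a polynomial, with multiplicities. -/
def orbitSum (D : Data ι) : MvPolynomial ι ℂ →ₗ[ℂ] MvPolynomial ι ℂ :=
  ∑ w ∈ D.weylFinset, (compAct w).toLinearMap

theorem orbitSum_apply (p : MvPolynomial ι ℂ) :
    D.orbitSum p = ∑ w ∈ D.weylFinset, compAct w p := by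
  simp [orbitSum]

theorem orbitSum_mem_invariants (p : MvPolynomial ι ℂ) : D.orbitSum p ∈ D.invariants := by
  refine mem_invariants_iff_compAct.2 fun v hv => ?_
  simp only [orbitSum_apply, map_sum, compAct_compAct]
  refine Finset.sum_nbij' (v * ·) (v⁻¹ * ·) (fun w hw => ?_) (fun w hw => ?_) (by simp) (by simp)
    fun _ _ => rfl
  · exact mem_weylFinset.2 (D.W.mul_mem hv (mem_weylFinset.1 hw))
  · exact mem_weylFinset.2 (D.W.mul_mem (D.W.inv_mem hv) (mem_weylFinset.1 hw))

theorem orbitSum_isHomogeneous (hp : p.IsHomogeneous d) : (D.orbitSum p).IsHomogeneous d := by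
  rw [orbitSum_apply]
  exact IsHomogeneous.sum _ _ _ fun w _ => compAct_isHomogeneous w hp

theorem orbitSum_of_mem_invariants (hp : p ∈ D.invariants) :
    D.orbitSum p = D.weylFinset.card • p := by
  rw [orbitSum_apply, Finset.sum_congr rfl fun w hw =>
    mem_invariants_iff_compAct.1 hp w (mem_weylFinset.1 hw), Finset.sum_const]

theorem apply_eq_zero_of_isHomogeneous {M : Type*} [AddCommGroup M] [Module ℂ M]
    (f : MvPolynomial ι ℂ →ₗ[ℂ] M)
    (hf : ∀ d, ∀ q ∈ D.invariants, q.IsHomogeneous d → f q = 0) (hp : p ∈ D.invariants) :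
    f p = 0 := by
  have hzero : f ∘ₗ D.orbitSum = 0 := MvPolynomial.linearMap_ext fun n => LinearMap.ext fun c =>
    hf _ _ (orbitSum_mem_invariants _) (orbitSum_isHomogeneous (isHomogeneous_monomial c rfl))
  have hsum := LinearMap.congr_fun hzero p
  rw [LinearMap.comp_apply, orbitSum_of_mem_invariants hp, map_nsmul, LinearMap.zero_apply] at hsum
  refine (smul_eq_zero.1 ((Nat.cast_smul_eq_nsmul ℂ _ _).trans hsum)).resolve_left ?_
  exact Nat.cast_ne_zero.2 (Finset.card_ne_zero_of_mem (mem_weylFinset.2 D.W.one_mem))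

/-- Each polynomial `p` is a root of the separable polynomial `∏ (T - y)`, where `y` runs over the
orbit of `p`; its coefficients are invariant. -/
theorem derivation_eq_zero_of_invariants
    (M : Derivation ℂ (MvPolynomial ι ℂ) (MvPolynomial ι ℂ)) (hM : ∀ q ∈ D.invariants, M q = 0)
    (p : MvPolynomial ι ℂ) : M p = 0 := by
  let orbit := D.weylFinset.image fun w => compAct w p
  have hp : p ∈ orbit := Finset.mem_image.2
    ⟨1, mem_weylFinset.2 D.W.one_mem, MvPolynomial.funext fun z => by simp [actV_one]⟩
  refine derivation_eq_zero_of_mem_of_coeff_prod M hp fun k => hM _ ?_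
  refine mem_invariants_iff_compAct.2 fun v hv => ?_
  have hmem (u) (hu : u ∈ D.W) : ∀ y ∈ orbit, compAct u y ∈ orbit := fun y hy => by
    obtain ⟨w, hw, rfl⟩ := Finset.mem_image.1 hy
    exact Finset.mem_image.2 ⟨u * w, mem_weylFinset.2 (D.W.mul_mem hu (mem_weylFinset.1 hw)),
      (compAct_compAct u w p).symm⟩
  have hcancel (u : LatticeAut ι) (y : MvPolynomial ι ℂ) : compAct u⁻¹ (compAct u y) = y := by
    rw [compAct_compAct, inv_mul_cancel]
    exact MvPolynomial.funext fun z => by simp [actV_one]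
  have hmap : (∏ y ∈ orbit, (Polynomial.X - Polynomial.C y)).map (compAct v).toRingHom =
      ∏ y ∈ orbit, (Polynomial.X - Polynomial.C y) := by
    rw [Polynomial.map_prod]
    refine Finset.prod_nbij' (compAct v) (compAct v⁻¹) (hmem v hv) (hmem _ (D.W.inv_mem hv))
      (fun y _ => hcancel v y) (fun y _ => ?_) fun y _ => ?_
    · simpa using hcancel v⁻¹ y
    · simp
  conv_rhs => rw [← hmap]
  rw [Polynomial.coeff_map]
  rfl

theorem numer_zero_isHomogeneous [D.IsRigid] (hη : η ∈ D.Λ₁) :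
    (D.numer 0 η).IsHomogeneous (D.posRoots.card + 1) := by
  have hunit := IsHomogeneous.prod (D.unitWeights η) (fun ω => linForm ω - C (D.multParam 0 ω))
    (fun _ => 1) fun ω hω => by
      rw [← zero_smul ℂ (1 : ι → ℂ), multParam_smul_one 0 (Finset.mem_of_mem_filter ω hω), C_0,
        sub_zero]
      exact linForm_isHomogeneous ω
  have hroots := IsHomogeneous.prod D.posRoots
    (fun β => if pairZ β η = 0 then linForm β else C (pairZ β η : ℂ))
    (fun β => if pairZ β η = 0 then 1 else 0) fun β _ => by
      split_ifs
      · exact linForm_isHomogeneous β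
      · exact isHomogeneous_C _ _
  have hdeg : ∑ _ω ∈ D.unitWeights η, 1 + ∑ β ∈ D.posRoots, (if pairZ β η = 0 then 1 else 0) =
      D.posRoots.card + 1 := by
    rw [← Finset.card_eq_sum_ones, ← Finset.card_filter, card_unitWeights hη,
      ← Finset.card_filter_add_card_filter_not (s := D.posRoots) fun β => pairZ β η = 0,
      activeRoots]
    simp only [ne_eq]
    ring
  exact hdeg ▸ hunit.mul hroots

/-- The derivation `∑ η, g_η ∂_η - J * E`, where `g_η` is the numerator attached to `ρ = 0` and `E`
the Euler derivation. -/
def firstOrderDefect (D : Data ι) : Derivation ℂ (MvPolynomial ι ℂ) (MvPolynomial ι ℂ) :=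
  ∑ η ∈ D.Λ₁, D.numer 0 η • dirDeriv (toV η) - D.weylDenom • mkDerivation ℂ X

theorem firstOrderDefect_apply (p : MvPolynomial ι ℂ) : D.firstOrderDefect p =
    ∑ η ∈ D.Λ₁, D.numer 0 η * dirDeriv (toV η) p - D.weylDenom * mkDerivation ℂ X p := by
  rw [firstOrderDefect, ← Derivation.coeFnAddMonoidHom_apply, map_sub, map_sum, Pi.sub_apply,
    Finset.sum_apply]
  rfl

theorem mkDerivation_X_of_isHomogeneous {σ : Type*} [Finite σ] {p : MvPolynomial σ ℂ}
    (hp : p.IsHomogeneous d) : mkDerivation ℂ X p = d • p := by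
  have := Fintype.ofFinite σ
  rw [derivation_apply_eq_sum, ← hp.sum_X_mul_pderiv]
  simp only [mkDerivation_X]

theorem firstOrderDefect_mem_degLT [D.IsInterpolable] (hp : p ∈ D.invariants)
    (hd : p.IsHomogeneous (d + 1)) :
    D.firstOrderDefect p ∈ degLT ι ℂ (D.posRoots.card + (d + 1)) := by
  have hlower := lowerOp_mem_degLT_self D.V0.zero_mem ⟨hp, mem_degLT_of_isHomogeneous hd⟩
  have hexpand : D.firstOrderDefect p =
      ∑ η ∈ D.Λ₁, D.numer 0 η * (translate (toV η) p - p + dirDeriv (toV η) p) +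
        D.weylDenom * D.lowerOp 0 (d + 1) p := by
    rw [lowerOp_eq D.V0.zero_mem, mul_sub, mul_neg, weylDenom_mul_diffOp_sub D.V0.zero_mem hp,
      firstOrderDefect_apply, mkDerivation_X_of_isHomogeneous hd]
    simp only [mul_add, Finset.sum_add_distrib, nsmul_eq_mul, map_natCast]
    ring
  rw [hexpand]
  refine add_mem (sum_mem fun η hη => ?_) ?_
  · refine degLT_mono (by omega) (mul_mem_degLT (numer_mem_degLT 0 hη)
      (translate_sub_add_dirDeriv_mem_degLT _ (mem_degLT_of_isHomogeneous hd)))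
  · exact mul_mem_degLT (mem_degLT_of_isHomogeneous weylDenom_isHomogeneous) hlower

theorem firstOrderDefect_isHomogeneous [D.IsRigid] (hd : p.IsHomogeneous (d + 1)) :
    (D.firstOrderDefect p).IsHomogeneous (D.posRoots.card + (d + 1)) := by
  rw [firstOrderDefect_apply, mkDerivation_X_of_isHomogeneous hd]
  refine (IsHomogeneous.sum _ _ _ fun η hη => ?_).sub ?_
  · rw [← add_assoc, add_right_comm, derivation_apply_eq_sum]
    refine (numer_zero_isHomogeneous hη).mul (IsHomogeneous.sum _ _ _ fun i _ => ?_)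
    rw [dirDeriv_X]
    exact hd.pderiv.C_mul _
  · rw [nsmul_eq_mul, ← map_natCast C]
    exact weylDenom_isHomogeneous.mul (hd.C_mul _)

theorem firstOrderDefect_eq_zero [D.IsInterpolable] : D.firstOrderDefect = 0 := by
  refine Derivation.ext fun p => derivation_eq_zero_of_invariants (D := D) _ ?_ p
  refine fun q hq => apply_eq_zero_of_isHomogeneous D.firstOrderDefect.toLinearMap
    (fun d r hr hd => ?_) hq
  rcases d with - | d
  · rw [totalDegree_eq_zero_iff_eq_C.1 (Nat.le_zero.1 hd.totalDegree_le)]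
    exact D.firstOrderDefect.map_algebraMap _
  · exact eq_zero_of_isHomogeneous_of_mem_degLT (firstOrderDefect_isHomogeneous hd)
      (firstOrderDefect_mem_degLT hr hd)

theorem sum_apply_smul_numer_zero [D.IsInterpolable] (i : ι) :
    ∑ η ∈ D.Λ₁, (η i : ℂ) • D.numer 0 η = D.weylDenom * X i := by
  have h := firstOrderDefect_apply (D := D) (X i)
  rw [firstOrderDefect_eq_zero, Derivation.zero_apply, eq_comm, sub_eq_zero, mkDerivation_X] at h
  rw [← h]
  exact Finset.sum_congr rfl fun η _ => by rw [dirDeriv_X, smul_eq_C_mul, mul_comm]; rfl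

theorem numer_one (η : ι → ℤ) : D.numer 1 η = translate (toV η) (D.numer 0 η) := by
  refine MvPolynomial.funext fun z => ?_
  simp only [eval_translate, eval_numer, evalC_sub_right, evalC_toV]
  refine congrArg₂ _ (Finset.prod_congr rfl fun ω hω => ?_) (Finset.prod_congr rfl fun β _ => ?_)
  · obtain ⟨hω, hpair⟩ := Finset.mem_filter.1 hω
    rw [← one_smul ℂ (1 : ι → ℂ), multParam_smul_one 1 hω, ← zero_smul ℂ (1 : ι → ℂ),
      multParam_smul_one 0 hω, hpair, Int.cast_one, sub_zero]
  · split_ifs with h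
    · rw [h, Int.cast_zero, sub_zero]
    · rfl

theorem sum_dirDeriv_numer_zero [D.IsInterpolable] :
    ∑ η ∈ D.Λ₁, dirDeriv (toV η) (D.numer 0 η) =
      (Fintype.card ι + D.posRoots.card) • D.weylDenom := by
  have hswap : ∑ η ∈ D.Λ₁, dirDeriv (toV η) (D.numer 0 η) =
      ∑ i, pderiv i (D.weylDenom * X i) := by
    rw [Finset.sum_congr rfl fun η _ => derivation_apply_eq_sum (dirDeriv (toV η)) _,
      Finset.sum_comm]
    refine Finset.sum_congr rfl fun i _ => ?_
    rw [← sum_apply_smul_numer_zero, map_sum]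
    refine Finset.sum_congr rfl fun η _ => ?_
    rw [dirDeriv_X, Derivation.map_smul, smul_eq_C_mul]
    rfl
  rw [hswap, add_smul, ← weylDenom_isHomogeneous.sum_X_mul_pderiv]
  simp [Derivation.leibniz, Finset.sum_add_distrib]

/-- Compare `∑ η, g_η` for `ρ = 0` and `ρ = 1` up to second order. -/
theorem height_ell [D.IsInterpolable] :
    height D.ell = Fintype.card ι + D.posRoots.card := by
  have hsum0 : ∑ η ∈ D.Λ₁, D.numer 0 η = D.weylDenom * linForm D.ell := by
    rw [← clearedOp_one, ← weylDenom_mul_diffOp D.V0.zero_mem (one_mem _),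
      diffOp_one D.V0.zero_mem, evalC_zero_right, C_0, sub_zero]
  have hsum1 : ∑ η ∈ D.Λ₁, D.numer 1 η =
      D.weylDenom * (linForm D.ell - C (height D.ell : ℂ)) := by
    rw [← clearedOp_one, ← weylDenom_mul_diffOp one_mem_V0 (one_mem _), diffOp_one one_mem_V0,
      evalC_one_right]
  have htaylor : ∑ η ∈ D.Λ₁, (translate (toV η) (D.numer 0 η) - D.numer 0 η +
      dirDeriv (toV η) (D.numer 0 η)) ∈ degLT ι ℂ D.posRoots.card :=
    sum_mem fun η hη => degLT_mono (Nat.add_sub_cancel _ 2).le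
      (translate_sub_add_dirDeriv_mem_degLT _ (numer_mem_degLT 0 hη))
  have heq : ∑ η ∈ D.Λ₁, (translate (toV η) (D.numer 0 η) - D.numer 0 η +
      dirDeriv (toV η) (D.numer 0 η)) =
        C ((Fintype.card ι + D.posRoots.card : ℂ) - height D.ell) * D.weylDenom := by
    simp only [← numer_one, Finset.sum_add_distrib, Finset.sum_sub_distrib, hsum0, hsum1,
      sum_dirDeriv_numer_zero, nsmul_eq_mul, map_sub, map_add, map_natCast]
    push_cast
    ring
  rw [heq] at htaylor
  have hzero := eq_zero_of_isHomogeneous_of_mem_degLT (weylDenom_isHomogeneous.C_mul _) htaylor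
  have hcoef := C_eq_zero.1 ((mul_eq_zero.1 hzero).resolve_right D.weylDenom_ne_zero)
  exact_mod_cast (sub_eq_zero.1 hcoef).symm

end Data

/-! ### Roots and weights of a given height -/

section Totient

variable {α β : Type*} {s : Finset α} {t : Finset β} {f : α → ℤ} {g : β → ℤ}

theorem sum_eq_sum_totient_mul_card {B : ℕ} (hpos : ∀ a ∈ s, 0 < f a) (hB : ∀ a ∈ s, f a ≤ B) :
    ∑ a ∈ s, f a =
      ∑ N ∈ Finset.range (B + 1), (N.totient : ℤ) * (s.filter fun a => (N : ℤ) ∣ f a).card := by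
  have htotient : ∀ a ∈ s,
      f a = ∑ N ∈ Finset.range (B + 1), if (N : ℤ) ∣ f a then (N.totient : ℤ) else 0 := by
    intro a ha
    obtain ⟨x, hx⟩ := Int.eq_ofNat_of_zero_le (hpos a ha).le
    have hpos := hpos a ha
    have hB := hB a ha
    rw [hx] at hpos hB ⊢
    have hdivisors : (Finset.range (B + 1)).filter (· ∣ x) = x.divisors := by
      ext N
      rw [Finset.mem_filter, Finset.mem_range, Nat.mem_divisors]
      refine ⟨fun h => ⟨h.2, by omega⟩, fun h => ⟨?_, h.1⟩⟩
      have := Nat.le_of_dvd (by omega) h.1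
      omega
    simp only [Int.natCast_dvd_natCast]
    rw [← Finset.sum_filter, hdivisors]
    exact_mod_cast (Nat.sum_totient x).symm
  rw [Finset.sum_congr rfl htotient, Finset.sum_comm]
  refine Finset.sum_congr rfl fun N _ => ?_
  rw [← Finset.sum_filter, Finset.sum_const, nsmul_eq_mul, mul_comm]

theorem sum_le_sum_of_card_filter_dvd_le (hf : ∀ a ∈ s, 0 < f a) (hg : ∀ b ∈ t, 0 < g b)
    (h : ∀ N : ℕ, (s.filter fun a => (N : ℤ) ∣ f a).card ≤
      (t.filter fun b => (N : ℤ) ∣ g b).card) :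
    ∑ a ∈ s, f a ≤ ∑ b ∈ t, g b := by
  have hf₀ := Finset.sum_nonneg fun a ha => (hf a ha).le
  have hg₀ := Finset.sum_nonneg fun b hb => (hg b hb).le
  obtain ⟨B, hB⟩ := Int.eq_ofNat_of_zero_le (add_nonneg hf₀ hg₀)
  have hfB : ∀ a ∈ s, f a ≤ B := fun a ha =>
    hB ▸ le_add_of_le_of_nonneg (Finset.single_le_sum (fun a ha => (hf a ha).le) ha) hg₀
  have hgB : ∀ b ∈ t, g b ≤ B := fun b hb =>
    hB ▸ le_add_of_nonneg_of_le hf₀ (Finset.single_le_sum (fun b hb => (hg b hb).le) hb)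
  rw [sum_eq_sum_totient_mul_card hf hfB, sum_eq_sum_totient_mul_card hg hgB]
  exact Finset.sum_le_sum fun N _ =>
    mul_le_mul_of_nonneg_left (Int.ofNat_le.2 (h N)) (Int.natCast_nonneg _)

end Totient

theorem height_smul {σ : Type*} [Fintype σ] (n : ℤ) (γ : σ → ℤ) :
    height (n • γ) = n * height γ := by
  simp only [height, Pi.smul_apply, smul_eq_mul, Finset.mul_sum]

theorem height_sum {σ : Type*} [Fintype σ] (s : Finset (σ → ℤ)) :
    height (∑ γ ∈ s, γ) = ∑ γ ∈ s, height γ := by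
  simp only [height, Finset.sum_apply]
  exact Finset.sum_comm

/-- The group of lattice automorphisms preserving all heights modulo `N`. -/
def heightCongruence (σ : Type*) [Fintype σ] (N : ℕ) : Subgroup (LatticeAut σ) where
  carrier := {w | ∀ γ, (N : ℤ) ∣ height (w γ) - height γ}
  one_mem' γ := by simp
  mul_mem' {v w} hv hw γ := by simpa using dvd_add (hv (w γ)) (hw γ)
  inv_mem' {w} hw γ := by simpa [apply_inv_self, dvd_sub_comm] using hw (w⁻¹ γ)

theorem mem_heightCongruence {σ : Type*} [Fintype σ] {N : ℕ} {w : LatticeAut σ} :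
    w ∈ heightCongruence σ N ↔ ∀ γ, (N : ℤ) ∣ height (w γ) - height γ :=
  Iff.rfl

theorem dvd_height_absRoot_apply {σ : Type*} [Fintype σ] {N : ℕ} {w : LatticeAut σ}
    (hw : w ∈ heightCongruence σ N) {β : σ → ℤ} (hβ : (N : ℤ) ∣ height β) :
    (N : ℤ) ∣ height (absRoot (w β)) := by
  have hwβ := (dvd_sub_left hβ).1 (mem_heightCongruence.1 hw β)
  rcases absRoot_rootSign_cases (w β) with ⟨h, -⟩ | ⟨h, -⟩ <;> rw [h]
  · exact hwβ
  · rwa [height_neg, dvd_neg]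

namespace Data

variable {D : Data ι} {ω : ι → ℤ}

/-- The positive elements of `Φ` which do not belong to the basis `Σ`. -/
def nonsimpleΦpos (D : Data ι) : Finset (ι → ℤ) := D.Φpos.filter fun ω => ∀ i, ω ≠ e i

theorem mem_nonsimpleΦpos :
    ω ∈ D.nonsimpleΦpos ↔ (ω ∈ D.Φ ∧ ∀ i, 0 ≤ ω i) ∧ ∀ i, ω ≠ e i := by
  rw [nonsimpleΦpos, Φpos, Finset.mem_filter, Finset.mem_filter]

theorem height_sub_one_pos (hω : ω ∈ D.nonsimpleΦpos) : 0 < height ω - 1 := by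
  obtain ⟨⟨hωΦ, hnonneg⟩, hne⟩ := mem_nonsimpleΦpos.1 hω
  have hω0 : ω ≠ 0 := by
    obtain ⟨w, _, i, rfl⟩ := (D.Φ_spec ω).1 hωΦ
    exact w.map_ne_zero_iff.2 fun h => one_ne_zero ((e_self i).symm.trans (congrFun h i))
  have hone : height ω ≠ 1 := fun h =>
    let ⟨i, hi⟩ := exists_eq_e_of_height_eq_one hnonneg h
    hne i hi
  have := height_pos hnonneg hω0
  omega

theorem exists_apply_eq_of_mem_heightCongruence [D.IsRigid] {N : ℕ} {w : LatticeAut ι}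
    (hw : w ∈ D.W) (hwN : w ∈ heightCongruence ι N) (h1 : w ≠ 1) :
    ∃ ω ∈ D.nonsimpleΦpos, (N : ℤ) ∣ height ω - 1 ∧ ∃ l, w⁻¹ ω = e l := by
  obtain ⟨l, hnonneg, hne⟩ := exists_apply_e_nonneg_not_simple hw h1
  refine ⟨w (e l), mem_nonsimpleΦpos.2 ⟨⟨apply_mem_Φ hw (e_mem_Φ l), hnonneg⟩, hne⟩, ?_, l,
    inv_apply_self _ _⟩
  simpa [height_e] using mem_heightCongruence.1 hwN (e l)

/-- Evaluate the alternating sum of `∏ (ω - 1)` over the subgroup preserving heights modulo `N` at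
the point `1`: by rigidity of `W`, only the identity contributes. -/
theorem card_posRoots_dvd_height_le [D.IsRigid] (N : ℕ) :
    (D.posRoots.filter fun β => (N : ℤ) ∣ height β).card ≤
      (D.nonsimpleΦpos.filter fun ω => (N : ℤ) ∣ height ω - 1).card := by
  let F := D.nonsimpleΦpos.filter fun ω => (N : ℤ) ∣ height ω - 1
  let h : MvPolynomial ι ℂ := ∏ ω ∈ F, (linForm ω - C 1)
  have hdeg : h.totalDegree ≤ F.card :=
    mem_degLT_succ.1 (prod_mem_degLT fun ω _ => linForm_sub_C_mem_degLT ω 1)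
  have heval (w : LatticeAut ι) : eval (actV w⁻¹ 1) h = ∏ ω ∈ F, ((height (w ω) : ℂ) - 1) := by
    simp [h]
  refine (card_le_totalDegree_of_altSum_ne_zero (Finset.filter_subset _ _)
    (G := D.W ⊓ heightCongruence ι N) (h := h) (fun w hw β hβ => ?_)
    (fun β hβ s hs c hsc => ⟨hs, fun γ => ?_⟩) fun hzero => ?_).trans hdeg
  · obtain ⟨hβT, hβN⟩ := Finset.mem_filter.1 hβ
    exact Finset.mem_filter.2
      ⟨absRoot_apply_mem_posRoots hw.1 hβT, dvd_height_absRoot_apply hw.2 hβN⟩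
  · rw [hsc.apply_eq, height_sub, sub_sub_cancel_left, height_smul, dvd_neg]
    exact (Finset.mem_filter.1 hβ).2.mul_left _
  · have hvanish := congrArg (eval (1 : ι → ℂ)) hzero
    rw [eval_altSum, map_zero, Finset.sum_eq_single 1, heval, mul_eq_zero,
      Finset.prod_eq_zero_iff] at hvanish
    · obtain hsign | ⟨ω, hω, hω0⟩ := hvanish
      · exact relSign_ne_zero _ _ hsign
      · exact (height_sub_one_pos (Finset.mem_filter.1 hω).1).ne' (by exact_mod_cast hω0)
    · intro w hw hw1
      obtain ⟨hwW, -, hwN⟩ := Finset.mem_filter.1 hw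
      obtain ⟨ω, hω, hωN, l, hl⟩ := exists_apply_eq_of_mem_heightCongruence
        (D.W.inv_mem (mem_weylFinset.1 hwW)) (inv_mem hwN) (inv_ne_one.2 hw1)
      rw [inv_inv] at hl
      rw [heval, Finset.prod_eq_zero (Finset.mem_filter.2 ⟨hω, hωN⟩), mul_zero]
      rw [hl, height_e, Int.cast_one, sub_self]
    · exact fun h => absurd
        (Finset.mem_filter.2 ⟨mem_weylFinset.2 D.W.one_mem, one_mem _⟩) h

theorem sum_height_posRoots_le [D.IsRigid] :
    ∑ β ∈ D.posRoots, height β ≤ ∑ ω ∈ D.nonsimpleΦpos, (height ω - 1) :=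
  sum_le_sum_of_card_filter_dvd_le (fun _ => height_pos_of_mem_posRoots)
    (fun _ => height_sub_one_pos) card_posRoots_dvd_height_le

theorem sum_height_Φpos :
    ∑ ω ∈ D.Φpos, height ω = ∑ ω ∈ D.nonsimpleΦpos, height ω + Fintype.card ι := by
  have hsimple : D.Φpos.filter (fun ω => ¬ ∀ i, ω ≠ e i) = Finset.univ.image e := by
    ext ω
    rw [Φpos, Finset.mem_filter, Finset.mem_filter, Finset.mem_image]
    push Not
    refine ⟨fun ⟨_, i, hi⟩ => ⟨i, Finset.mem_univ i, hi.symm⟩, ?_⟩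
    rintro ⟨i, _, rfl⟩
    exact ⟨⟨e_mem_Φ i, e_nonneg i⟩, i, rfl⟩
  rw [← Finset.sum_filter_add_sum_filter_not D.Φpos fun ω => ∀ i, ω ≠ e i, hsimple,
    Finset.sum_image e_injective.injOn]
  simp [nonsimpleΦpos, height_e]

theorem posRoots_eq_Δpos [D.IsInterpolable] : D.posRoots = D.Δpos := by
  have hC5 : height D.ell = ∑ ω ∈ D.Φpos, height ω - ∑ α ∈ D.Δpos, height α := by
    rw [← D.C5, height_sub, height_sum, height_sum]
    rfl
  have hcard : (D.posRoots.card : ℤ) ≤ D.nonsimpleΦpos.card := by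
    simpa using card_posRoots_dvd_height_le (D := D) 1
  have hsum := sum_height_posRoots_le (D := D)
  rw [Finset.sum_sub_distrib, Finset.sum_const, nsmul_eq_mul, mul_one] at hsum
  have hle : ∑ β ∈ D.posRoots, height β ≤ ∑ β ∈ D.Δpos, height β := by
    linarith [height_ell (D := D), sum_height_Φpos (D := D)]
  refine Finset.Subset.antisymm (fun β hβ => ?_) Δpos_subset_posRoots
  by_contra hβΔ
  exact hle.not_gt (Finset.sum_lt_sum_of_subset Δpos_subset_posRoots hβ hβΔ
    (height_pos_of_mem_posRoots hβ) fun γ hγ _ => (height_pos_of_mem_posRoots hγ).le)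

end Data

/-! ### Zeros of numerators and denominators -/

namespace Data

variable {D : Data ι} {ρ : ι → ℂ} {w : LatticeAut ι} {ω β γ η ν : ι → ℤ}

/-- The subgroup of `W` fixing both `ρ` and `ν`. -/
def commonStabilizer (D : Data ι) (ρ : ι → ℂ) (ν : ι → ℤ) : Subgroup (LatticeAut ι) where
  carrier := {w | w ∈ D.W ∧ ∀ γ, evalC (w γ) ρ = evalC γ ρ ∧ pairZ (w γ) ν = pairZ γ ν}
  one_mem' := ⟨D.W.one_mem, fun _ => ⟨rfl, rfl⟩⟩
  mul_mem' {w v} hw hv := ⟨D.W.mul_mem hw.1 hv.1, fun γ =>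
    ⟨(hw.2 (v γ)).1.trans (hv.2 γ).1, (hw.2 (v γ)).2.trans (hv.2 γ).2⟩⟩
  inv_mem' {w} hw := ⟨D.W.inv_mem hw.1, fun γ => by
    simpa only [apply_inv_self, eq_comm] using hw.2 (w⁻¹ γ)⟩

/-- The positive roots vanishing at both `ρ` and `ν`. -/
def vanishingRoots (D : Data ι) (ρ : ι → ℂ) (ν : ι → ℤ) : Finset (ι → ℤ) :=
  D.posRoots.filter fun β => evalC β ρ = 0 ∧ pairZ β ν = 0

/-- The indices of the numerator factors `ω - k_ω` of the `η`-th coefficient that vanish at both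
`ρ` and `ρ + ν`. -/
def vanishingWeights (D : Data ι) (ρ : ι → ℂ) (ν η : ι → ℤ) : Finset (ι → ℤ) :=
  (D.unitWeights η).filter fun ω => evalC ω ρ = D.multParam ρ ω ∧ pairZ ω ν = 0

theorem mem_vanishingRoots :
    β ∈ D.vanishingRoots ρ ν ↔ β ∈ D.posRoots ∧ evalC β ρ = 0 ∧ pairZ β ν = 0 :=
  Finset.mem_filter

theorem mem_vanishingWeights : ω ∈ D.vanishingWeights ρ ν η ↔
    (ω ∈ D.Φ ∧ pairZ ω η = 1) ∧ evalC ω ρ = D.multParam ρ ω ∧ pairZ ω ν = 0 := by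
  rw [vanishingWeights, unitWeights, Finset.mem_filter, Finset.mem_filter]

theorem absRoot_apply_mem_vanishingRoots [D.IsRigid] (hw : w ∈ D.commonStabilizer ρ ν)
    (hβ : β ∈ D.vanishingRoots ρ ν) : absRoot (w β) ∈ D.vanishingRoots ρ ν := by
  obtain ⟨hβ, hρ, hν⟩ := mem_vanishingRoots.1 hβ
  refine mem_vanishingRoots.2 ⟨absRoot_apply_mem_posRoots hw.1 hβ, ?_⟩
  rcases absRoot_rootSign_cases (w β) with ⟨h, -⟩ | ⟨h, -⟩ <;>
    simp [h, (hw.2 β).1, (hw.2 β).2, hρ, hν]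

theorem mem_commonStabilizer_of_isReflection {s : LatticeAut ι} {c : ι → ℤ}
    (hβ : β ∈ D.vanishingRoots ρ ν) (hs : s ∈ D.W) (h : IsReflection s β c) :
    s ∈ D.commonStabilizer ρ ν := by
  obtain ⟨-, hρ, hν⟩ := mem_vanishingRoots.1 hβ
  refine ⟨hs, fun γ => ?_⟩
  rw [h.apply_eq, evalC_sub_left, evalC_smul_left, hρ, mul_zero, sub_zero, pairZ_sub_left,
    pairZ_smul_left, hν, mul_zero, sub_zero]
  exact ⟨rfl, rfl⟩

theorem actDual_apply_nonpos (hρ : ρ ∈ D.V0) (hη : η ∈ D.Λ₁) (hw : w ∈ D.commonStabilizer ρ ν)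
    (hz : ∀ ω ∈ D.vanishingWeights ρ ν η, height (w ω) ≠ 1) {l : ι} (hl : ν l = 0) :
    actDual w η l ≤ 0 := by
  by_contra! hpos
  have hw' := inv_mem hw
  have hmem : w⁻¹ (e l) ∈ D.Φ := apply_mem_Φ hw'.1 (e_mem_Φ l)
  rw [actDual_apply] at hpos
  have hunit : pairZ (w⁻¹ (e l)) η = 1 := by
    rcases pairZ_of_mem_Φ_of_mem_Λ₁ hmem hη with h | h | h <;> omega
  refine hz _ (mem_vanishingWeights.2 ⟨⟨hmem, hunit⟩, ?_, ?_⟩) (by rw [apply_inv_self, height_e])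
  · rw [(hw'.2 _).1, evalC_e, multParam_apply_e hρ hw'.1]
  · rw [(hw'.2 _).2, pairZ_e_left, hl]

theorem not_nonneg_apply_of_pairZ_eq_one (hρ : ρ ∈ D.V0) (hν : ν ∈ LamPlus) (hη : η ∈ D.Λ₁)
    (hw : w ∈ D.commonStabilizer ρ ν)
    (hz : ∀ ω ∈ D.vanishingWeights ρ ν η, height (w ω) ≠ 1)
    (hγη : pairZ γ η = 1) (hγν : pairZ γ ν = 0) : ¬∀ i, 0 ≤ w γ i := by
  intro hpos
  have hsum : pairZ (w γ) ν = 0 := (hw.2 γ).2.trans hγν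
  have hterm : ∀ l, w γ l * ν l = 0 := fun l => (Finset.sum_eq_zero_iff_of_nonneg
    fun i _ => mul_nonneg (hpos i) (hν i)).1 hsum l (Finset.mem_univ l)
  have hnonpos : pairZ (w γ) (actDual w η) ≤ 0 := Finset.sum_nonpos fun l _ => by
    rcases mul_eq_zero.1 (hterm l) with h | h
    · rw [h, zero_mul]
    · exact mul_nonpos_of_nonneg_of_nonpos (hpos l) (actDual_apply_nonpos hρ hη hw hz h)
  rw [pairZ_actDual, inv_apply_self, hγη] at hnonpos
  omega

theorem height_apply_nonpos_of_mem_vanishingWeights (hρ : ρ ∈ D.V0) (hν : ν ∈ LamPlus)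
    (hη : η ∈ D.Λ₁) (hw : w ∈ D.commonStabilizer ρ ν)
    (hz : ∀ ω ∈ D.vanishingWeights ρ ν η, height (w ω) ≠ 1)
    (hω : ω ∈ D.vanishingWeights ρ ν η) : height (w ω) ≤ 0 := by
  obtain ⟨⟨hΦ, hωη⟩, -, hων⟩ := mem_vanishingWeights.1 hω
  have hnot := not_nonneg_apply_of_pairZ_eq_one hρ hν hη hw hz hωη hων
  exact Finset.sum_nonpos fun i _ => (D.C3 _ (apply_mem_Φ hw.1 hΦ)).resolve_left hnot i

theorem height_ne_one_of_mem_vanishingWeights (hνη : ν - η ∈ LamPlus)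
    (hω : ω ∈ D.vanishingWeights ρ ν η) : height ω ≠ 1 := by
  obtain ⟨⟨hΦ, hωη⟩, -, hων⟩ := mem_vanishingWeights.1 hω
  rcases D.C3 _ hΦ with hpos | hneg
  · have := pairZ_nonneg hpos hνη
    rw [pairZ_sub_right] at this
    omega
  · have : height ω ≤ 0 := Finset.sum_nonpos fun i _ => hneg i
    omega

theorem rootSign_apply_of_mem_vanishingRoots [D.IsRigid] (hρ : ρ ∈ D.V0) (hν : ν ∈ LamPlus)
    (hη : η ∈ D.Λ₁) (hνη : ν - η ∈ LamPlus) (hw : w ∈ D.commonStabilizer ρ ν)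
    (hz : ∀ ω ∈ D.vanishingWeights ρ ν η, height (w ω) ≠ 1)
    (hβ : β ∈ D.vanishingRoots ρ ν) (hβη : pairZ β η ≠ 0) : rootSign (w β) = 1 := by
  obtain ⟨hβ, -, hβν⟩ := mem_vanishingRoots.1 hβ
  obtain ⟨horbit, hnonneg⟩ := mem_posRoots.1 hβ
  have hle := pairZ_nonneg hnonneg hνη
  rw [pairZ_sub_right] at hle
  have hneg : pairZ (-β) η = 1 := by
    rw [pairZ_neg_left]
    rcases pairZ_of_mem_orbitRoots_of_mem_Λ₁ horbit hη with h | h | h <;> omega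
  have hnot := not_nonneg_apply_of_pairZ_eq_one hρ hν hη hw hz hneg
    (by rw [pairZ_neg_left, hβν, neg_zero])
  rcases mem_posRoots_or_neg_mem_posRoots (apply_mem_orbitRoots hw.1 horbit) with h | h
  · exact rootSign_of_mem_posRoots h
  · rw [map_neg] at hnot
    exact absurd (mem_posRoots.1 h).2 hnot

section Count

open scoped ComplexOrder

theorem rootSign_mul_height_pos [D.IsRigid] (hβ : β ∈ D.orbitRoots) :
    0 < rootSign β * (height β : ℂ) := by
  rcases mem_posRoots_or_neg_mem_posRoots hβ with h | h
  · rw [rootSign_of_mem_posRoots h, one_mul]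
    exact Int.cast_pos.2 (height_pos_of_mem_posRoots h)
  · have hsign := rootSign_of_mem_posRoots h
    rw [rootSign_neg hβ, neg_eq_iff_eq_neg] at hsign
    have hpos := height_pos_of_mem_posRoots h
    rw [height_neg] at hpos
    rw [hsign, neg_one_mul, ← Int.cast_neg]
    exact Int.cast_pos.2 hpos

/-- The polynomial whose alternating sum over `commonStabilizer ρ ν` bounds the number of vanishing
denominator factors by the number of vanishing numerator factors. -/
def testPoly (D : Data ι) (ρ : ι → ℂ) (ν η : ι → ℤ) : MvPolynomial ι ℂ :=
  (∏ ω ∈ D.vanishingWeights ρ ν η, (C 1 - linForm ω)) *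
    ∏ β ∈ (D.vanishingRoots ρ ν).filter fun β => pairZ β η = 0, linForm β

theorem totalDegree_testPoly_le : (D.testPoly ρ ν η).totalDegree ≤
    (D.vanishingWeights ρ ν η).card +
      ((D.vanishingRoots ρ ν).filter fun β => pairZ β η = 0).card := by
  refine mem_degLT_succ.1 (degLT_mono (by omega) (mul_mem_degLT
    (prod_mem_degLT fun ω _ => ?_) (prod_mem_degLT fun β _ => linForm_mem_degLT β)))
  rw [← neg_sub]
  exact neg_mem (linForm_sub_C_mem_degLT ω 1)

theorem eval_actV_testPoly (w : LatticeAut ι) :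
    eval (actV w⁻¹ 1) (D.testPoly ρ ν η) =
      (∏ ω ∈ D.vanishingWeights ρ ν η, (1 - (height (w ω) : ℂ))) *
        ∏ β ∈ (D.vanishingRoots ρ ν).filter fun β => pairZ β η = 0, (height (w β) : ℂ) := by
  simp only [testPoly, map_mul, map_prod, map_sub, eval_C, eval_linForm, evalC_actV, inv_inv,
    evalC_one_right]

theorem relSign_mul_eval_testPoly_pos [D.IsRigid] (hρ : ρ ∈ D.V0) (hν : ν ∈ LamPlus)
    (hη : η ∈ D.Λ₁) (hνη : ν - η ∈ LamPlus) (hw : w ∈ D.commonStabilizer ρ ν)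
    (hz : ∀ ω ∈ D.vanishingWeights ρ ν η, height (w ω) ≠ 1) :
    0 < relSign (D.vanishingRoots ρ ν) w * eval (actV w⁻¹ 1) (D.testPoly ρ ν η) := by
  have hsign : relSign (D.vanishingRoots ρ ν) w =
      ∏ β ∈ (D.vanishingRoots ρ ν).filter fun β => pairZ β η = 0, rootSign (w β) := by
    refine (Finset.prod_filter_of_ne fun β hβ hne => ?_).symm
    by_contra hβη
    exact hne (rootSign_apply_of_mem_vanishingRoots hρ hν hη hνη hw hz hβ hβη)
  rw [hsign, eval_actV_testPoly, mul_left_comm, ← Finset.prod_mul_distrib]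
  refine mul_pos (Finset.prod_pos fun ω hω => ?_) (Finset.prod_pos fun β hβ => ?_)
  · have := height_apply_nonpos_of_mem_vanishingWeights hρ hν hη hw hz hω
    rw [← Int.cast_one, ← Int.cast_sub]
    exact Int.cast_pos.2 (by omega)
  · obtain ⟨hβ, -⟩ := mem_vanishingRoots.1 (Finset.mem_of_mem_filter β hβ)
    exact rootSign_mul_height_pos (apply_mem_orbitRoots hw.1 (mem_posRoots.1 hβ).1)

theorem altSum_testPoly_ne_zero [D.IsRigid] (hρ : ρ ∈ D.V0) (hν : ν ∈ LamPlus) (hη : η ∈ D.Λ₁)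
    (hνη : ν - η ∈ LamPlus) :
    D.altSum (D.vanishingRoots ρ ν) (D.commonStabilizer ρ ν) (D.testPoly ρ ν η) ≠ 0 := by
  suffices h : 0 < eval 1
      (D.altSum (D.vanishingRoots ρ ν) (D.commonStabilizer ρ ν) (D.testPoly ρ ν η)) from
    fun h0 => h.ne' (by rw [h0, map_zero])
  rw [eval_altSum]
  refine Finset.sum_pos' (fun w hw => ?_) ⟨1, Finset.mem_filter.2
    ⟨mem_weylFinset.2 D.W.one_mem, one_mem _⟩, relSign_mul_eval_testPoly_pos hρ hν hη hνη
      (one_mem _) fun ω => height_ne_one_of_mem_vanishingWeights hνη⟩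
  by_cases hz : ∀ ω ∈ D.vanishingWeights ρ ν η, height (w ω) ≠ 1
  · exact (relSign_mul_eval_testPoly_pos hρ hν hη hνη (Finset.mem_filter.1 hw).2 hz).le
  · push Not at hz
    obtain ⟨ω, hω, h1⟩ := hz
    rw [eval_actV_testPoly, Finset.prod_eq_zero hω (by rw [h1, Int.cast_one, sub_self]), zero_mul,
      mul_zero]

theorem card_vanishingRoots_le_card_vanishingWeights [D.IsRigid] (hρ : ρ ∈ D.V0)
    (hν : ν ∈ LamPlus) (hη : η ∈ D.Λ₁) (hνη : ν - η ∈ LamPlus) :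
    ((D.vanishingRoots ρ ν).filter fun β => pairZ β η ≠ 0).card ≤
      (D.vanishingWeights ρ ν η).card := by
  have hle := (card_le_totalDegree_of_altSum_ne_zero (S := D.vanishingRoots ρ ν)
    (Finset.filter_subset _ _) (fun w hw β => absRoot_apply_mem_vanishingRoots hw)
    (fun β hβ s hs c => mem_commonStabilizer_of_isReflection hβ hs)
    (altSum_testPoly_ne_zero hρ hν hη hνη)).trans totalDegree_testPoly_le
  have hsplit := Finset.card_filter_add_card_filter_not (s := D.vanishingRoots ρ ν)
    fun β => pairZ β η = 0
  simp only [ne_eq]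
  omega

end Count

end Data

/-! ### Limits of the coefficients -/

section

open Filter Topology

theorem prod_add_mul_eq_pow_mul_prod {κ R : Type*} [CommSemiring R] (s : Finset κ) (a b : κ → R)
    (t : R) : ∏ i ∈ s, (a i + t * b i) =
      t ^ (s.filter fun i => a i = 0).card * ∏ i ∈ s, if a i = 0 then b i else a i + t * b i := by
  rw [← Finset.prod_const, Finset.prod_filter, ← Finset.prod_mul_distrib]
  refine Finset.prod_congr rfl fun i _ => ?_
  split_ifs with h
  · rw [h, zero_add]
  · rw [one_mul]

theorem exists_tendsto_prod_div_prod {κ K : Type*} [Field K] [TopologicalSpace K]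
    [IsTopologicalDivisionRing K] {s u : Finset κ} {a b c d : κ → K}
    (hd : ∀ j ∈ u, c j = 0 → d j ≠ 0)
    (hcard : (u.filter fun j => c j = 0).card ≤ (s.filter fun i => a i = 0).card) :
    ∃ q, Tendsto (fun t => (∏ i ∈ s, (a i + t * b i)) / ∏ j ∈ u, (c j + t * d j)) (𝓝[≠] 0)
      (𝓝 q) := by
  have hcont (r : Finset κ) (x y : κ → K) :
      Continuous fun t => ∏ i ∈ r, if x i = 0 then y i else x i + t * y i :=
    continuous_finsetProd _ fun i _ => by split_ifs <;> fun_prop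
  have hne : (∏ j ∈ u, if c j = 0 then d j else c j + 0 * d j) ≠ 0 :=
    Finset.prod_ne_zero_iff.2 fun j hj => by
      split_ifs with h
      · exact hd j hj h
      · rwa [zero_mul, add_zero]
  obtain ⟨k, hk⟩ := Nat.exists_eq_add_of_le hcard
  have hlim := (((continuous_id.pow k).mul (hcont s a b)).tendsto 0).div
    ((hcont u c d).tendsto 0) hne
  refine ⟨_, (hlim.mono_left nhdsWithin_le_nhds).congr' ?_⟩
  filter_upwards [self_mem_nhdsWithin] with t ht
  simp only [Pi.div_apply, Pi.mul_apply, Pi.pow_apply, id_eq]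
  rw [prod_add_mul_eq_pow_mul_prod s, prod_add_mul_eq_pow_mul_prod u, hk, pow_add, mul_assoc,
    mul_div_mul_left _ _ (pow_ne_zero _ ht)]

namespace Data

variable {D : Data ι} {ρ : ι → ℂ} {η ν β : ι → ℤ}

theorem Dominant.evalC_eq_zero_of_evalC_add_toV_eq_zero [D.IsInterpolable] (hdom : D.Dominant ρ)
    (hν : ν ∈ LamPlus) (hβ : β ∈ D.posRoots) (h : evalC β (ρ + toV ν) = 0) :
    evalC β ρ = 0 ∧ pairZ β ν = 0 := by
  obtain ⟨n, hn⟩ := Int.eq_ofNat_of_zero_le (pairZ_nonneg (mem_posRoots.1 hβ).2 hν)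
  rw [evalC_add_right, evalC_toV, hn] at h
  rcases n with _ | n
  · exact ⟨by simpa using h, hn⟩
  · refine absurd (eq_neg_of_add_eq_zero_left h) ?_
    simpa using hdom β (posRoots_eq_Δpos (D := D) ▸ hβ) n

theorem eval_numer_div_eval_weylDenom {z : ι → ℂ} (hz : eval z D.weylDenom ≠ 0) :
    eval z (D.numer ρ η) / eval z D.weylDenom =
      (∏ ω ∈ D.unitWeights η, (evalC ω z - D.multParam ρ ω)) /
        (∏ β ∈ D.activeRoots η, evalC β z) * ∏ β ∈ D.activeRoots η, (pairZ β η : ℂ) := by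
  have hactive : ∏ β ∈ D.activeRoots η, evalC β z ≠ 0 := by
    rw [eval_weylDenom, Finset.prod_ne_zero_iff] at hz
    exact Finset.prod_ne_zero_iff.2 fun β hβ => hz β (Finset.mem_of_mem_filter β hβ)
  rw [div_mul_eq_mul_div, div_eq_div_iff hz hactive, eval_numer_mul_prod_activeRoots]

theorem Dominant.exists_tendsto_numer_div_weylDenom [D.IsInterpolable] (hdom : D.Dominant ρ)
    (hρ : ρ ∈ D.V0) (hν : ν ∈ LamPlus) (hη : η ∈ D.Λ₁) (hνη : ν - η ∈ LamPlus) :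
    ∃ q, Tendsto (fun t : ℂ => eval (ρ + t • (1 : ι → ℂ) + toV ν) (D.numer (ρ + t • 1) η) /
      eval (ρ + t • (1 : ι → ℂ) + toV ν) D.weylDenom) (𝓝[≠] 0) (𝓝 q) := by
  have hroots : (D.activeRoots η).filter (fun β => evalC β (ρ + toV ν) = 0) ⊆
      (D.vanishingRoots ρ ν).filter fun β => pairZ β η ≠ 0 := fun β hβ => by
    obtain ⟨hactive, hzero⟩ := Finset.mem_filter.1 hβ
    obtain ⟨hpos, hne⟩ := Finset.mem_filter.1 hactive
    exact Finset.mem_filter.2 ⟨mem_vanishingRoots.2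
      ⟨hpos, hdom.evalC_eq_zero_of_evalC_add_toV_eq_zero hν hpos hzero⟩, hne⟩
  have hweights : D.vanishingWeights ρ ν η ⊆ (D.unitWeights η).filter
      fun ω => evalC ω (ρ + toV ν) - D.multParam ρ ω = 0 :=
    Finset.monotone_filter_right _ fun ω _ h => by
      rw [evalC_add_right, evalC_toV, h.1, h.2, Int.cast_zero, add_zero, sub_self]
  obtain ⟨q, hq⟩ := exists_tendsto_prod_div_prod (s := D.unitWeights η) (u := D.activeRoots η)
    (a := fun ω => evalC ω (ρ + toV ν) - D.multParam ρ ω) (b := fun ω => (height ω - 1 : ℂ))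
    (c := fun β => evalC β (ρ + toV ν)) (d := fun β => (height β : ℂ))
    (fun β hβ _ => Int.cast_ne_zero.2
      (height_pos_of_mem_posRoots (Finset.mem_of_mem_filter β hβ)).ne')
    ((Finset.card_le_card hroots).trans
      ((card_vanishingRoots_le_card_vanishingWeights hρ hν hη hνη).trans
        (Finset.card_le_card hweights)))
  refine ⟨_, (hq.mul_const (∏ β ∈ D.activeRoots η, (pairZ β η : ℂ))).congr' ?_⟩
  filter_upwards [(eventually_eval_weylDenom_ne_zero (D := D) (ρ + toV ν)).filter_mono
    (nhdsNE_le_cofinite 0)] with t hJ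
  rw [add_right_comm, eval_numer_div_eval_weylDenom hJ]
  congr 2
  · refine Finset.prod_congr rfl fun ω hω => ?_
    rw [multParam_add_smul_one hρ t (Finset.mem_of_mem_filter ω hω), evalC_add_right _ _ (t • 1),
      evalC_smul_right, evalC_one_right]
    ring
  · refine Finset.prod_congr rfl fun β _ => ?_
    rw [evalC_add_right _ _ (t • 1), evalC_smul_right, evalC_one_right]

end Data

end

/-! ### Dominant interpolation points -/

section

open Filter Topology

section Recurrence

variable {X K : Type*} [Field K] [TopologicalSpace K] [IsTopologicalRing K] {l : Filter X} {n : ℕ}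
  {c : ℕ → K} {x r : ℕ → X → K}

theorem tendsto_zero_of_recurrence (hr : ∀ i < n, Tendsto (r i) l (𝓝 0))
    (hrec : ∀ i < n, ∀ᶠ t in l, x (i + 1) t = c i * x i t - r i t)
    (h0 : Tendsto (x 0) l (𝓝 0)) {i : ℕ} (hi : i ≤ n) : Tendsto (x i) l (𝓝 0) := by
  induction i with
  | zero => exact h0
  | succ i ih =>
    have hlim := ((ih (by omega)).const_mul (c i)).sub (hr i hi)
    rw [mul_zero, sub_zero] at hlim
    exact hlim.congr' ((hrec i hi).mono fun t ht => ht.symm)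

theorem tendsto_zero_of_recurrence_of_ne_zero (hr : ∀ i < n, Tendsto (r i) l (𝓝 0))
    (hrec : ∀ i < n, ∀ᶠ t in l, x (i + 1) t = c i * x i t - r i t) (hc : ∀ i < n, c i ≠ 0)
    (hn : Tendsto (x n) l (𝓝 0)) {i : ℕ} (hi : i ≤ n) : Tendsto (x i) l (𝓝 0) := by
  induction hi using Nat.decreasingInduction with
  | self => exact hn
  | of_succ i hi ih =>
    have hlim := (ih.add (hr i hi)).const_mul (c i)⁻¹
    rw [add_zero, mul_zero] at hlim
    refine hlim.congr' ((hrec i hi).mono fun t ht => ?_)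
    rw [ht, sub_add_cancel, inv_mul_cancel_left₀ (hc i hi)]

end Recurrence

theorem eq_zero_of_eval_add_toV_eq_zero {σ : Type*} (ρ : σ → ℂ) {p : MvPolynomial σ ℂ}
    (h : ∀ ν ∈ LamPlus, eval (ρ + toV ν) p = 0) : p = 0 := by
  refine MvPolynomial.funext_set (fun i => Set.range fun n : ℕ => ρ i + (n : ℂ))
    (fun i => Set.infinite_range_of_injective fun a b hab => by simpa using hab) fun z hz => ?_
  choose n hn using fun i => hz i (Set.mem_univ i)
  have hz' : z = ρ + toV fun i => (n i : ℤ) := by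
    ext i
    simp [← hn i, toV]
  rw [hz', h _ fun i => Int.natCast_nonneg (n i), map_zero]

theorem tendsto_eval_add_smul_one {σ : Type*} (ρ : σ → ℂ) (p : MvPolynomial σ ℂ)
    (ν : σ → ℤ) :
    Tendsto (fun t : ℂ => eval (ρ + t • (1 : σ → ℂ) + toV ν) p) (𝓝[≠] 0)
      (𝓝 (eval (ρ + toV ν) p)) := by
  have hline : Continuous fun t : ℂ => ρ + t • (1 : σ → ℂ) + toV ν := by fun_prop
  have hlim := ((MvPolynomial.continuous_eval p).comp hline).tendsto 0
  simp only [Function.comp_def, zero_smul, add_zero] at hlim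
  exact hlim.mono_left nhdsWithin_le_nhds

namespace Data

variable {D : Data ι} {ρ : ι → ℂ} {d i : ℕ} {p : MvPolynomial ι ℂ} {μ ν : ι → ℤ}

theorem eval_lowerOp_add_toV_of_ne_zero [D.IsRigid] (hρ : ρ ∈ D.V0) (hp : p ∈ D.invariants)
    (hμ : μ ∈ LamPlus) (hJ : eval (ρ + toV μ) D.weylDenom ≠ 0) :
    eval (ρ + toV μ) (D.lowerOp ρ d p) =
      ((pairZ D.ell μ : ℂ) - d) * eval (ρ + toV μ) p -
        ∑ η ∈ D.Λ₁ with μ - η ∈ LamPlus,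
          eval (ρ + toV μ) (D.numer ρ η) / eval (ρ + toV μ) D.weylDenom *
            eval (ρ + toV (μ - η)) p := by
  refine mul_left_cancel₀ hJ ?_
  rw [eval_lowerOp_add_toV hρ d hp hμ, mul_sub, Finset.mul_sum]
  congr 1
  refine Finset.sum_congr rfl fun η _ => ?_
  rw [← mul_assoc, mul_div_cancel₀ _ hJ]

/-- The polynomials obtained from `p`, of degree at most `d`, by lowering the degree step by step
down to `p_{d+1} = 0`. -/
def lowerIter (D : Data ι) (ρ : ι → ℂ) (d : ℕ) (p : MvPolynomial ι ℂ) : ℕ → MvPolynomial ι ℂ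
  | 0 => p
  | i + 1 => D.lowerOp ρ (d - i) (D.lowerIter ρ d p i)

theorem lowerIter_mem_degLT [D.IsInterpolable] (hρ : ρ ∈ D.V0) (hp : p ∈ D.invariantsLE d)
    (hi : i ≤ d + 1) :
    D.lowerIter ρ d p i ∈ D.invariants ∧ D.lowerIter ρ d p i ∈ degLT ι ℂ (d + 1 - i) := by
  induction i with
  | zero => exact hp
  | succ i ih =>
    obtain ⟨hinv, hdeg⟩ := ih (by omega)
    rw [Nat.succ_sub (by omega : i ≤ d)] at hdeg
    rw [Nat.add_sub_add_right]
    exact ⟨lowerOp_mem_invariants hρ _ hinv, lowerOp_mem_degLT_self hρ ⟨hinv, hdeg⟩⟩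

theorem lowerIter_last [D.IsInterpolable] (hρ : ρ ∈ D.V0) (hp : p ∈ D.invariantsLE d) :
    D.lowerIter ρ d p (d + 1) = 0 := by
  have hdeg := (lowerIter_mem_degLT hρ hp le_rfl).2
  rwa [Nat.sub_self, mem_degLT_zero] at hdeg

/-- The values at `ρ + t + ν`, as functions of `t`, of the iterates attached to `ρ + t`. -/
def iterValue (D : Data ι) (ρ : ι → ℂ) (d : ℕ) (p : MvPolynomial ι ℂ) (ν : ι → ℤ) (i : ℕ) (t : ℂ) :
    ℂ :=
  eval (ρ + t • (1 : ι → ℂ) + toV ν) (D.lowerIter (ρ + t • (1 : ι → ℂ)) d p i)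

/-- The contribution of the points `ν - η` to `iterValue` at `ν`. -/
def iterRemainder (D : Data ι) (ρ : ι → ℂ) (d : ℕ) (p : MvPolynomial ι ℂ) (ν : ι → ℤ) (i : ℕ)
    (t : ℂ) : ℂ :=
  ∑ η ∈ D.Λ₁ with ν - η ∈ LamPlus,
    eval (ρ + t • (1 : ι → ℂ) + toV ν) (D.numer (ρ + t • (1 : ι → ℂ)) η) /
      eval (ρ + t • (1 : ι → ℂ) + toV ν) D.weylDenom * D.iterValue ρ d p (ν - η) i t

theorem eventually_iterValue_succ [D.IsInterpolable] (hρ : ρ ∈ D.V0) (hp : p ∈ D.invariantsLE d)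
    (hν : ν ∈ LamPlus) (hi : i < d + 1) :
    ∀ᶠ t in 𝓝[≠] 0, D.iterValue ρ d p ν (i + 1) t =
      ((pairZ D.ell ν : ℂ) - (d - i : ℕ)) * D.iterValue ρ d p ν i t -
        D.iterRemainder ρ d p ν i t := by
  filter_upwards [(eventually_eval_weylDenom_ne_zero (D := D) (ρ + toV ν)).filter_mono
    (nhdsNE_le_cofinite 0)] with t hJ
  rw [add_right_comm] at hJ
  have hρt := add_smul_one_mem_V0 hρ t
  exact eval_lowerOp_add_toV_of_ne_zero hρt (lowerIter_mem_degLT hρt hp hi.le).1 hν hJ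

theorem Dominant.tendsto_iterRemainder [D.IsInterpolable] (hdom : D.Dominant ρ) (hρ : ρ ∈ D.V0)
    (hν : ν ∈ LamPlus) (h : ∀ η ∈ D.Λ₁, ν - η ∈ LamPlus →
      Tendsto (D.iterValue ρ d p (ν - η) i) (𝓝[≠] 0) (𝓝 0)) :
    Tendsto (D.iterRemainder ρ d p ν i) (𝓝[≠] 0) (𝓝 0) := by
  have hsum : Tendsto (D.iterRemainder ρ d p ν i) (𝓝[≠] 0)
      (𝓝 (∑ η ∈ D.Λ₁ with ν - η ∈ LamPlus, 0)) := tendsto_finsetSum _ fun η hη => by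
    obtain ⟨hη, hνη⟩ := Finset.mem_filter.1 hη
    obtain ⟨q, hq⟩ := hdom.exists_tendsto_numer_div_weylDenom hρ hν hη hνη
    simpa only [mul_zero] using hq.mul (h η hη hνη)
  rwa [Finset.sum_const_zero] at hsum

theorem Dominant.tendsto_iterValue [D.IsInterpolable] (hdom : D.Dominant ρ) (hρ : ρ ∈ D.V0)
    (hp : p ∈ D.invariantsLE d) (hv : ∀ μ ∈ D.latticePoints d, eval (ρ + toV μ) p = 0)
    (hν : ν ∈ LamPlus) (hi : i ≤ d + 1) :
    Tendsto (D.iterValue ρ d p ν i) (𝓝[≠] 0) (𝓝 0) := by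
  obtain ⟨m, hm⟩ := Int.eq_ofNat_of_zero_le (pairZ_ell_nonneg (D := D) hν)
  induction m using Nat.strong_induction_on generalizing ν i with
  | _ m ih =>
  have hrem : ∀ j < d + 1, Tendsto (D.iterRemainder ρ d p ν j) (𝓝[≠] 0) (𝓝 0) := fun j hj =>
    hdom.tendsto_iterRemainder hρ hν fun η hη hνη => by
      have hdrop : pairZ D.ell (ν - η) = m - 1 := by
        rw [pairZ_sub_right, hm, pairZ_ell_of_mem_Λ₁ hη]
      have hnonneg := pairZ_ell_nonneg (D := D) hνη
      exact ih (m - 1) (by omega) hνη hj.le (by omega)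
  have hrec : ∀ j < d + 1, _ := fun j hj => eventually_iterValue_succ hρ hp hν hj
  rcases le_or_gt m d with hmd | hmd
  · refine tendsto_zero_of_recurrence hrem hrec ?_ hi
    have hlim := tendsto_eval_add_smul_one ρ p ν
    rwa [hv ν (mem_latticePoints.2 ⟨hν, by omega⟩)] at hlim
  · refine tendsto_zero_of_recurrence_of_ne_zero hrem hrec (fun j _ => ?_) ?_ hi
    · rw [hm, sub_ne_zero]
      exact_mod_cast (show m ≠ d - j by omega)
    · refine tendsto_const_nhds.congr fun t => ?_
      rw [iterValue, lowerIter_last (add_smul_one_mem_V0 hρ t) hp, map_zero]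

theorem Dominant.latticeEval_injective [D.IsInterpolable] (hdom : D.Dominant ρ) (hρ : ρ ∈ D.V0)
    (d : ℕ) : Function.Injective (D.latticeEval ρ d) := by
  refine latticeEval_injective_iff.2 fun p hp hv => eq_zero_of_eval_add_toV_eq_zero ρ fun ν hν => ?_
  have hlim : Tendsto (D.iterValue ρ d p ν 0) (𝓝[≠] 0) (𝓝 0) :=
    hdom.tendsto_iterValue hρ hp hv hν (Nat.zero_le _)
  exact tendsto_nhds_unique (tendsto_eval_add_smul_one ρ p ν) hlim

theorem existsUnique_capelliAt_of_latticeEval_bijective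
    (h : ∀ d, Function.Bijective (D.latticeEval ρ d)) (hμ : μ ∈ LamPlus) :
    ∃! p, D.CapelliAt ρ μ p := by
  obtain ⟨d, hd⟩ := Int.eq_ofNat_of_zero_le (pairZ_ell_nonneg (D := D) hμ)
  have hspace (p : MvPolynomial ι ℂ) :
      p ∈ D.invariantsLE d ↔ D.WInv p ∧ (p.totalDegree : ℤ) ≤ pairZ D.ell μ := by
    rw [hd, Int.ofNat_le, ← mem_degLT_succ]
    rfl
  obtain ⟨p, hp, hval⟩ := latticeEval_surjective_iff.1 (h d).2 fun ν => if ν = μ then 1 else 0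
  refine ⟨p, ⟨((hspace p).1 hp).1, ((hspace p).1 hp).2, fun ν hν hle =>
    hval ν (mem_latticePoints.2 ⟨hν, hd ▸ hle⟩)⟩, fun q ⟨hqinv, hqdeg, hqval⟩ => ?_⟩
  refine sub_eq_zero.1 (latticeEval_injective_iff.1 (h d).1 _
    (sub_mem ((hspace q).2 ⟨hqinv, hqdeg⟩) hp) fun ν hν => ?_)
  obtain ⟨hν', hle⟩ := mem_latticePoints.1 hν
  rw [map_sub, hval ν hν, hqval ν hν' (hd ▸ hle), sub_self]

end Data

end

theorem statement4_general (D : Data ι) {ρ' : ι → ℂ} (hρ' : D.InV0 ρ') (h : D.HasCapelliBasis ρ')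
    {ρ : ι → ℂ} (hρ : D.InV0 ρ) (hdom : D.Dominant ρ) {lam : ι → ℤ} (hlam : lam ∈ LamPlus) :
    ∃! p : MvPolynomial ι ℂ, D.CapelliAt ρ lam p := by
  have : D.IsInterpolable := ⟨ρ', hρ', h.latticeEval_bijective⟩
  have hinj := hdom.latticeEval_injective hρ
  exact Data.existsUnique_capelliAt_of_latticeEval_bijective
    (fun d => ⟨hinj d, Data.latticeEval_surjective_of_injective (hinj d)⟩) hlam

/-- Theorem 2.6 a: assuming axiom C0, for every dominant
`ρ ∈ V₀` and every `λ ∈ Λ₊` there is a unique `W`-invariant polynomial `p_λ`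
with `deg p_λ ≤ ℓ(λ)` and `p_λ(ρ+μ) = δ_{λμ}` for all `μ ∈ Λ₊` with
`ℓ(μ) ≤ ℓ(λ)`. -/
theorem statement4 (D : Data ι) (hC0 : D.C0)
    (ρ : ι → ℂ) (hρ : D.InV0 ρ) (hdom : D.Dominant ρ)
    (lam : ι → ℤ) (hlam : lam ∈ LamPlus) :
    ∃! p : MvPolynomial ι ℂ, D.CapelliAt ρ lam p := by
  obtain ⟨ρ', hρ', -, -, h⟩ := hC0
  exact statement4_general D hρ' h hρ hdom hlam

end Knop

end
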